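/- arXiv:2401.06784 — 7 statements merged into one kernel-verified Lean document; each statement's English description precedes it below -/
import Mathlib

section
/- Let (p,q) be admissible. Suppose that either (i) both the curve EI1: y² = x(x−(p²−q²)⁴)(x+8p²q²(p⁴+q⁴)) and the curve EI2: y² = x(x−16p⁴q⁴)(x+(p²+q²)⁴−16p⁴q⁴) have only finitely many rational points, or (ii) both the curve EI3: y² = x³ − 2(p⁴+q⁴)x² + (p⁴−q⁴)²x and the curve EI4: y² = x³ − ((p²+q²)²+4p²q²)x² + 4p²q²(p²+q²)²x have only finitely many rational points. Then there is no perfect cuboid (a,b,c) for which there exists an integer f with f² = b²+c² and either a·2pq = f·(p²−q²) or f·2pq = a·(p²−q²); i.e. no perfect cuboid has an internal rectangle with aspect ratio (p²−q²):2pq. -/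
/-!
Let `A, B, C` be the edges of a perfect cuboid, `F² = B² + C²`, and let `G` be the main diagonal.
If the internal rectangle with sides `A` and `F` has aspect ratio `(p² - q²) : 2pq`, then the right
triangle `(A, F, G)` is similar to `(p² - q², 2pq, p² + q²)` or to `(2pq, p² - q², p² + q²)`. Up to
scaling, EI1 and EI4 in the first case, EI2 and EI3 in the second, are then the curves
`y² = x (x - A⁴) (x - A⁴ + G⁴)` and `y² = x (x - F²) (x - G²)`. So it is enough to find points of
infinite order on both.

A point with `x` not `p`-integral lies in the kernel of reduction and has infinite order: in the
coordinates `z = x / y`, `w = 1 / y`, multiplication by `p` raises the `p`-adic valuation of `z` by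
exactly one. Such a point arises from any chord or tangent through `p`-integral points whose slope
is not `p`-integral. On the second curve a tangent works for `p = 2`. On the first curve there is a
chord whose slope has, up to factors prime to `p`, an odd denominator `n` with
`d² n = y² - x²` and `x² + y² = z²` for coprime nonzero `x, y`; that `n` has a prime factor is
Fermat's theorem that the area of a right triangle with integral sides is not a square.
-/

/-- The elliptic curve EI1: `y² = x(x−(p²−q²)⁴)(x+8p²q²(p⁴+q⁴))`, as a set of rational
points. -/
def EI1 (p q : ℤ) : Set (ℚ × ℚ) :=
  {P | P.2 ^ 2 = P.1 * (P.1 - ((p : ℚ) ^ 2 - (q : ℚ) ^ 2) ^ 4) *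
    (P.1 + 8 * (p : ℚ) ^ 2 * (q : ℚ) ^ 2 * ((p : ℚ) ^ 4 + (q : ℚ) ^ 4))}

/-- The elliptic curve EI2: `y² = x(x−16p⁴q⁴)(x+(p²+q²)⁴−16p⁴q⁴)`. -/
def EI2 (p q : ℤ) : Set (ℚ × ℚ) :=
  {P | P.2 ^ 2 = P.1 * (P.1 - 16 * (p : ℚ) ^ 4 * (q : ℚ) ^ 4) *
    (P.1 + ((p : ℚ) ^ 2 + (q : ℚ) ^ 2) ^ 4 - 16 * (p : ℚ) ^ 4 * (q : ℚ) ^ 4)}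

/-- The elliptic curve EI3: `y² = x³ − 2(p⁴+q⁴)x² + (p⁴−q⁴)²x`. -/
def EI3 (p q : ℤ) : Set (ℚ × ℚ) :=
  {P | P.2 ^ 2 = P.1 ^ 3 - 2 * ((p : ℚ) ^ 4 + (q : ℚ) ^ 4) * P.1 ^ 2 +
    ((p : ℚ) ^ 4 - (q : ℚ) ^ 4) ^ 2 * P.1}

/-- The elliptic curve EI4: `y² = x³ − ((p²+q²)²+4p²q²)x² + 4p²q²(p²+q²)²x`. -/
def EI4 (p q : ℤ) : Set (ℚ × ℚ) :=
  {P | P.2 ^ 2 = P.1 ^ 3 - (((p : ℚ) ^ 2 + (q : ℚ) ^ 2) ^ 2 + 4 * (p : ℚ) ^ 2 * (q : ℚ) ^ 2) * P.1 ^ 2 +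
    4 * (p : ℚ) ^ 2 * (q : ℚ) ^ 2 * ((p : ℚ) ^ 2 + (q : ℚ) ^ 2) ^ 2 * P.1}

/-! ### Fermat's right triangle theorem -/

lemma exists_eq_sq_of_isCoprime_of_pos {a b c : ℤ} (h : IsCoprime a b)
    (hab : a * b = c ^ 2) (ha : 0 < a) : ∃ d, a = d ^ 2 := by
  obtain ⟨d, rfl | rfl⟩ := Int.sq_of_isCoprime h hab
  · exact ⟨d, rfl⟩
  · linarith [sq_nonneg d]

/-- The two squares are `m - n` and `m + n` up to a common factor `2`, and in each case they are
the sides of a smaller triangle. -/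
lemma exists_smaller_triangle {X Y V : ℤ} (h : IsCoprime (X ^ 2) (Y ^ 2))
    (hV : (X ^ 2 - Y ^ 2) * (X ^ 2 + Y ^ 2) = V ^ 2) (hY : Y ≠ 0) (hYX : Y ^ 2 < X ^ 2) :
    ∃ x y z l, PythagoreanTriple x y z ∧ x * y = 2 * l ^ 2 ∧ l ≠ 0 ∧ l ^ 2 < X ^ 2 := by
  have hY2 : 0 < Y ^ 2 := by positivity
  rcases Int.even_or_odd (X ^ 2 - Y ^ 2) with ⟨s, hs⟩ | hodd
  · obtain ⟨t, ht⟩ : ∃ t, X ^ 2 + Y ^ 2 = t + t := ⟨Y ^ 2 + s, by linarith⟩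
    obtain ⟨v, rfl⟩ : 2 ∣ V := by
      refine Int.prime_two.dvd_of_dvd_pow (n := 2) ⟨s * (t + t), ?_⟩
      rw [← hV, hs, ht]
      ring
    have hst : IsCoprime s t := by
      rw [show X ^ 2 = s + t by linarith, show Y ^ 2 = t - s by linarith] at h
      obtain ⟨u, v, huv⟩ := h
      exact ⟨u - v, u + v, by linear_combination huv⟩
    have hmul : s * t = v ^ 2 := by
      rw [hs, ht] at hV
      linarith
    obtain ⟨Z, rfl⟩ := exists_eq_sq_of_isCoprime_of_pos hst hmul (by linarith)
    obtain ⟨W, rfl⟩ :=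
      exists_eq_sq_of_isCoprime_of_pos hst.symm ((mul_comm _ _).trans hmul) (by linarith)
    refine ⟨X + Y, X - Y, 2 * W, Z, ?_, by linarith, ?_, by linarith⟩
    · unfold PythagoreanTriple
      linarith
    · rintro rfl
      linarith
  · have hcop : IsCoprime (X ^ 2 - Y ^ 2) (X ^ 2 + Y ^ 2) := by
      obtain ⟨r, hr⟩ := hodd
      obtain ⟨u, v, huv⟩ := h
      exact ⟨1 - r * (u - v), -r * (u + v), by linear_combination hr - 2 * r * huv⟩
    obtain ⟨Z, hZ⟩ := exists_eq_sq_of_isCoprime_of_pos hcop hV (by linarith)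
    obtain ⟨W, hW⟩ :=
      exists_eq_sq_of_isCoprime_of_pos hcop.symm ((mul_comm _ _).trans hV) (by linarith)
    refine ⟨W + Z, W - Z, 2 * X, Y, ?_, by linarith, hY, hYX⟩
    unfold PythagoreanTriple
    linarith

lemma exists_smaller_triangle_of_params {m n j : ℤ} (h : IsCoprime m n)
    (hj : m * n * (m ^ 2 - n ^ 2) = j ^ 2) (hj0 : j ≠ 0) :
    ∃ x y z l, PythagoreanTriple x y z ∧ x * y = 2 * l ^ 2 ∧ l ≠ 0 ∧ l ^ 2 < j ^ 2 := by
  have hj2 : 0 < j ^ 2 := by positivity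
  wlog hmn : 0 < m * n generalizing m n
  · refine this (m := n) (n := -m) h.symm.neg_right (by linear_combination hj) ?_
    have hmn0 : m * n ≠ 0 := by
      intro h0
      rw [h0, zero_mul] at hj
      exact hj2.ne hj
    linarith [lt_of_le_of_ne (not_lt.mp hmn) hmn0]
  wlog hm : 0 < m generalizing m n
  · have hm0 : m ≠ 0 := left_ne_zero_of_mul hmn.ne'
    exact this h.neg_neg (by linear_combination hj) (by linarith) (by lia)
  have hn : 0 < n := pos_of_mul_pos_right hmn hm.le
  have hd : 0 < m ^ 2 - n ^ 2 := pos_of_mul_pos_right (hj ▸ hj2) hmn.le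
  have hmd : IsCoprime m (m ^ 2 - n ^ 2) := by
    simpa [sq, sub_eq_neg_add] using (h.pow_right (n := 2)).neg_right.add_mul_left_right m
  have hnd : IsCoprime n (m ^ 2 - n ^ 2) := by
    simpa [sq, sub_eq_add_neg] using (h.symm.pow_right (n := 2)).add_mul_left_right (-n)
  obtain ⟨X, rfl⟩ := exists_eq_sq_of_isCoprime_of_pos (c := j) (h.mul_right hmd) (by linarith) hm
  obtain ⟨Y, rfl⟩ :=
    exists_eq_sq_of_isCoprime_of_pos (c := j) (h.symm.mul_right hnd) (by linarith) hn
  obtain ⟨V, hV⟩ :=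
    exists_eq_sq_of_isCoprime_of_pos (c := j) (hmd.symm.mul_right hnd.symm) (by linarith) hd
  have hYX : Y ^ 2 < X ^ 2 := lt_of_pow_lt_pow_left₀ 2 hm.le (sub_pos.mp hd)
  obtain ⟨x, y, z, l, ht, hxy, hl, hlt⟩ := exists_smaller_triangle (V := V) h
    (by linear_combination hV) (ne_zero_pow two_ne_zero hn.ne') hYX
  refine ⟨x, y, z, l, ht, hxy, hl, hlt.trans_le ?_⟩
  calc X ^ 2 ≤ X ^ 2 * (Y ^ 2 * ((X ^ 2) ^ 2 - (Y ^ 2) ^ 2)) :=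
        le_mul_of_one_le_right hm.le (mul_pos hn hd)
    _ = j ^ 2 := by rw [← hj, mul_assoc]

theorem eq_zero_of_pythagoreanTriple_of_mul_eq_two_mul_sq {x y z k : ℤ}
    (h : PythagoreanTriple x y z) (hxy : x * y = 2 * k ^ 2) : k = 0 := by
  induction hN : k.natAbs using Nat.strong_induction_on generalizing x y z k with
  | _ N ih =>
  subst hN
  by_contra hk
  obtain ⟨c, m, n, hcls, hgcd⟩ := h.classified
  have hsq : c ^ 2 * (m * n * (m ^ 2 - n ^ 2)) = k ^ 2 := by
    rcases hcls with ⟨rfl, rfl⟩ | ⟨rfl, rfl⟩ <;> linarith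
  obtain ⟨j, rfl⟩ : c ∣ k := (Int.pow_dvd_pow_iff two_ne_zero).mp ⟨_, hsq.symm⟩
  obtain ⟨hc, hj⟩ := mul_ne_zero_iff.mp hk
  obtain ⟨x', y', z', l, h', hl, hl0, hlt⟩ := exists_smaller_triangle_of_params (j := j)
    (Int.isCoprime_iff_gcd_eq_one.mpr hgcd)
    (mul_left_cancel₀ (pow_ne_zero 2 hc) (by linear_combination hsq)) hj
  refine hl0 (ih _ ?_ h' hl rfl)
  rw [Int.natAbs_lt_iff_sq_lt, mul_pow]
  exact hlt.trans_le (le_mul_of_one_le_left (sq_nonneg j) (by positivity : 0 < c ^ 2))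

/-! ### Arithmetic of Pythagorean triples -/

lemma not_dvd_of_dvd_sq_sub_sq {R : Type*} [CommRing R] {p x y : R} (hp : Prime p)
    (hxy : IsCoprime x y) (h : p ∣ x ^ 2 - y ^ 2) : ¬ p ∣ x := fun hx ↦
  hp.not_isUnit <| hxy.isUnit_of_dvd' hx <| hp.dvd_of_dvd_pow <|
    (dvd_sub_right (hx.pow two_ne_zero)).mp h

lemma exists_sq_eq_one_not_dvd_sub_mul {R : Type*} [CommRing R] {p u : R} (hu : ¬ p ∣ 2 * u)
    (v : R) : ∃ σ : R, σ ^ 2 = 1 ∧ ¬ p ∣ u - σ * v := by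
  by_contra! h
  refine hu ?_
  convert dvd_add (h 1 (one_pow 2)) (h (-1) neg_one_sq) using 1
  ring

section Triples

variable {x y z : ℤ}

lemma hypotenuse_ne_zero (h : PythagoreanTriple x y z) (hx : x ≠ 0) : z ≠ 0 := by
  rintro rfl
  exact hx (mul_self_add_mul_self_eq_zero.mp (h.trans (zero_mul 0))).1

lemma even_and_even_of_even_hypotenuse (h : PythagoreanTriple x y z) (hz : Even z) :
    Even x ∧ Even y := by
  have hsq : x ^ 2 + y ^ 2 = z ^ 2 := by
    unfold PythagoreanTriple at h
    linarith
  have hxy : Even x ↔ Even y := by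
    have : Even (x ^ 2 + y ^ 2) := hsq ▸ hz.pow_of_ne_zero two_ne_zero
    rwa [Int.even_add, Int.even_pow' two_ne_zero, Int.even_pow' two_ne_zero] at this
  rcases Int.even_or_odd x with hx | hx
  · exact ⟨hx, hxy.mp hx⟩
  · have hy : Odd y := Int.not_even_iff_odd.mp (mt hxy.mpr (Int.not_even_iff_odd.mpr hx))
    obtain ⟨r, rfl⟩ := hz
    have := Int.sq_mod_four_eq_one_of_odd hx
    have := Int.sq_mod_four_eq_one_of_odd hy
    have : (r + r) ^ 2 = 4 * r ^ 2 := by ring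
    lia

lemma odd_hypotenuse_of_isCoprime (h : PythagoreanTriple x y z) (hxy : IsCoprime x y) : Odd z := by
  rw [← Int.not_even_iff_odd]
  intro hz
  obtain ⟨hx, hy⟩ := even_and_even_of_even_hypotenuse h hz
  exact Int.prime_two.not_isUnit (hxy.isUnit_of_dvd' hx.two_dvd hy.two_dvd)

lemma exists_eq_mul_hypotenuse {k : ℤ} (h : PythagoreanTriple (k * x) (k * y) z) (hk : k ≠ 0) :
    ∃ z', z = k * z' ∧ PythagoreanTriple x y z' := by
  obtain ⟨z', rfl⟩ : k ∣ z := by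
    refine (Int.pow_dvd_pow_iff two_ne_zero).mp ⟨x ^ 2 + y ^ 2, ?_⟩
    unfold PythagoreanTriple at h
    linear_combination -h
  exact ⟨z', rfl, (PythagoreanTriple.mul_iff k hk).mp h⟩

lemma exists_isCoprime_eq_mul (hx : x ≠ 0) (y : ℤ) :
    ∃ k x' y', k ≠ 0 ∧ IsCoprime x' y' ∧ x = k * x' ∧ y = k * y' := by
  have hpos : 0 < Int.gcd x y := Int.gcd_pos_of_ne_zero_left y hx
  obtain ⟨x', y', hcop, hx', hy'⟩ := Int.exists_gcd_one hpos
  exact ⟨Int.gcd x y, x', y', by exact_mod_cast hpos.ne', Int.isCoprime_iff_gcd_eq_one.mpr hcop,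
    by rwa [mul_comm], by rwa [mul_comm]⟩

lemma ratCast_sq_add_sq (h : PythagoreanTriple x y z) :
    (x : ℚ) ^ 2 + (y : ℚ) ^ 2 = (z : ℚ) ^ 2 := by
  rw [sq, sq, sq]
  exact_mod_cast h

lemma odd_sq_sub_sq (h : PythagoreanTriple x y z) (hxy : IsCoprime x y) : Odd (y ^ 2 - x ^ 2) := by
  rw [Int.odd_sub, Int.odd_pow' two_ne_zero, Int.even_pow' two_ne_zero, Int.odd_iff, Int.even_iff]
  have := h.even_odd_of_coprime (Int.isCoprime_iff_gcd_eq_one.mp hxy)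
  lia

/-- If `y² - x²` were `d²` or `-d²`, then `z ± d` would be the legs of a triangle contradicting
Fermat's theorem. -/
lemma not_isUnit_of_sq_sub_sq_eq {d n : ℤ} (h : PythagoreanTriple x y z) (hx : x ≠ 0)
    (hy : y ≠ 0) (hn : y ^ 2 - x ^ 2 = d ^ 2 * n) : ¬ IsUnit n := by
  unfold PythagoreanTriple at h
  rw [Int.isUnit_iff]
  rintro (rfl | rfl)
  · have ht : PythagoreanTriple (z + d) (z - d) (2 * y) := by
      unfold PythagoreanTriple
      linear_combination -2 * h - 2 * hn
    exact hx (eq_zero_of_pythagoreanTriple_of_mul_eq_two_mul_sq ht (by linear_combination -h + hn))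
  · have ht : PythagoreanTriple (z + d) (z - d) (2 * x) := by
      unfold PythagoreanTriple
      linear_combination -2 * h + 2 * hn
    exact hy (eq_zero_of_pythagoreanTriple_of_mul_eq_two_mul_sq ht (by linear_combination -h - hn))

lemma not_dvd_hypotenuse {p : ℤ} (hp : Prime p) (hp2 : ¬ p ∣ 2) (h : PythagoreanTriple x y z)
    (hxy : IsCoprime x y) (hdvd : p ∣ y ^ 2 - x ^ 2) : ¬ p ∣ z := by
  intro hz
  have hx : p ∣ 2 * x ^ 2 := by
    have hsq : 2 * x ^ 2 = z ^ 2 - (y ^ 2 - x ^ 2) := by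
      unfold PythagoreanTriple at h
      linear_combination h
    exact hsq ▸ dvd_sub (hz.pow two_ne_zero) hdvd
  have hpx : ¬ p ∣ x := not_dvd_of_dvd_sq_sub_sq hp hxy (dvd_sub_comm.mp hdvd)
  exact hp.not_dvd_mul hp2 (mt hp.dvd_of_dvd_pow hpx) hx

end Triples

/-! ### The kernel of reduction -/

lemma exists_mem_mul_eq_of_isUnit {R : Type*} [CommRing R] {J : Ideal R} {u x : R} (hu : IsUnit u)
    (hx : x ∈ J) : ∃ r ∈ J, u * r = x := by
  obtain ⟨r, rfl⟩ : u ∣ x := hu.dvd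
  exact ⟨r, (J.unit_mul_mem_iff_mem hu).mp hx, rfl⟩

section EquationAtInfinity

variable {R : Type*} [CommRing R] {a b c z w z₁ w₁ z₂ w₂ : R} {I : Ideal R}

/-- The curve `y² = x³ + a x² + b x + c` in the coordinates `z = x / y` and `w = 1 / y`, in which
its point at infinity is the origin. -/
def EquationAtInfinity (a b c z w : R) : Prop :=
  w = z ^ 3 + a * z ^ 2 * w + b * z * w ^ 2 + c * w ^ 3

namespace EquationAtInfinity

lemma associated_cube (h : EquationAtInfinity a b c z w) (hz : z ∈ Ideal.jacobson (⊥ : Ideal R))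
    (hw : w ∈ Ideal.jacobson (⊥ : Ideal R)) : Associated w (z ^ 3) := by
  have hu : IsUnit (1 - (a * z * z + (b * z + c * w) * w)) :=
    Ideal.isUnit_of_sub_one_mem_jacobson_bot _ <| by
      rw [sub_sub_cancel_left]
      exact neg_mem (add_mem (Ideal.mul_mem_left _ _ hz) (Ideal.mul_mem_left _ _ hw))
  refine ⟨hu.unit, ?_⟩
  rw [IsUnit.unit_spec]
  unfold EquationAtInfinity at h
  linear_combination h

lemma exists_chord (hI : I ≤ Ideal.jacobson ⊥) (h₁ : EquationAtInfinity a b c z₁ w₁)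
    (h₂ : EquationAtInfinity a b c z₂ w₂) (hz₁ : z₁ ∈ I) (hw₁ : w₁ ∈ I ^ 3) (hz₂ : z₂ ∈ I)
    (hw₂ : w₂ ∈ I ^ 3) :
    ∃ α ∈ I ^ 2, ∃ β ∈ I ^ 3, w₁ = α * z₁ + β ∧ w₂ = α * z₂ + β ∧
      (1 + a * α + b * α ^ 2 + c * α ^ 3) * (z₁ ^ 2 + z₁ * z₂ + z₂ ^ 2) +
        β * (a + 2 * b * α + 3 * c * α ^ 2) * (z₁ + z₂) + b * β ^ 2 + 3 * c * α * β ^ 2 = α := by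
  have hwI₁ : w₁ ∈ I := Ideal.pow_le_self three_ne_zero hw₁
  have hwI₂ : w₂ ∈ I := Ideal.pow_le_self three_ne_zero hw₂
  have hu : IsUnit (1 - (a * z₂ ^ 2 + b * z₂ * (w₁ + w₂) + c * (w₁ ^ 2 + w₁ * w₂ + w₂ ^ 2))) :=
    Ideal.isUnit_of_sub_one_mem_jacobson_bot _ <| hI <| by
      have : a * z₂ * z₂ + (b * z₂ + c * (w₁ + w₂)) * w₁ + (b * z₂ + c * w₂) * w₂ ∈ I :=
        add_mem (add_mem (I.mul_mem_left _ hz₂) (I.mul_mem_left _ hwI₁)) (I.mul_mem_left _ hwI₂)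
      convert neg_mem this using 1
      ring
  have hM : z₁ ^ 2 + z₁ * z₂ + z₂ ^ 2 + a * (z₁ + z₂) * w₁ + b * w₁ ^ 2 ∈ I ^ 2 := by
    have : z₁ * z₁ + z₁ * z₂ + z₂ * z₂ + a * ((z₁ + z₂) * w₁) + b * (w₁ * w₁) ∈ I * I :=
      add_mem (add_mem (add_mem (add_mem (Ideal.mul_mem_mul hz₁ hz₁) (Ideal.mul_mem_mul hz₁ hz₂))
        (Ideal.mul_mem_mul hz₂ hz₂))
        (Ideal.mul_mem_left _ _ (Ideal.mul_mem_mul (add_mem hz₁ hz₂) hwI₁)))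
        (Ideal.mul_mem_left _ _ (Ideal.mul_mem_mul hwI₁ hwI₁))
    rw [pow_two I]
    convert this using 1
    ring
  obtain ⟨α, hα, hslope⟩ := exists_mem_mul_eq_of_isUnit hu hM
  unfold EquationAtInfinity at h₁ h₂
  have hline : w₂ - w₁ = α * (z₂ - z₁) :=
    hu.mul_left_cancel (by linear_combination h₂ - h₁ - (z₂ - z₁) * hslope)
  refine ⟨α, hα, w₁ - α * z₁, sub_mem hw₁ ?_, by ring, by linear_combination hline, ?_⟩
  · rw [pow_succ]
    exact Ideal.mul_mem_mul hα hz₁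
  · rw [eq_add_of_sub_eq' hline] at hslope
    linear_combination -hslope

/-- The sum is minus the third point of intersection with the line `w = α z + β` through the two
points, or with the tangent if they coincide. -/
lemma exists_add (hI : I ≤ Ideal.jacobson ⊥) (h₁ : EquationAtInfinity a b c z₁ w₁)
    (h₂ : EquationAtInfinity a b c z₂ w₂) (hz₁ : z₁ ∈ I) (hw₁ : w₁ ∈ I ^ 3) (hz₂ : z₂ ∈ I)
    (hw₂ : w₂ ∈ I ^ 3) :
    ∃ z w, EquationAtInfinity a b c z w ∧ w ∈ I ^ 3 ∧ z - (z₁ + z₂) ∈ I ^ 3 := by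
  obtain ⟨α, hα, β, hβ, hline, -, hchord⟩ := exists_chord hI h₁ h₂ hz₁ hw₁ hz₂ hw₂
  have hu : IsUnit (1 + a * α + b * α ^ 2 + c * α ^ 3) :=
    Ideal.isUnit_of_sub_one_mem_jacobson_bot _ <| hI <| Ideal.pow_le_self two_ne_zero <| by
      convert (I ^ 2).mul_mem_left (a + b * α + c * α ^ 2) hα using 1
      ring
  obtain ⟨r, hr, hru⟩ := exists_mem_mul_eq_of_isUnit hu
    ((I ^ 3).mul_mem_right (a + 2 * b * α + 3 * c * α ^ 2) hβ)
  have hrI : r ∈ I := Ideal.pow_le_self three_ne_zero hr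
  refine ⟨z₁ + z₂ + r, α * (z₁ + z₂ + r) - β, ?_, sub_mem ?_ hβ, by rwa [add_sub_cancel_left]⟩
  · unfold EquationAtInfinity at *
    rw [hline] at h₁
    linear_combination
      -h₁ - (2 * z₁ + z₂ + r) * hchord - (2 * z₁ + z₂ + r) * (z₁ + 2 * z₂ + r) * hru
  · rw [pow_succ]
    exact Ideal.mul_mem_mul hα (add_mem (add_mem hz₁ hz₂) hrI)

lemma exists_nsmul (hI : I ≤ Ideal.jacobson ⊥) (h : EquationAtInfinity a b c z w) (hz : z ∈ I)
    (hw : w ∈ I ^ 3) (n : ℕ) :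
    ∃ z' w', EquationAtInfinity a b c z' w' ∧ w' ∈ I ^ 3 ∧ z' - n * z ∈ I ^ 3 := by
  induction n with
  | zero => exact ⟨0, 0, by simp [EquationAtInfinity], zero_mem _, by simp⟩
  | succ n ih =>
    obtain ⟨z₁, w₁, h₁, hw₁, hn₁⟩ := ih
    have hz₁ : z₁ ∈ I := by
      simpa using add_mem (Ideal.pow_le_self three_ne_zero hn₁) (I.mul_mem_left (n : R) hz)
    obtain ⟨z₂, w₂, h₂, hw₂, hn₂⟩ := exists_add hI h₁ h hz₁ hw₁ hz hw
    refine ⟨z₂, w₂, h₂, hw₂, ?_⟩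
    convert add_mem hn₂ hn₁ using 1
    push_cast
    ring

/-- Modulo `z ^ 3` multiplication by `p` is multiplication of the parameter `z` by `p`, and `p`
divides `z`. -/
lemma exists_associated_natCast_mul {p : ℕ} (hp : (p : R) ∈ Ideal.jacobson (⊥ : Ideal R))
    (h : EquationAtInfinity a b c z w) (hz : (p : R) ∣ z) (hw : w ∈ Ideal.jacobson (⊥ : Ideal R)) :
    ∃ z' w', EquationAtInfinity a b c z' w' ∧ w' ∈ Ideal.jacobson (⊥ : Ideal R) ∧
      Associated z' (p * z) := by
  have hzJ : z ∈ Ideal.jacobson (⊥ : Ideal R) := Ideal.mem_of_dvd _ hz hp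
  have hI : Ideal.span {z} ≤ Ideal.jacobson ⊥ := (Ideal.span_singleton_le_iff_mem _).mpr hzJ
  have hwI : w ∈ Ideal.span {z} ^ 3 := by
    rw [Ideal.span_singleton_pow, Ideal.mem_span_singleton]
    exact (h.associated_cube hzJ hw).symm.dvd
  obtain ⟨z', w', h', hw', hz'⟩ := exists_nsmul hI h (Ideal.mem_span_singleton_self z) hwI p
  refine ⟨z', w', h', hI (Ideal.pow_le_self three_ne_zero hw'), ?_⟩
  rw [Ideal.span_singleton_pow, Ideal.mem_span_singleton] at hz'
  obtain ⟨r, hr⟩ := hz'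
  obtain ⟨s, hs⟩ := hz
  have hu : IsUnit (1 + z * s * r) := Ideal.isUnit_of_sub_one_mem_jacobson_bot _ <| by
    rw [add_sub_cancel_left, mul_assoc]
    exact Ideal.mul_mem_right _ _ hzJ
  refine Associated.symm ⟨hu.unit, ?_⟩
  rw [IsUnit.unit_spec]
  linear_combination -hr - z ^ 2 * r * hs

lemma infinite_setOf [IsDomain R] {p : ℕ} (hp : (p : R) ∈ Ideal.jacobson (⊥ : Ideal R))
    (hp0 : (p : R) ≠ 0) (h : EquationAtInfinity a b c z w) (hz : (p : R) ∣ z) (hz0 : z ≠ 0)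
    (hw : w ∈ Ideal.jacobson (⊥ : Ideal R)) :
    {P : R × R | EquationAtInfinity a b c P.1 P.2 ∧ P.2 ≠ 0}.Infinite := by
  have multiples (n : ℕ) : ∃ z' w', EquationAtInfinity a b c z' w' ∧
      w' ∈ Ideal.jacobson (⊥ : Ideal R) ∧ Associated z' (p ^ n * z) := by
    induction n with
    | zero => exact ⟨z, w, h, hw, by rw [pow_zero, one_mul]⟩
    | succ n ih =>
      obtain ⟨z₁, w₁, h₁, hw₁, hn₁⟩ := ih
      obtain ⟨z₂, w₂, h₂, hw₂, hn₂⟩ := h₁.exists_associated_natCast_mul hp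
        ((hz.mul_left _).trans hn₁.symm.dvd) hw₁
      refine ⟨z₂, w₂, h₂, hw₂, hn₂.trans ?_⟩
      rw [pow_succ', mul_assoc]
      exact hn₁.mul_left _
  choose zs ws hs hws hassoc using multiples
  refine Set.infinite_of_injective_forall_mem (f := fun n ↦ (zs n, ws n)) ?_ fun n ↦ ⟨hs n, ?_⟩
  · intro i j hij
    have hpow : Associated ((p : R) ^ i) (p ^ j) := by
      refine Associated.of_mul_right ?_ (Associated.refl z) hz0
      have hzs : zs i = zs j := congrArg Prod.fst hij
      exact (hassoc i).symm.trans (hzs ▸ hassoc j)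
    have hpu : ¬ IsUnit (p : R) := fun hu ↦
      bot_ne_top (Ideal.jacobson_eq_top_iff.mp (Ideal.eq_top_of_isUnit_mem _ hp hu))
    exact le_antisymm ((pow_dvd_pow_iff hp0 hpu).mp hpow.dvd)
      ((pow_dvd_pow_iff hp0 hpu).mp hpow.symm.dvd)
  · have hzJ : zs n ∈ Ideal.jacobson (⊥ : Ideal R) :=
      Ideal.mem_of_dvd _ ((hz.mul_left _).trans (hassoc n).symm.dvd) hp
    rw [((hs n).associated_cube hzJ (hws n)).ne_zero_iff]
    exact pow_ne_zero 3 ((hassoc n).ne_zero_iff.mpr (mul_ne_zero (pow_ne_zero n hp0) hz0))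

end EquationAtInfinity

end EquationAtInfinity

/-- The rational points at finite distance of a Weierstrass curve, as pairs of coordinates; the
curve is not required to be nonsingular. -/
def affinePoints {K : Type*} [Field K] (W : WeierstrassCurve K) : Set (K × K) :=
  {P | W.toAffine.Equation P.1 P.2}

section Reduction

variable {K : Type*} [Field K] {W : WeierstrassCurve K} [W.IsCharNeTwoNF] {V : ValuationSubring K}
  {p : ℕ}

lemma mem_affinePoints_iff {P : K × K} : P ∈ affinePoints W ↔
    P.2 ^ 2 = P.1 ^ 3 + W.a₂ * P.1 ^ 2 + W.a₄ * P.1 + W.a₆ := by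
  simp [affinePoints, WeierstrassCurve.Affine.equation_iff]

lemma EquationAtInfinity.mem_affinePoints {z w : K}
    (h : EquationAtInfinity W.a₂ W.a₄ W.a₆ z w) (hw : w ≠ 0) : (z / w, 1 / w) ∈ affinePoints W := by
  rw [mem_affinePoints_iff]
  unfold EquationAtInfinity at h
  field_simp
  linear_combination h

lemma exists_equationAtInfinity {a b c : V} {x y : K}
    (h : y ^ 2 = x ^ 3 + a * x ^ 2 + b * x + c) (hx : x ∉ V) :
    ∃ z ∈ IsLocalRing.maximalIdeal V, ∃ w ∈ IsLocalRing.maximalIdeal V,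
      EquationAtInfinity a b c z w ∧ z ≠ 0 := by
  have hx0 : x ≠ 0 := fun h0 ↦ hx (h0 ▸ zero_mem V)
  have htV : x⁻¹ ∈ V := (V.mem_or_inv_mem x).resolve_left hx
  have hvt : V.valuation x⁻¹ < 1 :=
    V.mem_nonunits_iff.mp (V.inv_mem_nonunits_iff.mpr (.inr hx))
  have hu : V.valuation (1 + x⁻¹ * (a + b * x⁻¹ + c * x⁻¹ ^ 2)) = 1 := by
    refine Valuation.map_one_add_of_lt _ ?_
    rw [map_mul]
    refine mul_lt_one_of_lt_of_le hvt ((V.valuation_le_one_iff _).mpr ?_)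
    exact add_mem (add_mem a.2 (mul_mem b.2 htV)) (mul_mem c.2 (pow_mem htV 2))
  have hy0 : y ≠ 0 := by
    rintro rfl
    have : 1 + x⁻¹ * (a + b * x⁻¹ + c * x⁻¹ ^ 2) = 0 := by
      field_simp
      linear_combination -h
    rw [this, map_zero] at hu
    exact zero_ne_one hu
  have hsq : (x / y) ^ 2 * (1 + x⁻¹ * (a + b * x⁻¹ + c * x⁻¹ ^ 2)) = x⁻¹ := by
    field_simp
    linear_combination -h
  have hvz : V.valuation (x / y) < 1 := by
    have := congrArg V.valuation hsq
    rw [map_mul, map_pow, hu, mul_one] at this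
    rwa [← pow_lt_one_iff two_ne_zero, this]
  obtain ⟨hzV, hz⟩ := V.mem_nonunits_iff_exists_mem_maximalIdeal.mp (V.mem_nonunits_iff.mpr hvz)
  refine ⟨⟨x / y, hzV⟩, hz, ⟨x / y, hzV⟩ * ⟨x⁻¹, htV⟩, Ideal.mul_mem_right _ _ hz, ?_, ?_⟩
  · apply Subtype.ext
    push_cast
    field_simp
    linear_combination h
  · exact Subtype.coe_ne_coe.mp (div_ne_zero hx0 hy0)

theorem infinite_affinePoints_of_notMem
    (ha₂ : W.a₂ ∈ V) (ha₄ : W.a₄ ∈ V) (ha₆ : W.a₆ ∈ V)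
    (hV : IsLocalRing.maximalIdeal V = Ideal.span {(p : V)}) (hp0 : (p : K) ≠ 0) {x y : K}
    (h : (x, y) ∈ affinePoints W) (hx : x ∉ V) :
    (affinePoints W).Infinite := by
  rw [mem_affinePoints_iff] at h
  obtain ⟨z, hz, w, hw, hzw, hz0⟩ :=
    exists_equationAtInfinity (a := ⟨_, ha₂⟩) (b := ⟨_, ha₄⟩) (c := ⟨_, ha₆⟩) h hx
  have hJ : Ideal.jacobson ⊥ = IsLocalRing.maximalIdeal V :=
    IsLocalRing.jacobson_eq_maximalIdeal _ bot_ne_top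
  rw [← hJ] at hw
  rw [hV, Ideal.mem_span_singleton] at hz
  have hpJ : (p : V) ∈ Ideal.jacobson ⊥ := by rw [hJ, hV]; exact Ideal.mem_span_singleton_self _
  have hp0' : (p : V) ≠ 0 := fun h0 ↦ hp0 (congrArg ((↑) : V → K) h0)
  refine Set.infinite_of_injOn_mapsTo (f := fun P : V × V ↦ ((P.1 : K) / P.2, 1 / (P.2 : K)))
    ?_ ?_ (hzw.infinite_setOf hpJ hp0' hz hz0 hw)
  · rintro ⟨z₁, w₁⟩ - ⟨z₂, w₂⟩ ⟨-, hw₂⟩ heq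
    obtain ⟨hz₁₂, hw₁₂⟩ := Prod.mk.inj heq
    rw [one_div, one_div, inv_inj] at hw₁₂
    rw [hw₁₂, div_left_inj' (by simpa using hw₂)] at hz₁₂
    exact Prod.ext (Subtype.ext hz₁₂) (Subtype.ext hw₁₂)
  · rintro ⟨z', w'⟩ ⟨h', hw'⟩
    refine EquationAtInfinity.mem_affinePoints ?_ ?_
    · exact congrArg ((↑) : V → K) h'
    · simpa using hw'

theorem infinite_affinePoints_of_slope_notMem [DecidableEq K]
    (ha₂ : W.a₂ ∈ V) (ha₄ : W.a₄ ∈ V) (ha₆ : W.a₆ ∈ V)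
    (hV : IsLocalRing.maximalIdeal V = Ideal.span {(p : V)}) (hp0 : (p : K) ≠ 0) {x₁ y₁ x₂ y₂ : K}
    (h₁ : (x₁, y₁) ∈ affinePoints W) (h₂ : (x₂, y₂) ∈ affinePoints W) (hx₁ : x₁ ∈ V)
    (hx₂ : x₂ ∈ V) (hslope : W.toAffine.slope x₁ x₂ y₁ y₂ ∉ V) :
    (affinePoints W).Infinite := by
  have hxy : ¬ (x₁ = x₂ ∧ y₁ = W.toAffine.negY x₂ y₂) := by
    rintro ⟨hx, hy⟩
    rw [WeierstrassCurve.Affine.slope_of_Y_eq hx hy] at hslope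
    exact hslope (zero_mem V)
  refine infinite_affinePoints_of_notMem ha₂ ha₄ ha₆ hV hp0
    (WeierstrassCurve.Affine.equation_add h₁ h₂ hxy) fun hx ↦ hslope ?_
  have hsq : W.toAffine.slope x₁ x₂ y₁ y₂ ^ 2 ∈ V := by
    convert add_mem (add_mem (add_mem hx ha₂) hx₁) hx₂ using 1
    simp only [WeierstrassCurve.a₁_of_isCharNeTwoNF]
    ring
  rwa [← V.valuation_le_one_iff, map_pow, pow_le_one_iff two_ne_zero,
    V.valuation_le_one_iff] at hsq

end Reduction

section PadicIntegers

open WithZero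

variable (p : ℕ) [Fact p.Prime]

lemma maximalIdeal_padic :
    IsLocalRing.maximalIdeal (Rat.padicValuation p).valuationSubring =
      Ideal.span {(p : (Rat.padicValuation p).valuationSubring)} := by
  have hp : Rat.padicValuation p p ≠ 0 := by simp
  have hp1 : Rat.padicValuation p p * exp 1 = 1 := by
    rw [Rat.padicValuation_self, ← exp_add, neg_add_cancel, exp_zero]
  ext x
  rw [Valuation.mem_maximalIdeal_iff, Ideal.mem_span_singleton]
  constructor
  · intro hx
    rw [← hp1, lt_mul_exp_iff_le hp] at hx
    have hxp : Rat.padicValuation p (x / p) ≤ 1 := by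
      rwa [map_div₀, div_le_one₀ (zero_lt_iff.mpr hp)]
    refine ⟨⟨x / p, hxp⟩, Subtype.ext ?_⟩
    have : (p : ℚ) ≠ 0 := (Valuation.ne_zero_iff _).mp hp
    push_cast
    field_simp
  · rintro ⟨y, rfl⟩
    push_cast
    rw [map_mul, ← hp1, lt_mul_exp_iff_le hp]
    exact mul_le_of_le_one_right' y.2

variable {p}

lemma intCast_div_mem {m n : ℤ} (hn : ¬ (p : ℤ) ∣ n) :
    (m / n : ℚ) ∈ (Rat.padicValuation p).valuationSubring := by
  rw [Valuation.mem_valuationSubring_iff, map_div₀, Rat.padicValuation_cast,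
    Rat.padicValuation_cast, Int.padicValuation_eq_one_iff.mpr hn, div_one]
  exact Int.padicValuation_le_one p m

lemma intCast_div_notMem {m n : ℤ} (hm : ¬ (p : ℤ) ∣ m) (hn : (p : ℤ) ∣ n) (hn0 : n ≠ 0) :
    (m / n : ℚ) ∉ (Rat.padicValuation p).valuationSubring := by
  rw [Valuation.mem_valuationSubring_iff, map_div₀, Rat.padicValuation_cast,
    Rat.padicValuation_cast, Int.padicValuation_eq_one_iff.mpr hm, not_le,
    one_lt_div₀ (zero_lt_iff.mpr (by simpa))]
  exact Int.padicValuation_lt_one_iff.mpr hn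

end PadicIntegers

/-! ### Curves with full two-torsion -/

/-- The curve `y² = x (x - α) (x - β)`, with full two-torsion. -/
def splitCurve {R : Type*} [CommRing R] (α β : R) : WeierstrassCurve R :=
  { a₁ := 0, a₂ := -(α + β), a₃ := 0, a₄ := α * β, a₆ := 0 }

section SplitCurve

variable {K : Type*} [Field K] {α β x y k : K}

instance : (splitCurve α β).IsCharNeTwoNF := ⟨rfl, rfl⟩

lemma mem_affinePoints_splitCurve {P : K × K} :
    P ∈ affinePoints (splitCurve α β) ↔ P.2 ^ 2 = P.1 * (P.1 - α) * (P.1 - β) := by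
  rw [mem_affinePoints_iff]
  refine Eq.congr_right ?_
  simp only [splitCurve]
  ring

lemma slope_splitCurve_self [DecidableEq K] [NeZero (2 : K)] (hy : y ≠ 0) :
    (splitCurve α β).toAffine.slope x x y y = (3 * x ^ 2 - 2 * (α + β) * x + α * β) / (2 * y) := by
  have hy' : y ≠ (splitCurve α β).toAffine.negY x y := by
    have h2y : 2 * y ≠ 0 := mul_ne_zero two_ne_zero hy
    contrapose! h2y
    simp only [WeierstrassCurve.Affine.negY, splitCurve] at h2y
    linear_combination h2y
  rw [WeierstrassCurve.Affine.slope_of_Y_ne rfl hy']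
  simp only [WeierstrassCurve.Affine.negY, splitCurve]
  congr 1 <;> ring

lemma finite_affinePoints_splitCurve_mul_sq (hk : k ≠ 0)
    (h : (affinePoints (splitCurve α β)).Finite) :
    (affinePoints (splitCurve (k ^ 2 * α) (k ^ 2 * β))).Finite := by
  have hinj : Function.Injective fun P : K × K ↦ (P.1 / k ^ 2, P.2 / k ^ 3) := by
    rintro ⟨x₁, y₁⟩ ⟨x₂, y₂⟩ hP
    obtain ⟨hx, hy⟩ := Prod.mk.inj hP
    exact Prod.ext ((div_left_inj' (pow_ne_zero 2 hk)).mp hx)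
      ((div_left_inj' (pow_ne_zero 3 hk)).mp hy)
  refine (h.preimage hinj.injOn).subset fun P hP ↦ ?_
  rw [mem_affinePoints_splitCurve] at hP
  rw [Set.mem_preimage, mem_affinePoints_splitCurve]
  field_simp
  rw [hP]

end SplitCurve

theorem infinite_affinePoints_splitCurve_of_slope_notMem {p : ℕ} [Fact p.Prime]
    {α β x₁ y₁ x₂ y₂ : ℚ}
    (hα : α ∈ (Rat.padicValuation p).valuationSubring)
    (hβ : β ∈ (Rat.padicValuation p).valuationSubring)
    (h₁ : (x₁, y₁) ∈ affinePoints (splitCurve α β))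
    (h₂ : (x₂, y₂) ∈ affinePoints (splitCurve α β))
    (hx₁ : x₁ ∈ (Rat.padicValuation p).valuationSubring)
    (hx₂ : x₂ ∈ (Rat.padicValuation p).valuationSubring)
    (hslope : (splitCurve α β).toAffine.slope x₁ x₂ y₁ y₂ ∉
      (Rat.padicValuation p).valuationSubring) :
    (affinePoints (splitCurve α β)).Infinite :=
  infinite_affinePoints_of_slope_notMem
    (neg_mem (add_mem hα hβ)) (mul_mem hα hβ) (zero_mem _) (maximalIdeal_padic p)
    (by exact_mod_cast (Fact.out : p.Prime).ne_zero) h₁ h₂ hx₁ hx₂ hslope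

/-! ### Perfect cuboids -/

/-- A cuboid with edges `A`, `B`, `C`, face diagonals `D`, `E`, `F` and main diagonal `G`, all of
them integers, in which the edge `A` and the face diagonal `F` span the internal rectangle. Lengths
are determined up to sign. -/
structure IsPerfectCuboid (A B C D E F G : ℤ) : Prop where
  A_ne_zero : A ≠ 0
  B_ne_zero : B ≠ 0
  C_ne_zero : C ≠ 0
  triple_D : PythagoreanTriple A C D
  triple_E : PythagoreanTriple A B E
  triple_F : PythagoreanTriple B C F
  triple_G : PythagoreanTriple A F G

/-- A perfect cuboid whose edges have no common factor. -/
structure IsPrimitivePerfectCuboid (A B C D E F G : ℤ) : Prop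
    extends IsPerfectCuboid A B C D E F G where
  isUnit_of_dvd : ∀ r, r ∣ A → r ∣ B → r ∣ C → IsUnit r

lemma IsPerfectCuboid.exists_primitive {A B C D E F G : ℤ} (h : IsPerfectCuboid A B C D E F G) :
    ∃ k A' B' C' D' E' F' G', k ≠ 0 ∧ A = k * A' ∧ F = k * F' ∧
      IsPrimitivePerfectCuboid A' B' C' D' E' F' G' := by
  obtain ⟨hA, hB, hC, hD, hE, hF, hG⟩ := h
  obtain ⟨l, B', C', hl, hBC, rfl, rfl⟩ := exists_isCoprime_eq_mul hB C
  obtain ⟨k, A', l', hk, hAl, rfl, rfl⟩ := exists_isCoprime_eq_mul hA l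
  rw [mul_assoc] at hB hC hD hE hF
  rw [mul_assoc] at hF
  obtain ⟨D', -, hD'⟩ := exists_eq_mul_hypotenuse hD hk
  obtain ⟨E', -, hE'⟩ := exists_eq_mul_hypotenuse hE hk
  obtain ⟨F', rfl, hF'⟩ := exists_eq_mul_hypotenuse hF hk
  obtain ⟨G', -, hG'⟩ := exists_eq_mul_hypotenuse hG hk
  refine ⟨k, A', l' * B', l' * C', D', E', F', G', hk, rfl, rfl,
    ⟨right_ne_zero_of_mul hA, right_ne_zero_of_mul hB, right_ne_zero_of_mul hC,
      hD', hE', hF', hG'⟩, fun r hrA hrB hrC ↦ ?_⟩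
  refine hAl.isUnit_of_dvd' hrA ?_
  obtain ⟨u, v, huv⟩ := hBC
  have : l' = u * (l' * B') + v * (l' * C') := by linear_combination -l' * huv
  rw [this]
  exact dvd_add (hrB.mul_left u) (hrC.mul_left v)

namespace IsPrimitivePerfectCuboid

variable {A B C D E F G : ℤ}

lemma swap (h : IsPrimitivePerfectCuboid A B C D E F G) :
    IsPrimitivePerfectCuboid A C B E D F G where
  A_ne_zero := h.A_ne_zero
  B_ne_zero := h.C_ne_zero
  C_ne_zero := h.B_ne_zero
  triple_D := h.triple_E
  triple_E := h.triple_D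
  triple_F := h.triple_F.symm
  triple_G := h.triple_G
  isUnit_of_dvd r hA hC hB := h.isUnit_of_dvd r hA hB hC

lemma odd_G (h : IsPrimitivePerfectCuboid A B C D E F G) : Odd G := by
  rw [← Int.not_even_iff_odd]
  intro hG
  obtain ⟨hA, hF⟩ := even_and_even_of_even_hypotenuse h.triple_G hG
  obtain ⟨hB, hC⟩ := even_and_even_of_even_hypotenuse h.triple_F hF
  exact Int.prime_two.not_isUnit (h.isUnit_of_dvd 2 hA.two_dvd hB.two_dvd hC.two_dvd)

lemma isCoprime_of_dvd (h : IsPrimitivePerfectCuboid A B C D E F G) {r s : ℤ} (hrB : r ∣ B)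
    (hrC : r ∣ C) (hsD : s ∣ D) : IsCoprime r s := by
  rw [← isRelPrime_iff_isCoprime]
  intro t htr hts
  refine h.isUnit_of_dvd t ?_ (htr.trans hrB) (htr.trans hrC)
  have hA : A ^ 2 = D ^ 2 - C ^ 2 := by
    have : A * A + C * C = D * D := h.triple_D
    linear_combination this
  rw [← Int.pow_dvd_pow_iff two_ne_zero, hA]
  exact dvd_sub (pow_dvd_pow_of_dvd (hts.trans hsD) 2) (pow_dvd_pow_of_dvd (htr.trans hrC) 2)

end IsPrimitivePerfectCuboid

section CuboidPoints

variable {K : Type*} [Field K] {a b c d e f g σ : K}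

lemma mem_affinePoints_splitCurve_sq_sq (hd : a ^ 2 + c ^ 2 = d ^ 2) (hf : b ^ 2 + c ^ 2 = f ^ 2)
    (hg : a ^ 2 + f ^ 2 = g ^ 2) :
    (b ^ 2, b * c * d) ∈ affinePoints (splitCurve (f ^ 2) (g ^ 2)) := by
  have hbf : b ^ 2 - f ^ 2 = -c ^ 2 := by linear_combination hf
  have hbg : b ^ 2 - g ^ 2 = -d ^ 2 := by linear_combination hf + hg - hd
  rw [mem_affinePoints_splitCurve, hbf, hbg]
  ring

lemma slope_splitCurve_mul_sq_sq [DecidableEq K] [NeZero (2 : K)] {k : K} (hk : k ≠ 0)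
    (hb : b ≠ 0) (hc : c ≠ 0) (hd : d ≠ 0) :
    (splitCurve ((k * f) ^ 2) (g ^ 2)).toAffine.slope ((k * b) ^ 2) ((k * b) ^ 2)
        (k * b * (k * c) * d) (k * b * (k * c) * d) =
      (3 * k ^ 2 * b ^ 4 - 2 * ((k * f) ^ 2 + g ^ 2) * b ^ 2 + f ^ 2 * g ^ 2) /
        (2 * b * c * d) := by
  have h2 : (2 : K) ≠ 0 := two_ne_zero
  rw [slope_splitCurve_self (by positivity)]
  field_simp

lemma mem_affinePoints_splitCurve_pow_four (hb : b ≠ 0) (hd : a ^ 2 + c ^ 2 = d ^ 2)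
    (he : a ^ 2 + b ^ 2 = e ^ 2) (hf : b ^ 2 + c ^ 2 = f ^ 2) (hg : a ^ 2 + f ^ 2 = g ^ 2) :
    ((a * f * d / b) ^ 2, a ^ 2 * f ^ 2 * g ^ 2 * (c * d * e) / b ^ 3) ∈
      affinePoints (splitCurve (a ^ 4) (a ^ 4 - g ^ 4)) := by
  have hcg : (a * f * d / b) ^ 2 - a ^ 4 = (a * c * g / b) ^ 2 := by
    field_simp
    rw [← hd, ← hg, ← hf]
    ring
  have heg : (a * f * d / b) ^ 2 - (a ^ 4 - g ^ 4) = (f * e * g / b) ^ 2 := by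
    field_simp
    rw [show g ^ 4 = (g ^ 2) ^ 2 by ring, ← hd, ← hg, ← he, ← hf]
    ring
  rw [mem_affinePoints_splitCurve, hcg, heg]
  field_simp

lemma mem_affinePoints_splitCurve_pow_four_of_sq_eq_one (hσ : σ ^ 2 = 1) :
    (a ^ 2 * (a ^ 2 + g ^ 2), σ * (a ^ 2 * g ^ 2 * (a ^ 2 + g ^ 2))) ∈
      affinePoints (splitCurve (a ^ 4) (a ^ 4 - g ^ 4)) := by
  rw [mem_affinePoints_splitCurve, mul_pow, hσ]
  ring

lemma slope_splitCurve_pow_four [DecidableEq K] (ha : a ≠ 0) (hb : b ≠ 0) (hg0 : g ≠ 0)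
    (hbc : c ^ 2 - b ^ 2 ≠ 0) (hd : a ^ 2 + c ^ 2 = d ^ 2) (he : a ^ 2 + b ^ 2 = e ^ 2)
    (hf : b ^ 2 + c ^ 2 = f ^ 2) (hg : a ^ 2 + f ^ 2 = g ^ 2) :
    (splitCurve (a ^ 4) (a ^ 4 - g ^ 4)).toAffine.slope ((a * f * d / b) ^ 2)
        (a ^ 2 * (a ^ 2 + g ^ 2)) (a ^ 2 * f ^ 2 * g ^ 2 * (c * d * e) / b ^ 3)
        (σ * (a ^ 2 * g ^ 2 * (a ^ 2 + g ^ 2))) =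
      (f ^ 2 * (c * d * e) - σ * (b ^ 3 * (d ^ 2 + e ^ 2))) / (b * (c ^ 2 - b ^ 2)) := by
  have hx : (a * f * d / b) ^ 2 - a ^ 2 * (a ^ 2 + g ^ 2) =
      a ^ 2 * g ^ 2 * (c ^ 2 - b ^ 2) / b ^ 2 := by
    field_simp
    rw [← hd, ← hg, ← hf]
    ring
  have hde : d ^ 2 + e ^ 2 = a ^ 2 + g ^ 2 := by linear_combination hf + hg - hd - he
  have hx0 : (a * f * d / b) ^ 2 ≠ a ^ 2 * (a ^ 2 + g ^ 2) :=
    sub_ne_zero.mp (hx ▸ by positivity)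
  rw [WeierstrassCurve.Affine.slope_of_X_ne hx0, hx, hde]
  field_simp

lemma slope_splitCurve_pow_four_mul [DecidableEq K] {k m n : K} (ha : a ≠ 0) (hb : k * b ≠ 0)
    (hg0 : g ≠ 0) (hm : m ≠ 0) (hn0 : n ≠ 0) (hn : c ^ 2 - b ^ 2 = m ^ 2 * n)
    (hd : a ^ 2 + (k * c) ^ 2 = (m * d) ^ 2) (he : a ^ 2 + (k * b) ^ 2 = (m * e) ^ 2)
    (hf : (k * b) ^ 2 + (k * c) ^ 2 = (k * f) ^ 2) (hg : a ^ 2 + (k * f) ^ 2 = g ^ 2) :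
    (splitCurve (a ^ 4) (a ^ 4 - g ^ 4)).toAffine.slope ((a * (k * f) * (m * d) / (k * b)) ^ 2)
        (a ^ 2 * (a ^ 2 + g ^ 2))
        (a ^ 2 * (k * f) ^ 2 * g ^ 2 * (k * c * (m * d) * (m * e)) / (k * b) ^ 3)
        (σ * (a ^ 2 * g ^ 2 * (a ^ 2 + g ^ 2))) =
      (f ^ 2 * (c * d * e) - σ * (b ^ 3 * (d ^ 2 + e ^ 2))) / (b * n) := by
  obtain ⟨hk0, hb0⟩ := mul_ne_zero_iff.mp hb
  have hbc : (k * c) ^ 2 - (k * b) ^ 2 = k ^ 2 * m ^ 2 * n := by linear_combination k ^ 2 * hn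
  rw [slope_splitCurve_pow_four ha hb hg0 (hbc ▸ by positivity) hd he hf hg, hbc]
  field_simp

end CuboidPoints

namespace IsPrimitivePerfectCuboid

variable {A B C D E F G : ℤ}

/-- The tangent at `(B², BCD)`. Up to swapping `B` and `C` we may assume that `B / gcd(B, C)` is
even, and then the slope has even denominator and odd numerator. -/
theorem infinite_affinePoints_splitCurve_sq_sq (h : IsPrimitivePerfectCuboid A B C D E F G) :
    (affinePoints (splitCurve ((F : ℚ) ^ 2) ((G : ℚ) ^ 2))).Infinite := by
  obtain ⟨k, b, c, hk, hbc, rfl, rfl⟩ := exists_isCoprime_eq_mul h.B_ne_zero C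
  obtain ⟨f, rfl, hf⟩ := exists_eq_mul_hypotenuse h.triple_F hk
  wlog hb : Even b generalizing b c D E
  · have hc : Even c := by
      have := hf.even_odd_of_coprime (Int.isCoprime_iff_gcd_eq_one.mp hbc)
      rw [Int.even_iff] at hb ⊢
      lia
    exact this c b hbc.symm hf.symm h.swap hc
  have hb0 : b ≠ 0 := right_ne_zero_of_mul h.B_ne_zero
  have hc0 : c ≠ 0 := right_ne_zero_of_mul h.C_ne_zero
  have hD0 : D ≠ 0 := hypotenuse_ne_zero h.triple_D h.A_ne_zero
  have hnum : Odd (3 * k ^ 2 * b ^ 4 - 2 * ((k * f) ^ 2 + G ^ 2) * b ^ 2 + f ^ 2 * G ^ 2) := by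
    refine Even.add_odd ?_ ((odd_hypotenuse_of_isCoprime hf hbc).pow.mul h.odd_G.pow)
    exact ((hb.pow_of_ne_zero four_ne_zero).mul_left _).sub
      ((hb.pow_of_ne_zero two_ne_zero).mul_left _)
  have hslope := intCast_div_notMem (p := 2) (n := 2 * b * c * D)
    (mt even_iff_two_dvd.mpr (Int.not_even_iff_odd.mpr hnum))
    (by rw [mul_assoc, mul_assoc]; exact dvd_mul_right _ _) (by positivity)
  push_cast at hslope ⊢
  rw [← slope_splitCurve_mul_sq_sq (mod_cast hk) (mod_cast hb0) (mod_cast hc0) (mod_cast hD0)]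
    at hslope
  have hD : (A : ℚ) ^ 2 + (k * c) ^ 2 = D ^ 2 := mod_cast ratCast_sq_add_sq h.triple_D
  have hF : (k * b : ℚ) ^ 2 + (k * c) ^ 2 = (k * f) ^ 2 := mod_cast ratCast_sq_add_sq h.triple_F
  have hG : (A : ℚ) ^ 2 + (k * f) ^ 2 = G ^ 2 := mod_cast ratCast_sq_add_sq h.triple_G
  have hmem := mem_affinePoints_splitCurve_sq_sq hD hF hG
  have hV (r : ℤ) : (r : ℚ) ∈ (Rat.padicValuation 2).valuationSubring := intCast_mem _ r
  have hkb := pow_mem (mul_mem (hV k) (hV b)) 2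
  exact infinite_affinePoints_splitCurve_of_slope_notMem
    (pow_mem (mul_mem (hV k) (hV f)) 2) (pow_mem (hV G) 2) hmem hmem hkb hkb hslope

lemma exists_sq_sub_sq_eq {b c d e f k m : ℤ}
    (h : IsPrimitivePerfectCuboid A (k * b) (k * c) (m * d) (m * e) (k * f) G) (hm : m ≠ 0) :
    ∃ n, c ^ 2 - b ^ 2 = m ^ 2 * n ∧ d ^ 2 - e ^ 2 = k ^ 2 * n := by
  have hsq : k ^ 2 * (c ^ 2 - b ^ 2) = m ^ 2 * (d ^ 2 - e ^ 2) := by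
    have hD : A * A + k * c * (k * c) = m * d * (m * d) := h.triple_D
    have hE : A * A + k * b * (k * b) = m * e * (m * e) := h.triple_E
    linear_combination hD - hE
  have hkm : IsCoprime k m :=
    h.isCoprime_of_dvd (dvd_mul_right k b) (dvd_mul_right k c) (dvd_mul_right m d)
  obtain ⟨n, hn⟩ : m ^ 2 ∣ c ^ 2 - b ^ 2 := hkm.symm.pow.dvd_of_dvd_mul_left ⟨_, hsq⟩
  exact ⟨n, hn, mul_left_cancel₀ (pow_ne_zero 2 hm) (by linear_combination k ^ 2 * hn - hsq)⟩

/-- The prime `p` divides the denominator `b * n` of the slope in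
`slope_splitCurve_pow_four_mul`, but not the sum of its numerators for `σ = 1` and `σ = -1`. -/
lemma exists_prime_dvd {b c d e f k m : ℤ}
    (h : IsPrimitivePerfectCuboid A (k * b) (k * c) (m * d) (m * e) (k * f) G) (hm : m ≠ 0)
    (hbc : IsCoprime b c) (hde : IsCoprime d e) (hf : PythagoreanTriple b c f) :
    ∃ (n : ℤ) (p : ℕ), c ^ 2 - b ^ 2 = m ^ 2 * n ∧ n ≠ 0 ∧ p.Prime ∧ (p : ℤ) ∣ n ∧
      ¬ (p : ℤ) ∣ b ∧ ¬ (p : ℤ) ∣ 2 * (f ^ 2 * (c * d * e)) := by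
  obtain ⟨n, hn, hn'⟩ := h.exists_sq_sub_sq_eq hm
  have hodd : Odd n := (Int.odd_mul.mp (hn ▸ odd_sq_sub_sq hf hbc)).2
  have hunit : ¬ IsUnit n := not_isUnit_of_sq_sub_sq_eq hf
    (right_ne_zero_of_mul h.B_ne_zero) (right_ne_zero_of_mul h.C_ne_zero) hn
  obtain ⟨p, hp, hpn⟩ := Nat.exists_prime_and_dvd (mt Int.isUnit_iff_natAbs_eq.mpr hunit)
  rw [← Int.natCast_dvd] at hpn
  have hp' : Prime (p : ℤ) := Nat.prime_iff_prime_int.mp hp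
  have hp2 : ¬ (p : ℤ) ∣ 2 := fun h2 ↦
    hp'.not_isUnit ((Int.isCoprime_two_left.mpr hodd).isUnit_of_dvd' h2 hpn)
  have hpcb : (p : ℤ) ∣ c ^ 2 - b ^ 2 := hn ▸ hpn.mul_left _
  have hpde : (p : ℤ) ∣ d ^ 2 - e ^ 2 := hn' ▸ hpn.mul_left _
  have hpb := not_dvd_of_dvd_sq_sub_sq hp' hbc (dvd_sub_comm.mp hpcb)
  have hpc := not_dvd_of_dvd_sq_sub_sq hp' hbc.symm hpcb
  have hpd := not_dvd_of_dvd_sq_sub_sq hp' hde hpde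
  have hpe := not_dvd_of_dvd_sq_sub_sq hp' hde.symm (dvd_sub_comm.mp hpde)
  have hpf : ¬ (p : ℤ) ∣ f ^ 2 :=
    mt hp'.dvd_of_dvd_pow (not_dvd_hypotenuse hp' hp2 hf hbc hpcb)
  exact ⟨n, p, hn, fun h0 ↦ by simp [h0] at hodd, hp, hpn, hpb,
    hp'.not_dvd_mul hp2 (hp'.not_dvd_mul hpf (hp'.not_dvd_mul (hp'.not_dvd_mul hpc hpd) hpe))⟩

/-- The chord through the point with `x = (AFD / B)²` and one of the points of order four with
`x = A² (A² + G²)`. -/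
theorem infinite_affinePoints_splitCurve_pow_four (h : IsPrimitivePerfectCuboid A B C D E F G) :
    (affinePoints (splitCurve ((A : ℚ) ^ 4) ((A : ℚ) ^ 4 - (G : ℚ) ^ 4))).Infinite := by
  have hD0 : D ≠ 0 := hypotenuse_ne_zero h.triple_D h.A_ne_zero
  obtain ⟨k, b, c, hk, hbc, rfl, rfl⟩ := exists_isCoprime_eq_mul h.B_ne_zero C
  obtain ⟨m, d, e, hm, hde, rfl, rfl⟩ := exists_isCoprime_eq_mul hD0 E
  obtain ⟨f, rfl, hf⟩ := exists_eq_mul_hypotenuse h.triple_F hk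
  obtain ⟨n, p, hn, hn0, hp, hpn, hpb, hpu⟩ := h.exists_prime_dvd hm hbc hde hf
  have : Fact p.Prime := ⟨hp⟩
  obtain ⟨σ, hσ, hnum⟩ := exists_sq_eq_one_not_dvd_sub_mul hpu (b ^ 3 * (d ^ 2 + e ^ 2))
  have hA0 : (A : ℚ) ≠ 0 := mod_cast h.A_ne_zero
  have hB0 : (k * b : ℚ) ≠ 0 := mod_cast h.B_ne_zero
  have hG0 : (G : ℚ) ≠ 0 := mod_cast hypotenuse_ne_zero h.triple_G h.A_ne_zero
  have hD : (A : ℚ) ^ 2 + (k * c) ^ 2 = (m * d) ^ 2 := mod_cast ratCast_sq_add_sq h.triple_D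
  have hE : (A : ℚ) ^ 2 + (k * b) ^ 2 = (m * e) ^ 2 := mod_cast ratCast_sq_add_sq h.triple_E
  have hF : (k * b : ℚ) ^ 2 + (k * c) ^ 2 = (k * f) ^ 2 := mod_cast ratCast_sq_add_sq h.triple_F
  have hG : (A : ℚ) ^ 2 + (k * f) ^ 2 = G ^ 2 := mod_cast ratCast_sq_add_sq h.triple_G
  have hx₁ : ((A * (k * f) * (m * d) / (k * b)) ^ 2 : ℚ) ∈
      (Rat.padicValuation p).valuationSubring := by
    convert pow_mem (intCast_div_mem (m := A * f * (m * d)) hpb) 2 using 2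
    push_cast
    field_simp
  have hslope := intCast_div_notMem hnum (hpn.mul_left b)
    (mul_ne_zero (right_ne_zero_of_mul h.B_ne_zero) hn0)
  push_cast at hslope
  rw [← slope_splitCurve_pow_four_mul hA0 hB0 hG0 (mod_cast hm) (mod_cast hn0) (mod_cast hn)
    hD hE hF hG] at hslope
  have hV (r : ℤ) : (r : ℚ) ∈ (Rat.padicValuation p).valuationSubring := intCast_mem _ r
  exact infinite_affinePoints_splitCurve_of_slope_notMem (pow_mem (hV A) 4)
    (sub_mem (pow_mem (hV A) 4) (pow_mem (hV G) 4))
    (mem_affinePoints_splitCurve_pow_four hB0 hD hE hF hG)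
    (mem_affinePoints_splitCurve_pow_four_of_sq_eq_one (mod_cast hσ)) hx₁
    (mul_mem (pow_mem (hV A) 2) (add_mem (pow_mem (hV A) 2) (pow_mem (hV G) 2))) hslope

lemma infinite_affinePoints_splitCurve_of_similar (h : IsPrimitivePerfectCuboid A B C D E F G)
    {m n s : ℤ} (hm : m ≠ 0) (hs : PythagoreanTriple m n s) (hmn : A * n = F * m) :
    (affinePoints (splitCurve ((n : ℚ) ^ 2) ((s : ℚ) ^ 2))).Infinite ∧
      (affinePoints (splitCurve ((m : ℚ) ^ 4) ((m : ℚ) ^ 4 - (s : ℚ) ^ 4))).Infinite := by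
  have hm0 : (m : ℚ) ≠ 0 := mod_cast hm
  obtain ⟨k, hk⟩ : ∃ k : ℚ, A = k * m := ⟨A / m, (div_mul_cancel₀ _ hm0).symm⟩
  have hF : (F : ℚ) = k * n := by
    have : (A : ℚ) * n = F * m := mod_cast hmn
    exact mul_right_cancel₀ hm0 (by linear_combination n * hk - this)
  have hG : (G : ℚ) ^ 2 = k ^ 2 * s ^ 2 := by
    rw [← ratCast_sq_add_sq h.triple_G, ← ratCast_sq_add_sq hs, hk, hF]
    ring
  have hk0 : k ≠ 0 := by
    rintro rfl
    exact h.A_ne_zero (by simpa using hk)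
  constructor <;> intro hfin
  · refine h.infinite_affinePoints_splitCurve_sq_sq ?_
    rw [hF, hG, mul_pow]
    exact finite_affinePoints_splitCurve_mul_sq hk0 hfin
  · refine h.infinite_affinePoints_splitCurve_pow_four ?_
    have hA4 : (A : ℚ) ^ 4 = (k ^ 2) ^ 2 * m ^ 4 := by
      rw [hk]
      ring
    have hG4 : (G : ℚ) ^ 4 = (k ^ 2) ^ 2 * s ^ 4 := by
      linear_combination (G ^ 2 + k ^ 2 * s ^ 2) * hG
    rw [hA4, hG4, ← mul_sub]
    exact finite_affinePoints_splitCurve_mul_sq (pow_ne_zero 2 hk0) hfin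

end IsPrimitivePerfectCuboid

section EI

variable (p q : ℤ)

lemma EI1_eq_affinePoints_splitCurve : EI1 p q = affinePoints (splitCurve
    (((p ^ 2 - q ^ 2 : ℤ) : ℚ) ^ 4)
    (((p ^ 2 - q ^ 2 : ℤ) : ℚ) ^ 4 - ((p ^ 2 + q ^ 2 : ℤ) : ℚ) ^ 4)) := by
  ext P
  rw [mem_affinePoints_splitCurve, EI1, Set.mem_ofPred_eq]
  refine Eq.congr_right ?_
  push_cast
  ring

lemma EI2_eq_affinePoints_splitCurve : EI2 p q = affinePoints (splitCurve
    (((2 * p * q : ℤ) : ℚ) ^ 4)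
    (((2 * p * q : ℤ) : ℚ) ^ 4 - ((p ^ 2 + q ^ 2 : ℤ) : ℚ) ^ 4)) := by
  ext P
  rw [mem_affinePoints_splitCurve, EI2, Set.mem_ofPred_eq]
  refine Eq.congr_right ?_
  push_cast
  ring

lemma EI3_eq_affinePoints_splitCurve : EI3 p q = affinePoints (splitCurve
    (((p ^ 2 - q ^ 2 : ℤ) : ℚ) ^ 2) (((p ^ 2 + q ^ 2 : ℤ) : ℚ) ^ 2)) := by
  ext P
  rw [mem_affinePoints_splitCurve, EI3, Set.mem_ofPred_eq]
  refine Eq.congr_right ?_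
  push_cast
  ring

lemma EI4_eq_affinePoints_splitCurve : EI4 p q = affinePoints (splitCurve
    (((2 * p * q : ℤ) : ℚ) ^ 2) (((p ^ 2 + q ^ 2 : ℤ) : ℚ) ^ 2)) := by
  ext P
  rw [mem_affinePoints_splitCurve, EI4, Set.mem_ofPred_eq]
  refine Eq.congr_right ?_
  push_cast
  ring

end EI

lemma exists_isPerfectCuboid_of_isSquare {a b c f : ℤ} (ha : a ≠ 0) (hb : b ≠ 0) (hc : c ≠ 0)
    (hab : IsSquare (a ^ 2 + b ^ 2)) (hac : IsSquare (a ^ 2 + c ^ 2))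
    (habc : IsSquare (a ^ 2 + b ^ 2 + c ^ 2)) (hf : f ^ 2 = b ^ 2 + c ^ 2) :
    ∃ d e g, IsPerfectCuboid a b c d e f g := by
  obtain ⟨e, he⟩ := hab
  obtain ⟨d, hd⟩ := hac
  obtain ⟨g, hg⟩ := habc
  refine ⟨d, e, g, ha, hb, hc, ?_, ?_, ?_, ?_⟩ <;> unfold PythagoreanTriple <;> linarith

theorem no_perfect_cuboid_with_internal_ratio_general (p q : ℤ) (hq : 0 < q) (hqp : q < p)
    (h₁ : (EI1 p q).Finite ∨ (EI4 p q).Finite) (h₂ : (EI2 p q).Finite ∨ (EI3 p q).Finite) :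
    ¬ ∃ a b c : ℤ, 0 < a ∧ 0 < b ∧ 0 < c ∧
      IsSquare (a ^ 2 + b ^ 2) ∧ IsSquare (a ^ 2 + c ^ 2) ∧ IsSquare (b ^ 2 + c ^ 2) ∧
      IsSquare (a ^ 2 + b ^ 2 + c ^ 2) ∧
      ∃ f : ℤ, f ^ 2 = b ^ 2 + c ^ 2 ∧
        (a * (2 * p * q) = f * (p ^ 2 - q ^ 2) ∨ f * (2 * p * q) = a * (p ^ 2 - q ^ 2)) := by
  rintro ⟨a, b, c, ha, hb, hc, hab, hac, -, habc, f, hf, hratio⟩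
  obtain ⟨d, e, g, hcuboid⟩ :=
    exists_isPerfectCuboid_of_isSquare ha.ne' hb.ne' hc.ne' hab hac habc hf
  obtain ⟨k, A, B, C, D, E, F, G, hk, rfl, rfl, hprim⟩ := hcuboid.exists_primitive
  have hpq : PythagoreanTriple (p ^ 2 - q ^ 2) (2 * p * q) (p ^ 2 + q ^ 2) := by
    unfold PythagoreanTriple
    ring
  rw [EI1_eq_affinePoints_splitCurve, EI4_eq_affinePoints_splitCurve] at h₁
  rw [EI2_eq_affinePoints_splitCurve, EI3_eq_affinePoints_splitCurve] at h₂
  rcases hratio with hratio | hratio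
  · have hm : p ^ 2 - q ^ 2 ≠ 0 := by nlinarith
    obtain ⟨h4, h1⟩ := hprim.infinite_affinePoints_splitCurve_of_similar hm hpq
      (mul_left_cancel₀ hk (by linear_combination hratio))
    exact h₁.elim h1 h4
  · have hm : 2 * p * q ≠ 0 := mul_ne_zero (mul_ne_zero two_ne_zero (hq.trans hqp).ne') hq.ne'
    obtain ⟨h3, h2⟩ := hprim.infinite_affinePoints_splitCurve_of_similar hm hpq.symm
      (mul_left_cancel₀ hk (by linear_combination -hratio))
    exact h₂.elim h2 h3

/-- If both EI1 and EI2, or both EI3 and EI4, have only finitely many rational points,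
then no perfect cuboid has an internal rectangle with aspect ratio `(p²−q²) : 2pq`. -/
theorem no_perfect_cuboid_with_internal_ratio
    (p q : ℤ) (hq : 0 < q) (hqp : q < p) (hcop : IsCoprime p q) (hpar : p % 2 ≠ q % 2)
    (h : ((EI1 p q).Finite ∧ (EI2 p q).Finite) ∨ ((EI3 p q).Finite ∧ (EI4 p q).Finite)) :
    ¬ ∃ a b c : ℤ, 0 < a ∧ 0 < b ∧ 0 < c ∧
      IsSquare (a ^ 2 + b ^ 2) ∧ IsSquare (a ^ 2 + c ^ 2) ∧ IsSquare (b ^ 2 + c ^ 2) ∧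
      IsSquare (a ^ 2 + b ^ 2 + c ^ 2) ∧
      ∃ f : ℤ, f ^ 2 = b ^ 2 + c ^ 2 ∧
        (a * (2 * p * q) = f * (p ^ 2 - q ^ 2) ∨ f * (2 * p * q) = a * (p ^ 2 - q ^ 2)) :=
  no_perfect_cuboid_with_internal_ratio_general p q hq hqp
    (h.imp And.left And.right) (h.imp And.right And.left)
end

section
/- Let (p,q) be admissible. If both the curve EI1: y² = x(x−(p²−q²)⁴)(x+8p²q²(p⁴+q⁴)) and the curve EI2: y² = x(x−16p⁴q⁴)(x+(p²+q²)⁴−16p⁴q⁴) have only finitely many rational points, then there do not exist positive integers α, φ, b, c and a squarefree positive integer M such that α·2pq = φ·(p²−q²), α²+φ² is a perfect square, b²+c² = M·φ², and M·α²+b² and M·α²+c² are both perfect squares. (The case M = 1 says no perfect cuboid has an internal rectangle with aspect ratio (p²−q²):2pq; the case M > 1 says no I-BPC has a Pythagorean internal rectangle with that aspect ratio.) -/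
/-!
Write `u = p² - q²`, `v = 2pq`, `w = p² + q²`, so that `u² + v² = w²` and `u`, `w` are odd. Shifting
the abscissa by `u⁴` turns EI1 into `y² = x (x + u⁴) (x + w⁴)`, and a forbidden cuboid gives a point
on it with abscissa `s²`, `s = u w c / b`, such that `s² + u⁴ = r²` and `s² + w⁴ = t²` are squares.

Doubling this point gives another one of the same kind, with `s' = (s⁴ - u⁴ w⁴) / (2 s r t)`. As a
sum of two odd squares is not a square, `|s|₂ ≠ 1`; as `u`, `w` are 2-adic units, the ultrametric
inequality is then an equality everywhere and `|s'|₂ = 2 max(|s|₂, 1)² / |s|₂ > |s|₂`. Repeated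
doubling therefore yields infinitely many rational points on EI1.
-/

lemma finite_of_finite_image_pow {R : Type*} [CommRing R] [IsDomain R] {S : Set R} {n : ℕ}
    (hn : 0 < n) (h : ((· ^ n) '' S).Finite) : S.Finite := by
  refine (h.preimage' fun x _ => ?_).subset (Set.subset_preimage_image _ S)
  exact (Multiset.finite_toSet (Polynomial.nthRoots n x)).subset
    fun s hs => (Polynomial.mem_nthRoots hn).2 hs

lemma sq_mul_mul_sq_add_sq {R : Type*} [CommSemiring R] {u v w α φ b c M : R}
    (huvw : u ^ 2 + v ^ 2 = w ^ 2) (hratio : α * v = φ * u)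
    (hbc : b ^ 2 + c ^ 2 = M * φ ^ 2) :
    v ^ 2 * (M * α ^ 2 + b ^ 2) = b ^ 2 * w ^ 2 + c ^ 2 * u ^ 2 := by
  calc v ^ 2 * (M * α ^ 2 + b ^ 2) = M * (α * v) ^ 2 + v ^ 2 * b ^ 2 := by ring
    _ = M * φ ^ 2 * u ^ 2 + v ^ 2 * b ^ 2 := by rw [hratio]; ring
    _ = (b ^ 2 + c ^ 2) * u ^ 2 + v ^ 2 * b ^ 2 := by rw [hbc]
    _ = b ^ 2 * w ^ 2 + c ^ 2 * u ^ 2 := by rw [← huvw]; ring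

section Field

variable {K : Type*} [Field K]

/-- The square roots of the nonzero abscissas `x` of points of `y² = x (x + a²) (x + b²)` that are
doubles of `K`-rational points: by full 2-descent, those are the points for which `x`, `x + a²` and
`x + b²` are all squares. The root `s` is recorded rather than `x = s²` because the duplication
formula is rational in `s` and the square roots of `s² + a²` and `s² + b²`. -/
def doubledAbscissaRoots (a b : K) : Set K :=
  {s | s ≠ 0 ∧ IsSquare (s ^ 2 + a ^ 2) ∧ IsSquare (s ^ 2 + b ^ 2)}

lemma isSquare_duplication_sq_add_sq {a b s r t : K} (hr : r ^ 2 = s ^ 2 + a ^ 2)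
    (ht : t ^ 2 = s ^ 2 + b ^ 2) (h0 : 2 * s * r * t ≠ 0) :
    IsSquare (((s ^ 4 - a ^ 2 * b ^ 2) / (2 * s * r * t)) ^ 2 + a ^ 2) := by
  refine ⟨(s ^ 4 + 2 * a ^ 2 * s ^ 2 + a ^ 2 * b ^ 2) / (2 * s * r * t), ?_⟩
  rw [div_pow, div_add' _ _ _ (pow_ne_zero 2 h0), div_mul_div_comm, ← sq (2 * s * r * t)]
  congr 1
  calc (s ^ 4 - a ^ 2 * b ^ 2) ^ 2 + a ^ 2 * (2 * s * r * t) ^ 2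
      = (s ^ 4 - a ^ 2 * b ^ 2) ^ 2 + 4 * a ^ 2 * s ^ 2 * r ^ 2 * t ^ 2 := by ring
    _ = _ := by rw [hr, ht]; ring

lemma duplication_mem_doubledAbscissaRoots {a b s r t : K} (hr : r ^ 2 = s ^ 2 + a ^ 2)
    (ht : t ^ 2 = s ^ 2 + b ^ 2) (hnum : s ^ 4 - a ^ 2 * b ^ 2 ≠ 0) (h0 : 2 * s * r * t ≠ 0) :
    (s ^ 4 - a ^ 2 * b ^ 2) / (2 * s * r * t) ∈ doubledAbscissaRoots a b := by
  refine ⟨div_ne_zero hnum h0, isSquare_duplication_sq_add_sq hr ht h0, ?_⟩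
  rw [mul_right_comm (2 * s)] at h0 ⊢
  rw [mul_comm (a ^ 2)]
  exact isSquare_duplication_sq_add_sq ht hr h0

lemma mul_div_mem_doubledAbscissaRoots {u v w α φ b c M : K} (hu : u ≠ 0) (hw : w ≠ 0) (hb : b ≠ 0)
    (hc : c ≠ 0) (huvw : u ^ 2 + v ^ 2 = w ^ 2) (hratio : α * v = φ * u)
    (hbc : b ^ 2 + c ^ 2 = M * φ ^ 2) (hαb : IsSquare (M * α ^ 2 + b ^ 2))
    (hαc : IsSquare (M * α ^ 2 + c ^ 2)) :
    u * w * c / b ∈ doubledAbscissaRoots (u ^ 2) (w ^ 2) := by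
  obtain ⟨d, hd⟩ := hαb
  obtain ⟨e, he⟩ := hαc
  have hb' := sq_mul_mul_sq_add_sq huvw hratio hbc
  have hc' := sq_mul_mul_sq_add_sq huvw hratio ((add_comm _ _).trans hbc)
  refine ⟨div_ne_zero (mul_ne_zero (mul_ne_zero hu hw) hc) hb,
    ⟨u * v * e / b, ?_⟩, ⟨w * v * d / b, ?_⟩⟩
  · rw [he] at hc'
    field_simp
    linear_combination -hc'
  · rw [hd] at hb'
    field_simp
    linear_combination -hb'

end Field

lemma ne_zero_of_padicNorm_pos {p : ℕ} {x : ℚ} (hx : 0 < padicNorm p x) : x ≠ 0 := by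
  rintro rfl
  simp at hx

lemma padicNorm_pow {p : ℕ} [Fact p.Prime] (x : ℚ) (n : ℕ) :
    padicNorm p (x ^ n) = padicNorm p x ^ n :=
  IsAbsoluteValue.abv_pow (padicNorm p) x n

lemma padicNorm_two_intCast_eq_one_iff {z : ℤ} : padicNorm 2 z = 1 ↔ Odd z := by
  rw [padicNorm.int_eq_one_iff, Nat.cast_two, Int.two_dvd_ne_zero, Int.odd_iff]

lemma odd_num_and_odd_den_of_padicNorm_eq_one {x : ℚ} (hx : padicNorm 2 x = 1) :
    Odd x.num ∧ Odd (x.den : ℤ) := by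
  have hnorm : padicNorm 2 x.num = padicNorm 2 (x.den : ℤ) := by
    rw [← Rat.mul_den_eq_num x, padicNorm.mul, hx, one_mul, Int.cast_natCast]
  have hiff : Odd x.num ↔ Odd (x.den : ℤ) := by
    rw [← padicNorm_two_intCast_eq_one_iff, ← padicNorm_two_intCast_eq_one_iff, hnorm]
  have hnot : ¬(Even x.num ∧ Even (x.den : ℤ)) := fun ⟨hm, hn⟩ =>
    Int.prime_two.not_isUnit
      ((Rat.isCoprime_num_den x).isUnit_of_dvd' hm.two_dvd hn.two_dvd)
  rw [← Int.not_odd_iff_even, ← Int.not_odd_iff_even] at hnot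
  tauto

lemma not_isSquare_sq_add_sq_of_odd {m n : ℤ} (hm : Odd m) (hn : Odd n) :
    ¬IsSquare (m ^ 2 + n ^ 2) := by
  rintro ⟨k, hk⟩
  have hm4 := Int.sq_mod_four_eq_one_of_odd hm
  have hn4 := Int.sq_mod_four_eq_one_of_odd hn
  have hk4 := Int.sq_ne_two_mod_four k
  omega

lemma not_isSquare_sq_add_one {x : ℚ} (hx : padicNorm 2 x = 1) : ¬IsSquare (x ^ 2 + 1) := by
  obtain ⟨hnum, hden⟩ := odd_num_and_odd_den_of_padicNorm_eq_one hx
  intro h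
  refine not_isSquare_sq_add_sq_of_odd hnum hden (Rat.isSquare_intCast_iff.1 ?_)
  have hclear : ((x.num ^ 2 + (x.den : ℤ) ^ 2 : ℤ) : ℚ) = (x ^ 2 + 1) * (x.den : ℚ) ^ 2 := by
    push_cast
    rw [← Rat.mul_den_eq_num x]
    ring
  exact hclear ▸ h.mul (IsSquare.sq _)

lemma padicNorm_ne_one_of_isSquare_sq_add_sq {a s : ℚ} (ha : padicNorm 2 a = 1)
    (h : IsSquare (s ^ 2 + a ^ 2)) : padicNorm 2 s ≠ 1 := by
  intro hs
  have ha0 : a ≠ 0 := ne_zero_of_padicNorm_pos (ha ▸ one_pos)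
  have hsa : padicNorm 2 (s / a) = 1 := by rw [padicNorm.div, hs, ha, div_one]
  apply not_isSquare_sq_add_one hsa
  rw [div_pow, div_add_one (pow_ne_zero 2 ha0)]
  exact h.div (IsSquare.sq a)

lemma padicNorm_pow_add_of_ne_one {p : ℕ} [Fact p.Prime] {s x : ℚ} (hs : padicNorm p s ≠ 1)
    (hx : padicNorm p x = 1) {n : ℕ} (hn : n ≠ 0) :
    padicNorm p (s ^ n + x) = max (padicNorm p s) 1 ^ n := by
  have hs' : padicNorm p s ^ n ≠ 1 := by
    rwa [Ne, pow_eq_one_iff_of_nonneg (padicNorm.nonneg s) hn]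
  rw [padicNorm.add_eq_max_of_ne (by rwa [padicNorm_pow, hx]), padicNorm_pow, hx]
  simpa only [one_pow] using ((pow_left_monotoneOn (n := n)).map_max
    (Set.mem_ofPred.2 (padicNorm.nonneg s)) (Set.mem_ofPred.2 zero_le_one)).symm

lemma padicNorm_of_sq_eq_sq_add_sq {p : ℕ} [Fact p.Prime] {a s r : ℚ} (hs : padicNorm p s ≠ 1)
    (ha : padicNorm p a = 1) (hr : r ^ 2 = s ^ 2 + a ^ 2) :
    padicNorm p r = max (padicNorm p s) 1 := by
  have ha2 : padicNorm p (a ^ 2) = 1 := by rw [padicNorm_pow, ha, one_pow]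
  rw [← sq_eq_sq₀ (padicNorm.nonneg r) (by positivity), ← padicNorm_pow, hr,
    padicNorm_pow_add_of_ne_one hs ha2 two_ne_zero]

lemma exists_padicNorm_lt_of_mem_doubledAbscissaRoots {a b s : ℚ} (ha : padicNorm 2 a = 1)
    (hb : padicNorm 2 b = 1) (hs : s ∈ doubledAbscissaRoots a b) :
    ∃ s' ∈ doubledAbscissaRoots a b, padicNorm 2 s < padicNorm 2 s' := by
  obtain ⟨hs0, hsa, hsb⟩ := hs
  have hs1 := padicNorm_ne_one_of_isSquare_sq_add_sq ha hsa
  obtain ⟨r, hr⟩ := hsa.exists_sq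
  obtain ⟨t, ht⟩ := hsb.exists_sq
  set σ := padicNorm 2 s
  set μ := max σ 1
  have hσ0 : 0 < σ := (padicNorm.nonneg s).lt_of_ne' (padicNorm.nonzero hs0)
  have hμ0 : 0 < μ := lt_max_of_lt_left hσ0
  have hr' : padicNorm 2 r = μ := padicNorm_of_sq_eq_sq_add_sq hs1 ha hr.symm
  have ht' : padicNorm 2 t = μ := padicNorm_of_sq_eq_sq_add_sq hs1 hb ht.symm
  have hab : padicNorm 2 (-(a ^ 2 * b ^ 2)) = 1 := by
    rw [padicNorm.neg, padicNorm.mul, padicNorm_pow, padicNorm_pow, ha, hb, one_pow, one_mul]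
  have hnum : padicNorm 2 (s ^ 4 - a ^ 2 * b ^ 2) = μ ^ 4 := by
    rw [sub_eq_add_neg, padicNorm_pow_add_of_ne_one hs1 hab four_ne_zero]
  have hden : padicNorm 2 (2 * s * r * t) = σ * μ ^ 2 / 2 := by
    have htwo : padicNorm 2 2 = 2⁻¹ := padicNorm.padicNorm_p_of_prime (p := 2)
    rw [padicNorm.mul, padicNorm.mul, padicNorm.mul, htwo, hr', ht']
    ring
  refine ⟨_, duplication_mem_doubledAbscissaRoots hr.symm ht.symm
    (ne_zero_of_padicNorm_pos (by rw [hnum]; positivity))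
    (ne_zero_of_padicNorm_pos (by rw [hden]; positivity)), ?_⟩
  calc σ < 2 * σ := by linarith
    _ = 2 * σ ^ 2 / σ := by field_simp
    _ ≤ 2 * μ ^ 2 / σ := by gcongr; exact le_max_left _ _
    _ = μ ^ 4 / (σ * μ ^ 2 / 2) := by field_simp
    _ = padicNorm 2 ((s ^ 4 - a ^ 2 * b ^ 2) / (2 * s * r * t)) := by
      rw [padicNorm.div, hnum, hden]

lemma doubledAbscissaRoots_eq_empty_of_finite {a b : ℚ} (ha : padicNorm 2 a = 1)
    (hb : padicNorm 2 b = 1) (hfin : (doubledAbscissaRoots a b).Finite) :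
    doubledAbscissaRoots a b = ∅ := by
  by_contra hne
  obtain ⟨s, hs, hmax⟩ :=
    Set.exists_max_image _ (padicNorm 2) hfin (Set.nonempty_iff_ne_empty.2 hne)
  obtain ⟨s', hs', hlt⟩ := exists_padicNorm_lt_of_mem_doubledAbscissaRoots ha hb hs
  exact (hmax s' hs').not_gt hlt

lemma finite_doubledAbscissaRoots_of_finite_EI1 {p q : ℤ} (h : (EI1 p q).Finite) :
    (doubledAbscissaRoots (((p : ℚ) ^ 2 - (q : ℚ) ^ 2) ^ 2)
      (((p : ℚ) ^ 2 + (q : ℚ) ^ 2) ^ 2)).Finite := by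
  refine finite_of_finite_image_pow two_pos
    ((h.image fun P => P.1 - ((p : ℚ) ^ 2 - (q : ℚ) ^ 2) ^ 4).subset ?_)
  rintro _ ⟨s, ⟨-, ⟨r, hr⟩, ⟨t, ht⟩⟩, rfl⟩
  refine ⟨(s ^ 2 + ((p : ℚ) ^ 2 - (q : ℚ) ^ 2) ^ 4, s * r * t), ?_, add_sub_cancel_right _ _⟩
  calc (s * r * t) ^ 2 = s ^ 2 * (r * r) * (t * t) := by ring
    _ = _ := by rw [← hr, ← ht]; ring

theorem no_IBPC_with_internal_ratio_general {p q : ℤ} (hpar : p % 2 ≠ q % 2)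
    (hfin : (EI1 p q).Finite) :
    ¬ ∃ (α φ b c M : ℚ), b ≠ 0 ∧ c ≠ 0 ∧ α * (2 * p * q) = φ * (p ^ 2 - q ^ 2) ∧
      b ^ 2 + c ^ 2 = M * φ ^ 2 ∧
      IsSquare (M * α ^ 2 + b ^ 2) ∧ IsSquare (M * α ^ 2 + c ^ 2) := by
  rintro ⟨α, φ, b, c, M, hb, hc, hratio, hbc, hαb, hαc⟩
  have hpq : Odd p ↔ Even q := by rw [Int.odd_iff, Int.even_iff]; omega
  have hu : Odd (p ^ 2 - q ^ 2) := by simpa [parity_simps] using hpq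
  have hw : Odd (p ^ 2 + q ^ 2) := by simpa [parity_simps] using hpq
  have hu1 : padicNorm 2 ((p : ℚ) ^ 2 - (q : ℚ) ^ 2) = 1 := by
    exact_mod_cast padicNorm_two_intCast_eq_one_iff.2 hu
  have hw1 : padicNorm 2 ((p : ℚ) ^ 2 + (q : ℚ) ^ 2) = 1 := by
    exact_mod_cast padicNorm_two_intCast_eq_one_iff.2 hw
  have hempty := doubledAbscissaRoots_eq_empty_of_finite
    (by rw [padicNorm_pow, hu1, one_pow]) (by rw [padicNorm_pow, hw1, one_pow])
    (finite_doubledAbscissaRoots_of_finite_EI1 hfin)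
  exact hempty.le (mul_div_mem_doubledAbscissaRoots (ne_zero_of_padicNorm_pos (hu1 ▸ one_pos))
    (ne_zero_of_padicNorm_pos (hw1 ▸ one_pos)) hb hc (by ring) hratio hbc hαb hαc)

/-- If both EI1 and EI2 have only finitely many rational points, then there is no I-BPC
(and, in the case `M = 1`, no perfect cuboid) whose Pythagorean internal rectangle has
aspect ratio `(p²−q²) : 2pq`. -/
theorem no_IBPC_with_internal_ratio
    (p q : ℤ) (hq : 0 < q) (hqp : q < p) (hcop : IsCoprime p q) (hpar : p % 2 ≠ q % 2)
    (h1 : (EI1 p q).Finite) (h2 : (EI2 p q).Finite) :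
    ¬ ∃ (α φ b c M : ℤ), 0 < α ∧ 0 < φ ∧ 0 < b ∧ 0 < c ∧ 0 < M ∧ Squarefree M ∧
      α * (2 * p * q) = φ * (p ^ 2 - q ^ 2) ∧ IsSquare (α ^ 2 + φ ^ 2) ∧
      b ^ 2 + c ^ 2 = M * φ ^ 2 ∧
      IsSquare (M * α ^ 2 + b ^ 2) ∧ IsSquare (M * α ^ 2 + c ^ 2) := by
  rintro ⟨α, φ, b, c, M, -, -, hb, hc, -, -, hratio, -, hbc, hαb, hαc⟩
  exact no_IBPC_with_internal_ratio_general hpar h1 ⟨α, φ, b, c, M, by exact_mod_cast hb.ne',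
    by exact_mod_cast hc.ne', by exact_mod_cast hratio, by exact_mod_cast hbc,
    by simpa using hαb.map (Int.castRingHom ℚ), by simpa using hαc.map (Int.castRingHom ℚ)⟩
end

section
/- Let (p,q) be admissible. If both the curve EI3: y² = x³ − 2(p⁴+q⁴)x² + (p⁴−q⁴)²x and the curve EI4: y² = x³ − ((p²+q²)²+4p²q²)x² + 4p²q²(p²+q²)²x have only finitely many rational points, then there do not exist positive integers a, b, c, d, g such that a²+b² = d², a²+b²+c² = g², b²+c² is a perfect square, and either d·2pq = c·(p²−q²) or c·2pq = d·(p²−q²). In particular no face cuboid has a Pythagorean internal rectangle with aspect ratio (p²−q²):2pq. -/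
/-!
If `a² + b² = d²`, `b² + c² = e²` and `d² + c² = g²`, then `(a², abe)` is a rational point of the
curve `Y² = X(X - d²)(X - (d² + c²))`. Proportional pairs `(d, c)` give isomorphic curves, and `EI3`
and `EI4` are the cases `(p² - q², 2pq)` and `(2pq, p² - q²)`, so it suffices to show that the
existence of such a cuboid makes the curve infinite.

For a point with abscissa `X` that is a double, `X = x²`, `X - d² = y²` and `X - (d² + c²) = z²` for
rational `x, y, z`. The square roots at the next double have pairwise sums `xy/z`, `xz/y`, `yz/x`; a
double with `z = 0` would yield a nontrivial rational solution of `x⁴ = y⁴ + z²`, and there are none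
by Fermat's descent, so the doubling never ends. For coprime integers `d` and `c` the denominator of
`x` divides that of the next `x'`. If the curve has only finitely many points, a point with maximal
denominator `w` has the same denominator as its next two doubles.

Along such a chain everything may be multiplied by `w`. The pairwise sums at the last point are
coprime, and their products are squares, so they are `±α², ±β², ±γ²`, and the numerators at the
middle point are `±αβ, ±αγ, ±βγ`. Parity forces `γ` to be even. The sums at the middle point are
squares up to sign too, which makes `α` and `β` squares up to sign; since `α² - β²` is a square,
this again contradicts Fermat. The argument replaces Mazur's theorem on rational torsion points.
-/

/-! ### Square factors of integers -/

lemma isSquare_abs_of_isCoprime_of_isSquare_mul {a b : ℤ} (hab : IsCoprime a b)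
    (h : IsSquare (a * b)) : IsSquare |a| := by
  obtain ⟨c, hc⟩ := h
  obtain ⟨r, rfl | rfl⟩ := Int.sq_of_isCoprime hab (hc.trans (sq c).symm)
  · simpa only [abs_sq] using IsSquare.sq r
  · simpa only [abs_neg, abs_sq] using IsSquare.sq r

lemma isSquare_of_isSquare_mul_right {a b : ℤ} (hb : b ≠ 0) (h : IsSquare (a * b))
    (hb' : IsSquare b) : IsSquare a := by
  rw [← Rat.isSquare_intCast_iff] at *
  have hbq : (b : ℚ) ≠ 0 := mod_cast hb
  simpa [hbq] using h.div hb'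

lemma sq_eq_pow_four_of_abs_eq_sq {a r : ℤ} (h : |a| = r ^ 2) : a ^ 2 = r ^ 4 := by
  rw [← sq_abs, h, ← pow_mul]

lemma isCoprime_of_abs_eq_sq {a b r s : ℤ} (hab : IsCoprime a b) (ha : |a| = r ^ 2)
    (hb : |b| = s ^ 2) : IsCoprime r s := by
  have hsq : IsCoprime (r ^ 2) (s ^ 2) := by rwa [← ha, ← hb, IsCoprime.abs_abs_iff]
  exact (IsCoprime.pow_iff two_pos two_pos).1 hsq

lemma odd_of_isSquare_sq_sub_sq {x y : ℤ} (hy : Odd y) (h : IsSquare (x ^ 2 - y ^ 2)) :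
    Odd x := by
  have neg_one_not_square : ∀ k l n : ZMod 4, (2 * k) ^ 2 - (2 * l + 1) ^ 2 ≠ n * n := by decide
  by_contra hx
  obtain ⟨k, rfl⟩ := (Int.not_odd_iff_even.1 hx).two_dvd
  obtain ⟨l, rfl⟩ := hy
  obtain ⟨n, hn⟩ := h
  exact neg_one_not_square k l n (mod_cast congrArg (Int.cast : ℤ → ZMod 4) hn)

lemma isSquare_abs_add_of_isSquare_sq_sub_sq {x y : ℤ} (hxy : IsCoprime x y) (hodd : Odd (x + y))
    (h : IsSquare (x ^ 2 - y ^ 2)) : IsSquare |x + y| := by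
  have hy : IsCoprime (x + y) y := by simpa using hxy.add_mul_left_left 1
  have h2y : IsCoprime (x + y) (2 * y) := (Int.isCoprime_two_right.2 hodd).mul_right hy
  have hsub : IsCoprime (x + y) (x - y) := by
    have : x - y = (x + y) * 1 - 2 * y := by ring
    rwa [this, IsCoprime.mul_sub_left_right_iff]
  exact isSquare_abs_of_isCoprime_of_isSquare_mul hsub (by rwa [← sq_sub_sq])

/-! ### The equation `x⁴ = y⁴ + z²` -/

/-- A nontrivial primitive solution of `x⁴ = y⁴ + z²`, the object of Fermat's descent. -/
structure IsQuarticTriple (x y z : ℤ) : Prop where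
  coprime : IsCoprime x y
  y_ne : y ≠ 0
  z_ne : z ≠ 0
  pow_four_eq : x ^ 4 = y ^ 4 + z ^ 2

namespace IsQuarticTriple

variable {x y z : ℤ}

lemma x_ne (h : IsQuarticTriple x y z) : x ≠ 0 := by
  rintro rfl
  have hy : 0 < y ^ 4 := Even.pow_pos (by decide) h.y_ne
  linarith [h.pow_four_eq, sq_nonneg z]

lemma pythagoreanTriple (h : IsQuarticTriple x y z) : PythagoreanTriple (y ^ 2) z (x ^ 2) := by
  unfold PythagoreanTriple
  linear_combination -h.pow_four_eq

lemma isCoprime_sq (h : IsQuarticTriple x y z) : IsCoprime (y ^ 2) z := by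
  have hxy : IsCoprime (z ^ 2 + y ^ 2 * y ^ 2) (y ^ 2) := by
    convert h.coprime.pow (m := 4) (n := 2) using 1
    linear_combination -h.pow_four_eq
  exact ((IsCoprime.pow_left_iff two_pos).1 hxy.of_add_mul_left_left).symm

lemma exists_natAbs_lt_of_even (h : IsQuarticTriple x y z) (hz : Even z) :
    ∃ x' y' z', IsQuarticTriple x' y' z' ∧ x'.natAbs < x.natAbs := by
  have hy : Odd (y ^ 2) :=
    Int.isCoprime_two_right.1 (h.isCoprime_sq.of_isCoprime_of_dvd_right hz.two_dvd)
  obtain ⟨m, n, hyy, rfl, hxx, hmn, -, -⟩ := h.pythagoreanTriple.coprime_classification'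
    (Int.isCoprime_iff_gcd_eq_one.1 h.isCoprime_sq) (Int.odd_iff.1 hy) (sq_pos_of_ne_zero h.x_ne)
  have hn : n ≠ 0 := right_ne_zero_of_mul h.z_ne
  refine ⟨m, n, x * y, ⟨Int.isCoprime_iff_gcd_eq_one.2 hmn, hn, mul_ne_zero h.x_ne h.y_ne, ?_⟩, ?_⟩
  · linear_combination -x ^ 2 * hyy - (m ^ 2 - n ^ 2) * hxx
  · rw [Int.natAbs_lt_iff_sq_lt, hxx]
    exact lt_add_of_pos_right _ (sq_pos_of_ne_zero hn)

end IsQuarticTriple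

lemma exists_sq_eq_four_mul_pow_four_add_pow_four {m n x y : ℤ} (hmn : IsCoprime m n)
    (hm : Even m) (hy : y ≠ 0) (hyy : y ^ 2 = 2 * m * n) (hxx : x ^ 2 = m ^ 2 + n ^ 2) :
    ∃ M K, M ≠ 0 ∧ IsCoprime K M ∧ Odd K ∧ x ^ 2 = 4 * M ^ 4 + K ^ 4 := by
  have hn : Odd n := Int.isCoprime_two_left.1 (hmn.of_isCoprime_of_dvd_left hm.two_dvd)
  obtain ⟨k, rfl⟩ := hm.two_dvd
  have hkn : IsCoprime k n := hmn.of_mul_left_right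
  have hy2 : 2 ∣ y := Int.prime_two.dvd_of_dvd_pow (n := 2) ⟨2 * k * n, by linear_combination hyy⟩
  obtain ⟨l, rfl⟩ := hy2
  have hsq : k * n = l * l := by linarith
  have hk0 : k ≠ 0 := by rintro rfl; simp_all
  obtain ⟨M, hM⟩ := (isSquare_abs_of_isCoprime_of_isSquare_mul hkn ⟨l, hsq⟩).exists_sq
  obtain ⟨K, hK⟩ :=
    (isSquare_abs_of_isCoprime_of_isSquare_mul hkn.symm ⟨l, (mul_comm n k).trans hsq⟩).exists_sq
  refine ⟨M, K, ?_, (isCoprime_of_abs_eq_sq hkn hM hK).symm, ?_, ?_⟩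
  · rintro rfl; simp_all
  · rwa [← odd_abs, hK, Int.odd_pow' two_ne_zero] at hn
  · rw [hxx, mul_pow, sq_eq_pow_four_of_abs_eq_sq hM, sq_eq_pow_four_of_abs_eq_sq hK]; ring

lemma exists_isQuarticTriple_of_sq_eq {x M K : ℤ} (hM : M ≠ 0)
    (hKM : IsCoprime K M) (hK : Odd K) (h : x ^ 2 = 4 * M ^ 4 + K ^ 4) :
    ∃ R S, IsQuarticTriple R S K ∧ R.natAbs < x.natAbs := by
  have hK0 : K ≠ 0 := by rintro rfl; simp at hK
  have htriple : PythagoreanTriple (K ^ 2) (2 * M ^ 2) |x| := by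
    unfold PythagoreanTriple
    rw [abs_mul_abs_self]
    linear_combination -h
  have hcop : IsCoprime (K ^ 2) (2 * M ^ 2) :=
    (Int.isCoprime_two_right.2 hK.pow).mul_right hKM.pow
  have hx : x ≠ 0 := by
    rintro rfl
    have : 0 < K ^ 4 := Even.pow_pos (by decide) hK0
    have : 0 ≤ M ^ 4 := by positivity
    linarith
  obtain ⟨r, s, hKK, hMM, hxx, hrs, -, -⟩ := htriple.coprime_classification'
    (Int.isCoprime_iff_gcd_eq_one.1 hcop) (Int.odd_iff.1 hK.pow) (abs_pos.2 hx)
  rw [← Int.isCoprime_iff_gcd_eq_one] at hrs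
  have hsq : r * s = M * M := by linarith
  obtain ⟨R, hR⟩ := (isSquare_abs_of_isCoprime_of_isSquare_mul hrs ⟨M, hsq⟩).exists_sq
  obtain ⟨S, hS⟩ :=
    (isSquare_abs_of_isCoprime_of_isSquare_mul hrs.symm ⟨M, (mul_comm s r).trans hsq⟩).exists_sq
  have hS0 : S ≠ 0 := by rintro rfl; simp_all
  refine ⟨R, S, ⟨isCoprime_of_abs_eq_sq hrs hR hS, hS0, hK0, ?_⟩, ?_⟩
  · rw [← sq_eq_pow_four_of_abs_eq_sq hR, ← sq_eq_pow_four_of_abs_eq_sq hS]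
    linarith
  · have : 0 < S ^ 4 := Even.pow_pos (by decide) hS0
    zify
    calc |R| ≤ |R| ^ 2 := Int.le_self_sq _
      _ = |r| := by rw [sq_abs, hR]
      _ ≤ |r| ^ 2 := Int.le_self_sq _
      _ = r ^ 2 := sq_abs r
      _ < r ^ 2 + s ^ 2 := by rw [sq_eq_pow_four_of_abs_eq_sq hS]; linarith
      _ = |x| := hxx.symm

namespace IsQuarticTriple

variable {x y z : ℤ}

lemma exists_natAbs_lt_of_odd (h : IsQuarticTriple x y z) (hz : Odd z) :
    ∃ x' y' z', IsQuarticTriple x' y' z' ∧ x'.natAbs < x.natAbs := by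
  obtain ⟨m, n, -, hyy, hxx, hmn, hpar, -⟩ := h.pythagoreanTriple.symm.coprime_classification'
    (Int.isCoprime_iff_gcd_eq_one.1 h.isCoprime_sq.symm) (Int.odd_iff.1 hz)
    (sq_pos_of_ne_zero h.x_ne)
  rw [← Int.isCoprime_iff_gcd_eq_one] at hmn
  obtain ⟨M, K, hM, hKM, hK, hx⟩ :
      ∃ M K, M ≠ 0 ∧ IsCoprime K M ∧ Odd K ∧ x ^ 2 = 4 * M ^ 4 + K ^ 4 := by
    rcases hpar with ⟨hm, -⟩ | ⟨-, hn⟩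
    · exact exists_sq_eq_four_mul_pow_four_add_pow_four hmn (Int.even_iff.2 hm) h.y_ne hyy hxx
    · exact exists_sq_eq_four_mul_pow_four_add_pow_four hmn.symm (Int.even_iff.2 hn) h.y_ne
        (by rw [hyy]; ring) (by rw [hxx]; ring)
  obtain ⟨R, S, hRS, hlt⟩ := exists_isQuarticTriple_of_sq_eq hM hKM hK hx
  exact ⟨R, S, K, hRS, hlt⟩

end IsQuarticTriple

lemma not_isQuarticTriple (x y z : ℤ) : ¬ IsQuarticTriple x y z := by
  intro h
  induction hN : x.natAbs using Nat.strong_induction_on generalizing x y z with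
  | _ N ih =>
    obtain ⟨x', y', z', h', hlt⟩ := (Int.even_or_odd z).elim h.exists_natAbs_lt_of_even
      h.exists_natAbs_lt_of_odd
    exact ih _ (hN ▸ hlt) x' y' z' h' rfl

theorem pow_four_ne_pow_four_add_sq {x y z : ℚ} (hy : y ≠ 0) (hz : z ≠ 0) :
    x ^ 4 ≠ y ^ 4 + z ^ 2 := by
  intro h
  obtain ⟨r, rfl⟩ : ∃ r, r * y = x := ⟨x / y, div_mul_cancel₀ x hy⟩
  have hr : r ^ 4 - 1 = (z / y ^ 2) ^ 2 := by
    field_simp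
    linear_combination h
  have hnum : (r.num : ℚ) ^ 4 - (r.den : ℚ) ^ 4 = (z / y ^ 2 * r.den ^ 2) ^ 2 := by
    rw [← Rat.mul_den_eq_num]
    linear_combination (r.den : ℚ) ^ 4 * hr
  obtain ⟨n, hn⟩ : IsSquare (r.num ^ 4 - (r.den : ℤ) ^ 4) := by
    rw [← Rat.isSquare_intCast_iff]
    push_cast
    exact hnum ▸ IsSquare.sq _
  refine not_isQuarticTriple r.num r.den n
    ⟨Rat.isCoprime_num_den r, mod_cast r.den_nz, ?_, by linarith⟩
  rintro rfl
  have hzero : (z / y ^ 2 * r.den ^ 2) ^ 2 = 0 := by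
    rw [← hnum]
    exact_mod_cast hn
  simp_all

/-! ### Halving on the curve `Y² = X(X - d²)(X - (d² + c²))` -/

/-- The elliptic curve `Y² = X(X - d²)(X - (d² + c²))`, as a set of rational points. -/
def cuboidCurve (d c : ℚ) : Set (ℚ × ℚ) :=
  {P | P.2 ^ 2 = P.1 * (P.1 - d ^ 2) * (P.1 - (d ^ 2 + c ^ 2))}

/-- `x, y, z` are square roots of `X`, `X - d²`, `X - (d² + c²)` for `X = x²`, as happens for the
abscissa `X` of every double on the curve `Y² = X(X - d²)(X - (d² + c²))`. -/
structure IsSqrtTriple {R : Type*} [CommRing R] (d c x y z : R) : Prop where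
  sq_sub_sq : x ^ 2 - y ^ 2 = d ^ 2
  sq_sub_sq' : y ^ 2 - z ^ 2 = c ^ 2

/-- The halving formula: the point with square roots `x', y', z'` (in the sense of `IsSqrtTriple`)
has a half with square roots `x, y, z`. -/
structure IsHalf {R : Type*} [CommRing R] (x y z x' y' z' : R) : Prop where
  sq_x : x ^ 2 = (x' + y') * (x' + z')
  sq_y : y ^ 2 = (x' + y') * (y' + z')
  sq_z : z ^ 2 = (x' + z') * (y' + z')

section Halving

variable {d c x y z : ℚ}

lemma exists_isSqrtTriple_of_sums {P Q R : ℚ} (hd : d ≠ 0) (hc : c ≠ 0) (hP : P * (Q - R) = d ^ 2)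
    (hR : R * (P - Q) = c ^ 2) (hQR : IsSquare |Q * R|) :
    ∃ x y z, z ≠ 0 ∧ IsSqrtTriple d c x y z ∧ x + y = P ∧ x + z = Q ∧ y + z = R := by
  refine ⟨(P + Q - R) / 2, (P + R - Q) / 2, (Q + R - P) / 2, ?_,
    ⟨by linear_combination hP, by linear_combination hR⟩, by ring, by ring, by ring⟩
  intro hz
  obtain rfl : P = Q + R := by linarith
  obtain ⟨v, hv⟩ := hQR
  have hQ : Q ^ 2 = d ^ 2 + R ^ 2 := by linear_combination hP
  have hR0 : R ≠ 0 := by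
    rintro rfl
    exact hc (by simpa using hR.symm)
  have hQ0 : Q ≠ 0 := by
    rw [← sq_pos_iff, hQ]
    positivity
  have hv4 : v ^ 4 = (Q * R) ^ 2 := by rw [← sq_abs, hv]; ring
  refine pow_four_ne_pow_four_add_sq (x := Q) (y := v) (z := d * Q) ?_ (mul_ne_zero hd hQ0) ?_
  · rintro rfl
    simp_all
  · rw [hv4]
    linear_combination Q ^ 2 * hQ

namespace IsSqrtTriple

lemma y_ne (h : IsSqrtTriple d c x y z) (hz : z ≠ 0) : y ≠ 0 := by
  rintro rfl
  have := sq_pos_of_ne_zero hz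
  linarith [h.sq_sub_sq', sq_nonneg c]

lemma x_ne (h : IsSqrtTriple d c x y z) (hz : z ≠ 0) : x ≠ 0 := by
  rintro rfl
  have := sq_pos_of_ne_zero (h.y_ne hz)
  linarith [h.sq_sub_sq, sq_nonneg d]

lemma exists_isHalf (hd : d ≠ 0) (hc : c ≠ 0) (h : IsSqrtTriple d c x y z) (hz : z ≠ 0) :
    ∃ x' y' z', z' ≠ 0 ∧ IsSqrtTriple d c x' y' z' ∧ IsHalf x y z x' y' z' := by
  have hy := h.y_ne hz
  have hx := h.x_ne hz
  obtain ⟨x', y', z', hz', hroots, hP, hQ, hR⟩ :=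
    exists_isSqrtTriple_of_sums (P := x * y / z) (Q := x * z / y) (R := y * z / x) hd hc
      (by rw [← h.sq_sub_sq]; field_simp) (by rw [← h.sq_sub_sq']; field_simp)
      ⟨|z|, by rw [← abs_mul]; congr 1; field_simp⟩
  refine ⟨x', y', z', hz', hroots, ?_, ?_, ?_⟩ <;> simp only [hP, hQ, hR] <;> field_simp

end IsSqrtTriple

lemma exists_isSqrtTriple_of_cuboid {a b c d e : ℚ} (ha : a ≠ 0) (hb : b ≠ 0) (hc : c ≠ 0)
    (hd : d ≠ 0) (he : e ≠ 0) (habd : a ^ 2 + b ^ 2 = d ^ 2) (hbce : b ^ 2 + c ^ 2 = e ^ 2) :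
    ∃ x y z, z ≠ 0 ∧ IsSqrtTriple d c x y z := by
  obtain ⟨x, y, z, hz, hroots, -⟩ :=
    exists_isSqrtTriple_of_sums (P := a * b / e) (Q := a * e / b) (R := -(b * e / a)) hd hc
      (by rw [← habd]; field_simp; ring)
      (by field_simp; linear_combination -hbce)
      ⟨|e|, by rw [← abs_mul, ← abs_neg]; congr 1; field_simp⟩
  exact ⟨x, y, z, hz, hroots⟩

end Halving

/-! ### Denominators -/

section Denominators

lemma den_eq_of_sq_sub_sq_eq_intCast {x y : ℚ} {n : ℤ} (h : x ^ 2 - y ^ 2 = n) :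
    y.den = x.den := by
  have hden : (y ^ 2).den = (x ^ 2).den := by
    rw [← Rat.sub_intCast_den (x ^ 2) n, ← h, sub_sub_cancel]
  rw [Rat.den_pow, Rat.den_pow] at hden
  exact Nat.pow_left_injective two_ne_zero hden

variable {D C : ℤ} {x y z x' y' z' : ℚ}

namespace IsSqrtTriple

lemma den_y (h : IsSqrtTriple (D : ℚ) C x y z) : y.den = x.den :=
  den_eq_of_sq_sub_sq_eq_intCast (n := D ^ 2) (mod_cast h.sq_sub_sq)

lemma den_z (h : IsSqrtTriple (D : ℚ) C x y z) : z.den = x.den :=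
  (den_eq_of_sq_sub_sq_eq_intCast (n := C ^ 2) (mod_cast h.sq_sub_sq')).trans h.den_y

lemma num (h : IsSqrtTriple (D : ℚ) C x y z) :
    IsSqrtTriple (D * x.den) (C * x.den) x.num y.num z.num := by
  have hx := Rat.mul_den_eq_num x
  have hy := Rat.mul_den_eq_num y
  have hz := Rat.mul_den_eq_num z
  rw [h.den_y] at hy
  rw [h.den_z] at hz
  constructor <;> qify <;> rw [← hy]
  · rw [← hx]; linear_combination (x.den : ℚ) ^ 2 * h.sq_sub_sq
  · rw [← hz]; linear_combination (x.den : ℚ) ^ 2 * h.sq_sub_sq'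

lemma den_dvd_of_isHalf (h' : IsSqrtTriple (D : ℚ) C x' y' z') (h : IsHalf x y z x' y' z') :
    x.den ∣ x'.den := by
  have hadd {r s : ℚ} (hr : r.den = x'.den) (hs : s.den = x'.den) : (r + s).den ∣ x'.den := by
    simpa [hr, hs] using Rat.add_den_dvd_lcm r s
  rw [← Nat.pow_dvd_pow_iff two_ne_zero, ← Rat.den_pow, h.sq_x]
  calc ((x' + y') * (x' + z')).den ∣ (x' + y').den * (x' + z').den := Rat.mul_den_dvd _ _
    _ ∣ x'.den * x'.den := mul_dvd_mul (hadd rfl h'.den_y) (hadd rfl h'.den_z)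
    _ = x'.den ^ 2 := (sq _).symm

end IsSqrtTriple

lemma IsHalf.num (h : IsHalf x y z x' y' z') (hxyz : IsSqrtTriple (D : ℚ) C x y z)
    (hxyz' : IsSqrtTriple (D : ℚ) C x' y' z') (hden : x'.den = x.den) :
    IsHalf x.num y.num z.num x'.num y'.num z'.num := by
  have hnum {r : ℚ} (hr : r.den = x.den) : (r.num : ℚ) = r * x.den := by
    rw [← hr, Rat.mul_den_eq_num]
  have hx := hnum rfl
  have hy := hnum hxyz.den_y
  have hz := hnum hxyz.den_z
  have hx' := hnum hden
  have hy' := hnum (hxyz'.den_y.trans hden)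
  have hz' := hnum (hxyz'.den_z.trans hden)
  constructor <;> qify <;> simp only [hx, hy, hz, hx', hy', hz']
  · linear_combination (x.den : ℚ) ^ 2 * h.sq_x
  · linear_combination (x.den : ℚ) ^ 2 * h.sq_y
  · linear_combination (x.den : ℚ) ^ 2 * h.sq_z

end Denominators

/-! ### Three consecutive doubles with the same denominator -/

section Chain

lemma isCoprime_of_sq_eq_mul_of_common_dvd {a b r w D C : ℤ} (hrw : IsCoprime r w)
    (hDC : IsCoprime D C) (hab : r ^ 2 = a * b)
    (hdvd : ∀ k, k ∣ a → k ∣ b → k ∣ (D * w) ^ 2 ∧ k ∣ (C * w) ^ 2) : IsCoprime a b := by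
  rw [← isRelPrime_iff_isCoprime]
  intro k hka hkb
  have hkw : IsCoprime k (w ^ 2) :=
    (hrw.pow (m := 2)).of_isCoprime_of_dvd_left ((hka.mul_right b).trans hab.symm.dvd)
  obtain ⟨hD, hC⟩ := hdvd k hka hkb
  rw [mul_pow] at hD hC
  exact hDC.pow.isUnit_of_dvd' (hkw.dvd_of_dvd_mul_right hD) (hkw.dvd_of_dvd_mul_right hC)

lemma isSquare_abs_of_sq_eq_mul_sq {x y α β γ : ℤ} (hα : α ≠ 0) (hβγ : IsCoprime β γ)
    (hodd : Odd (β + γ)) (hx : x ^ 2 = (α * β) ^ 2) (hy : y ^ 2 = (α * γ) ^ 2)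
    (hxy : IsSquare (x ^ 2 - y ^ 2)) (hadd : IsSquare |x + y|) : IsSquare |α| := by
  obtain ⟨b, hb, rfl⟩ : ∃ b, b ^ 2 = β ^ 2 ∧ x = α * b := by
    rcases sq_eq_sq_iff_eq_or_eq_neg.1 hx with h | h
    · exact ⟨β, rfl, h⟩
    · exact ⟨-β, neg_sq β, by rw [h, mul_neg]⟩
  obtain ⟨c, hc, rfl⟩ : ∃ c, c ^ 2 = γ ^ 2 ∧ y = α * c := by
    rcases sq_eq_sq_iff_eq_or_eq_neg.1 hy with h | h
    · exact ⟨γ, rfl, h⟩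
    · exact ⟨-γ, neg_sq γ, by rw [h, mul_neg]⟩
  have hbc : IsCoprime b c := by
    rwa [← IsCoprime.pow_iff two_pos two_pos, hb, hc, IsCoprime.pow_iff two_pos two_pos]
  have hodd' : Odd (b + c) := by
    have hsq (k l : ℤ) : Odd (k ^ 2 + l ^ 2) ↔ Odd (k + l) := by
      simp [Int.odd_add, Int.odd_pow, Int.even_pow]
    rwa [← hsq, hb, hc, hsq]
  have hsub : IsSquare (b ^ 2 - c ^ 2) :=
    isSquare_of_isSquare_mul_right (pow_ne_zero 2 hα) (by convert hxy using 1; ring)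
      (IsSquare.sq α)
  refine isSquare_of_isSquare_mul_right (b := |b + c|) ?_ ?_
    (isSquare_abs_add_of_isSquare_sq_sub_sq hbc hodd' hsub)
  · intro h
    simp [abs_eq_zero.1 h] at hodd'
  · rwa [← abs_mul, mul_add]

lemma odd_odd_even_of_isSquare_sq_sub_sq {α β γ : ℤ} (hαγ : IsCoprime α γ) (hβγ : IsCoprime β γ)
    (heven : Even (α ^ 2 + β ^ 2 + γ ^ 2)) (hαβ : IsSquare (α ^ 2 - β ^ 2))
    (hβγ' : IsSquare (β ^ 2 - γ ^ 2)) : Odd α ∧ Odd β ∧ Even γ := by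
  have hγ : Even γ := by
    by_contra hγ
    have hγ := Int.not_even_iff_odd.1 hγ
    have hβ := odd_of_isSquare_sq_sub_sq hγ hβγ'
    have hα := odd_of_isSquare_sq_sub_sq hβ hαβ
    exact Int.not_even_iff_odd.2 ((hα.pow.add_odd hβ.pow).add_odd hγ.pow) heven
  have hodd {δ : ℤ} (hδ : IsCoprime δ γ) : Odd δ :=
    Int.isCoprime_two_right.1 (hδ.of_isCoprime_of_dvd_right hγ.two_dvd)
  exact ⟨hodd hαγ, hodd hβγ, hγ⟩

lemma even_sq_add_sq_add_sq {x y z α β γ : ℤ} (hα : |x + y| = α ^ 2)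
    (hβ : |x + z| = β ^ 2) (hγ : |y + z| = γ ^ 2) : Even (α ^ 2 + β ^ 2 + γ ^ 2) := by
  rw [← hα, ← hβ, ← hγ]
  simp only [Int.even_add, even_abs]
  tauto

variable {D C G w x₀ y₀ z₀ x y z x' y' z' : ℤ}

lemma IsHalf.isCoprime_add_xy_xz (hDC : IsCoprime D C)
    (hroots : IsSqrtTriple (D * w) (C * w) x' y' z')
    (h : IsHalf x y z x' y' z') (hx : IsCoprime x w) : IsCoprime (x' + y') (x' + z') := by
  refine isCoprime_of_sq_eq_mul_of_common_dvd hx hDC h.sq_x fun k hP hQ ↦ ?_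
  rw [← hroots.sq_sub_sq, ← hroots.sq_sub_sq', sq_sub_sq, sq_sub_sq]
  exact ⟨hP.mul_right _, dvd_mul_of_dvd_right (by convert hP.sub hQ using 1; ring) _⟩

lemma IsHalf.isCoprime_add_xy_yz (hDC : IsCoprime D C)
    (hroots : IsSqrtTriple (D * w) (C * w) x' y' z')
    (h : IsHalf x y z x' y' z') (hy : IsCoprime y w) : IsCoprime (x' + y') (y' + z') := by
  refine isCoprime_of_sq_eq_mul_of_common_dvd hy hDC h.sq_y fun k hP hR ↦ ?_
  rw [← hroots.sq_sub_sq, ← hroots.sq_sub_sq', sq_sub_sq, sq_sub_sq]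
  exact ⟨hP.mul_right _, hR.mul_right _⟩

lemma IsHalf.isCoprime_add_xz_yz (hDC : IsCoprime D C)
    (hroots : IsSqrtTriple (D * w) (C * w) x' y' z')
    (h : IsHalf x y z x' y' z') (hz : IsCoprime z w) : IsCoprime (x' + z') (y' + z') := by
  refine isCoprime_of_sq_eq_mul_of_common_dvd hz hDC h.sq_z fun k hQ hR ↦ ?_
  rw [← hroots.sq_sub_sq, ← hroots.sq_sub_sq', sq_sub_sq, sq_sub_sq]
  exact ⟨dvd_mul_of_dvd_right (by convert hQ.sub hR using 1; ring) _, hR.mul_right _⟩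

lemma IsHalf.sq_eq {α β γ : ℤ} (h : IsHalf x y z x' y' z') (hα : |x' + y'| = α ^ 2)
    (hβ : |x' + z'| = β ^ 2) (hγ : |y' + z'| = γ ^ 2) :
    x ^ 2 = (α * β) ^ 2 ∧ y ^ 2 = (α * γ) ^ 2 ∧ z ^ 2 = (β * γ) ^ 2 := by
  simp only [mul_pow, ← hα, ← hβ, ← hγ, ← abs_mul, ← h.sq_x, ← h.sq_y, ← h.sq_z, abs_sq, and_self]

lemma IsHalf.exists_abs_add_eq_sq (hDC : IsCoprime D C) (hx : IsCoprime x w) (hy : IsCoprime y w)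
    (hz : IsCoprime z w) (hroots' : IsSqrtTriple (D * w) (C * w) x' y' z')
    (h : IsHalf x y z x' y' z') :
    ∃ α β γ, |x' + y'| = α ^ 2 ∧ |x' + z'| = β ^ 2 ∧ |y' + z'| = γ ^ 2 ∧
      IsCoprime α γ ∧ IsCoprime β γ := by
  have hxy_xz := h.isCoprime_add_xy_xz hDC hroots' hx
  have hxy_yz := h.isCoprime_add_xy_yz hDC hroots' hy
  have hxz_yz := h.isCoprime_add_xz_yz hDC hroots' hz
  obtain ⟨α, hα⟩ :=
    (isSquare_abs_of_isCoprime_of_isSquare_mul hxy_xz (h.sq_x ▸ IsSquare.sq x)).exists_sq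
  obtain ⟨β, hβ⟩ :=
    (isSquare_abs_of_isCoprime_of_isSquare_mul hxz_yz (h.sq_z ▸ IsSquare.sq z)).exists_sq
  obtain ⟨γ, hγ⟩ := (isSquare_abs_of_isCoprime_of_isSquare_mul hxy_yz.symm
    (mul_comm (x' + y') _ ▸ h.sq_y ▸ IsSquare.sq y)).exists_sq
  exact ⟨α, β, γ, hα, hβ, hγ, isCoprime_of_abs_eq_sq hxy_yz hα hγ,
    isCoprime_of_abs_eq_sq hxz_yz hβ hγ⟩

lemma IsHalf.exists_odd_odd_even (hDC : IsCoprime D C) (hD : D * w ≠ 0) (hC : C * w ≠ 0)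
    (hx : IsCoprime x w) (hy : IsCoprime y w) (hz : IsCoprime z w)
    (hroots : IsSqrtTriple (D * w) (C * w) x y z) (hroots' : IsSqrtTriple (D * w) (C * w) x' y' z')
    (h : IsHalf x y z x' y' z') :
    ∃ α β γ, x ^ 2 = (α * β) ^ 2 ∧ y ^ 2 = (α * γ) ^ 2 ∧ z ^ 2 = (β * γ) ^ 2 ∧
      IsCoprime α γ ∧ IsCoprime β γ ∧ Odd α ∧ Odd β ∧ Even γ ∧ IsSquare (α ^ 2 - β ^ 2) := by
  obtain ⟨α, β, γ, hα, hβ, hγ, hαγ, hβγ⟩ := h.exists_abs_add_eq_sq hDC hx hy hz hroots'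
  obtain ⟨hx_sq, hy_sq, hz_sq⟩ := h.sq_eq hα hβ hγ
  have hM : (β ^ 2 - γ ^ 2) * α ^ 2 = (D * w) ^ 2 := by
    linear_combination hroots.sq_sub_sq - hx_sq + hy_sq
  have hN : (α ^ 2 - β ^ 2) * γ ^ 2 = (C * w) ^ 2 := by
    linear_combination hroots.sq_sub_sq' - hy_sq + hz_sq
  have hsq_βγ : IsSquare (β ^ 2 - γ ^ 2) := isSquare_of_isSquare_mul_right
    (right_ne_zero_of_mul (hM ▸ pow_ne_zero 2 hD)) (hM ▸ IsSquare.sq _) (IsSquare.sq α)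
  have hsq_αβ : IsSquare (α ^ 2 - β ^ 2) := isSquare_of_isSquare_mul_right
    (right_ne_zero_of_mul (hN ▸ pow_ne_zero 2 hC)) (hN ▸ IsSquare.sq _) (IsSquare.sq γ)
  obtain ⟨hα_odd, hβ_odd, hγ_even⟩ :=
    odd_odd_even_of_isSquare_sq_sub_sq hαγ hβγ (even_sq_add_sq_add_sq hα hβ hγ) hsq_αβ hsq_βγ
  exact ⟨α, β, γ, hx_sq, hy_sq, hz_sq, hαγ, hβγ, hα_odd, hβ_odd, hγ_even, hsq_αβ⟩

theorem IsHalf.not_isHalf (hDC : IsCoprime D C) (hG : D ^ 2 + C ^ 2 = G ^ 2)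
    (hD : D * w ≠ 0) (hC : C * w ≠ 0)
    (hx₀ : IsCoprime x₀ w) (hx : IsCoprime x w) (hy : IsCoprime y w) (hz : IsCoprime z w)
    (hroots : IsSqrtTriple (D * w) (C * w) x y z) (hroots' : IsSqrtTriple (D * w) (C * w) x' y' z')
    (h₀ : IsHalf x₀ y₀ z₀ x y z) : ¬ IsHalf x y z x' y' z' := by
  intro h
  obtain ⟨α, β, γ, hx_sq, hy_sq, hz_sq, hαγ, hβγ, hα, hβ, hγ, n, hn⟩ :=
    h.exists_odd_odd_even hDC hD hC hx hy hz hroots hroots'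
  have ne_zero_of_odd {k : ℤ} (hk : Odd k) : k ≠ 0 := by
    rintro rfl
    simp at hk
  have hcop := h₀.isCoprime_add_xy_xz hDC hroots hx₀
  have hxy : IsSquare |x + y| :=
    isSquare_abs_of_isCoprime_of_isSquare_mul hcop (h₀.sq_x ▸ IsSquare.sq x₀)
  have hxz : IsSquare |x + z| :=
    isSquare_abs_of_isCoprime_of_isSquare_mul hcop.symm
      (mul_comm (x + y) _ ▸ h₀.sq_x ▸ IsSquare.sq x₀)
  have hsub : x ^ 2 - z ^ 2 = (G * w) ^ 2 := by
    linear_combination hroots.sq_sub_sq + hroots.sq_sub_sq' + w ^ 2 * hG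
  obtain ⟨a, ha⟩ := (isSquare_abs_of_sq_eq_mul_sq (ne_zero_of_odd hα) hβγ (hβ.add_even hγ)
    hx_sq hy_sq (hroots.sq_sub_sq ▸ IsSquare.sq _) hxy).exists_sq
  obtain ⟨b, hb⟩ := (isSquare_abs_of_sq_eq_mul_sq (ne_zero_of_odd hβ) hαγ (hα.add_even hγ)
    (mul_comm α β ▸ hx_sq) hz_sq (hsub ▸ IsSquare.sq _) hxz).exists_sq
  have hn0 : n ≠ 0 := by
    rintro rfl
    refine pow_ne_zero 2 hC ?_
    linear_combination γ ^ 2 * hn - hroots.sq_sub_sq' + hy_sq - hz_sq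
  have hb0 : b ≠ 0 := by
    rintro rfl
    exact ne_zero_of_odd hβ (by simpa using hb)
  rw [sq_eq_pow_four_of_abs_eq_sq ha, sq_eq_pow_four_of_abs_eq_sq hb] at hn
  refine pow_four_ne_pow_four_add_sq (x := a) (y := b) (z := n) (mod_cast hb0) (mod_cast hn0) ?_
  exact_mod_cast show a ^ 4 = b ^ 4 + n ^ 2 by linear_combination hn

end Chain

/-! ### Infinitely many rational points -/

lemma IsSqrtTriple.mem_cuboidCurve {d c x y z : ℚ} (h : IsSqrtTriple d c x y z) :
    (x ^ 2, x * y * z) ∈ cuboidCurve d c := by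
  have hy : x ^ 2 - d ^ 2 = y ^ 2 := by linear_combination h.sq_sub_sq
  have hz : x ^ 2 - (d ^ 2 + c ^ 2) = z ^ 2 := by
    linear_combination h.sq_sub_sq + h.sq_sub_sq'
  simp only [cuboidCurve, Set.mem_ofPred_eq, hy, hz]
  ring

lemma exists_isSqrtTriple_max_den {d c x y z : ℚ} (hfin : (cuboidCurve d c).Finite) (hz : z ≠ 0)
    (h : IsSqrtTriple d c x y z) :
    ∃ x y z, z ≠ 0 ∧ IsSqrtTriple d c x y z ∧
      ∀ x' y' z', z' ≠ 0 → IsSqrtTriple d c x' y' z' → x'.den ≤ x.den := by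
  let S : Set ℚ := {X | ∃ x y z, z ≠ 0 ∧ IsSqrtTriple d c x y z ∧ x ^ 2 = X}
  have hS : S.Finite := (hfin.image Prod.fst).subset <| by
    rintro _ ⟨x, y, z, -, h, rfl⟩
    exact ⟨_, h.mem_cuboidCurve, rfl⟩
  obtain ⟨_, ⟨x₀, y₀, z₀, hz₀, h₀, rfl⟩, hmax⟩ :=
    Set.exists_max_image S Rat.den hS ⟨_, x, y, z, hz, h, rfl⟩
  refine ⟨x₀, y₀, z₀, hz₀, h₀, fun x' y' z' hz' h' ↦ ?_⟩
  have hle := hmax _ ⟨x', y', z', hz', h', rfl⟩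
  rwa [Rat.den_pow, Rat.den_pow, Nat.pow_le_pow_iff_left two_ne_zero] at hle

theorem IsSqrtTriple.cuboidCurve_infinite {D C G : ℤ} {x y z : ℚ} (hDC : IsCoprime D C) (hD : D ≠ 0)
    (hC : C ≠ 0) (hG : D ^ 2 + C ^ 2 = G ^ 2) (hz : z ≠ 0) (h : IsSqrtTriple (D : ℚ) C x y z) :
    (cuboidCurve D C).Infinite := by
  intro hfin
  have hDq : (D : ℚ) ≠ 0 := mod_cast hD
  have hCq : (C : ℚ) ≠ 0 := mod_cast hC
  obtain ⟨x₀, y₀, z₀, hz₀, h₀, hmax⟩ := exists_isSqrtTriple_max_den hfin hz h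
  obtain ⟨x₁, y₁, z₁, hz₁, h₁, hhalf₀⟩ := h₀.exists_isHalf hDq hCq hz₀
  obtain ⟨x₂, y₂, z₂, hz₂, h₂, hhalf₁⟩ := h₁.exists_isHalf hDq hCq hz₁
  have hden₁ : x₁.den = x₀.den := (hmax _ _ _ hz₁ h₁).antisymm
    (Nat.le_of_dvd x₁.den_pos (h₁.den_dvd_of_isHalf hhalf₀))
  have hden₂ : x₂.den = x₁.den := ((hmax _ _ _ hz₂ h₂).trans_eq hden₁.symm).antisymm
    (Nat.le_of_dvd x₂.den_pos (h₂.den_dvd_of_isHalf hhalf₁))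
  have hcop {r : ℚ} (hr : r.den = x₁.den) : IsCoprime r.num x₁.den := hr ▸ Rat.isCoprime_num_den r
  have hw : (x₁.den : ℤ) ≠ 0 := mod_cast x₁.den_nz
  exact (hhalf₀.num h₀ h₁ hden₁).not_isHalf hDC hG (mul_ne_zero hD hw) (mul_ne_zero hC hw)
    (hcop hden₁.symm) (hcop rfl) (hcop h₁.den_y) (hcop h₁.den_z) h₁.num (hden₂ ▸ h₂.num)
    (hhalf₁.num h₁ h₂ hden₂)

lemma cuboidCurve_infinite_of_mul_eq_mul {d c d' c' : ℚ} (hd : d ≠ 0) (hd' : d' ≠ 0)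
    (h : d * c' = c * d') (hinf : (cuboidCurve d c).Infinite) : (cuboidCurve d' c').Infinite := by
  obtain ⟨k, rfl⟩ : ∃ k, k * d = d' := ⟨d' / d, div_mul_cancel₀ d' hd⟩
  obtain rfl : c' = k * c := mul_left_cancel₀ hd (by linear_combination h)
  have hk : k ≠ 0 := left_ne_zero_of_mul hd'
  refine Set.infinite_of_injOn_mapsTo (f := fun P ↦ (k ^ 2 * P.1, k ^ 3 * P.2)) ?_ ?_ hinf
  · rintro ⟨X, Y⟩ - ⟨X', Y'⟩ - heq
    simpa [hk] using heq
  · rintro ⟨X, Y⟩ (hXY : Y ^ 2 = X * (X - d ^ 2) * (X - (d ^ 2 + c ^ 2)))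
    simp only [cuboidCurve, Set.mem_ofPred_eq]
    linear_combination k ^ 6 * hXY

lemma exists_isCoprime_eq_mul_s9 (d : ℚ) {c : ℚ} (hc : c ≠ 0) :
    ∃ (D C : ℤ) (k : ℚ), IsCoprime D C ∧ d = k * D ∧ c = k * C := by
  have hden : ((d / c).den : ℚ) ≠ 0 := mod_cast (d / c).den_nz
  refine ⟨(d / c).num, (d / c).den, c / (d / c).den, Rat.isCoprime_num_den _, ?_, ?_⟩
  · rw [← Rat.mul_den_eq_num]
    field_simp
  · push_cast
    field_simp

theorem cuboidCurve_infinite {a b c d e g : ℚ} (ha : a ≠ 0) (hb : b ≠ 0) (hc : c ≠ 0)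
    (habd : a ^ 2 + b ^ 2 = d ^ 2) (hbce : b ^ 2 + c ^ 2 = e ^ 2) (hdcg : d ^ 2 + c ^ 2 = g ^ 2) :
    (cuboidCurve d c).Infinite := by
  have hd : d ≠ 0 := by
    rw [← sq_pos_iff, ← habd]
    positivity
  have he : e ≠ 0 := by
    rw [← sq_pos_iff, ← hbce]
    positivity
  obtain ⟨D, C, k, hDC, rfl, rfl⟩ := exists_isCoprime_eq_mul_s9 d hc
  obtain ⟨hk, hD⟩ := mul_ne_zero_iff.1 hd
  have hC : (C : ℚ) ≠ 0 := right_ne_zero_of_mul hc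
  obtain ⟨G, hG⟩ : IsSquare (D ^ 2 + C ^ 2) := by
    rw [← Rat.isSquare_intCast_iff]
    refine ⟨g / k, ?_⟩
    push_cast
    field_simp
    linear_combination hdcg
  obtain ⟨x, y, z, hz, h⟩ := exists_isSqrtTriple_of_cuboid (div_ne_zero ha hk) (div_ne_zero hb hk)
    hC hD (div_ne_zero he hk) (by field_simp; linear_combination habd)
    (by field_simp; linear_combination hbce)
  exact cuboidCurve_infinite_of_mul_eq_mul hD hd (by ring) <|
    h.cuboidCurve_infinite hDC (mod_cast hD) (mod_cast hC) (hG.trans (sq G).symm) hz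

lemma EI3_eq_cuboidCurve (p q : ℤ) : EI3 p q = cuboidCurve (p ^ 2 - q ^ 2) (2 * p * q) := by
  ext P
  simp only [EI3, cuboidCurve, Set.mem_ofPred_eq]
  ring_nf

lemma EI4_eq_cuboidCurve (p q : ℤ) : EI4 p q = cuboidCurve (2 * p * q) (p ^ 2 - q ^ 2) := by
  ext P
  simp only [EI4, cuboidCurve, Set.mem_ofPred_eq]
  ring_nf

theorem no_face_cuboid_with_internal_ratio_general (p q : ℤ) (hq : 0 < q) (hqp : q < p)
    (h3 : (EI3 p q).Finite) (h4 : (EI4 p q).Finite) :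
    ¬ ∃ a b c d g : ℤ, 0 < a ∧ 0 < b ∧ 0 < c ∧ 0 < d ∧ 0 < g ∧
      a ^ 2 + b ^ 2 = d ^ 2 ∧ a ^ 2 + b ^ 2 + c ^ 2 = g ^ 2 ∧ IsSquare (b ^ 2 + c ^ 2) ∧
      (d * (2 * p * q) = c * (p ^ 2 - q ^ 2) ∨ c * (2 * p * q) = d * (p ^ 2 - q ^ 2)) := by
  rintro ⟨a, b, c, d, g, ha, hb, hc, hd, -, habd, habcg, ⟨e, hbce⟩, hratio⟩
  have hinf : (cuboidCurve d c).Infinite := by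
    refine cuboidCurve_infinite (a := a) (b := b) (e := e) (g := g) (mod_cast ha.ne')
      (mod_cast hb.ne') (mod_cast hc.ne') (mod_cast habd) (mod_cast hbce.trans (sq e).symm) ?_
    exact_mod_cast habd ▸ habcg
  have hdq : (d : ℚ) ≠ 0 := mod_cast hd.ne'
  rw [EI3_eq_cuboidCurve] at h3
  rw [EI4_eq_cuboidCurve] at h4
  rcases hratio with h | h
  · refine cuboidCurve_infinite_of_mul_eq_mul hdq ?_ (mod_cast h) hinf h3
    exact_mod_cast (by nlinarith : p ^ 2 - q ^ 2 ≠ 0)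
  · refine cuboidCurve_infinite_of_mul_eq_mul hdq ?_ (mod_cast h.symm) hinf h4
    have hp := hq.trans hqp
    exact_mod_cast (by positivity : 2 * p * q ≠ 0)

/-- If both EI3 and EI4 have only finitely many rational points, then no face cuboid has
a Pythagorean internal rectangle with aspect ratio `(p²−q²) : 2pq`. -/
theorem no_face_cuboid_with_internal_ratio
    (p q : ℤ) (hq : 0 < q) (hqp : q < p) (hcop : IsCoprime p q) (hpar : p % 2 ≠ q % 2)
    (h3 : (EI3 p q).Finite) (h4 : (EI4 p q).Finite) :
    ¬ ∃ a b c d g : ℤ, 0 < a ∧ 0 < b ∧ 0 < c ∧ 0 < d ∧ 0 < g ∧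
      a ^ 2 + b ^ 2 = d ^ 2 ∧ a ^ 2 + b ^ 2 + c ^ 2 = g ^ 2 ∧ IsSquare (b ^ 2 + c ^ 2) ∧
      (d * (2 * p * q) = c * (p ^ 2 - q ^ 2) ∨ c * (2 * p * q) = d * (p ^ 2 - q ^ 2)) :=
  no_face_cuboid_with_internal_ratio_general p q hq hqp h3 h4
end

section
/- Theorem 5: For any admissible pair (p,q) satisfying either p⁴−q⁴ < 4p²q² or (p²+q²)(p−q)² > 4p²q², there exist positive integers a, b, E such that a²+b², a²+E, b²+E, and a²+b²+E are all perfect squares and 4p²q²·a² = (p²−q²)²·(b²+E); that is, there is a cuboid with two integer edges a, b, integer square E of the third edge, integer face diagonals and integer main diagonal, whose internal rectangle with sides a and √(b²+E) has aspect ratio (p²−q²):2pq (per the paper, an edge cuboid with an internal rectangle of that aspect ratio). -/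
/-!
Let `A = p² - q²`, `B = 2pq`, `C = p² + q²`. After scaling by `w`, a cuboid with `a = A w`,
`b = B x` and `b² + E = (B w)²` is an integer point with `0 < x < w` on the curve
`d² = A² w² + B² x²`, `c² = C² w² - B² x²`.

This intersection of quadrics is an elliptic curve, uniformised by the Jacobi functions
`B x / (C w) = sn u`, `c / (C w) = cn u`, `d / (A w) = dn u` with modulus `k² = -C² / A²`. It
carries the known point `P = (x : c : d : w) = (1 : A : C : 1)`, which only just fails `x < w`.

Walk along the multiples `v` of `P`. As long as `cn` stays positive it decreases by at least a fixed
amount at each step, so at some stage `cn v > 0 > cn (v + P)`. Now `sn ((v + P) ± v)` is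
`sn (v + P) cn v dn v ± sn v cn (v + P) dn (v + P)` over a common positive denominator. The two
products have opposite signs, so the sum is strictly smaller in absolute value than the difference,
which is `sn P = B / C`. Hence `2v + P` satisfies `|x| < w`. Finally, since `A` and `C` are odd and
`B` is even, `x` modulo `2` is additive on the points with `c`, `d`, `w` odd, so it is odd at the
odd multiple `2v + P` of `P` and in particular nonzero.
-/

/-- Homogeneous coordinates of a point of the curve `d² = A² w² + B² x²`, `c² = C² w² - B² x²`, on
which `sn = B x / (C w)`, `cn = c / (C w)` and `dn = d / (A w)`. Proportional coordinates are not
identified, and the zero vector is allowed. -/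
structure JacobiPoint {R : Type*} [CommRing R] (A B C : R) where
  x : R
  c : R
  d : R
  w : R
  d_sq : d ^ 2 = A ^ 2 * w ^ 2 + B ^ 2 * x ^ 2
  c_sq : c ^ 2 = C ^ 2 * w ^ 2 - B ^ 2 * x ^ 2

namespace JacobiPoint

section CommRing

variable {R : Type*} [CommRing R] {A B C : R}

/-- The addition theorem for `sn`, `cn`, `dn` with denominators cleared. As coordinates are not
taken up to scaling, this operation satisfies the group laws only projectively. -/
instance : Add (JacobiPoint A B C) where
  add u v :=
    { x := A * C * (u.x * u.w * v.c * v.d + v.x * v.w * u.c * u.d)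
      c := C * (A ^ 2 * u.c * v.c * u.w * v.w - B ^ 2 * u.x * v.x * u.d * v.d)
      d := A * (C ^ 2 * u.d * v.d * u.w * v.w + B ^ 2 * u.x * v.x * u.c * v.c)
      w := A ^ 2 * C ^ 2 * u.w ^ 2 * v.w ^ 2 + B ^ 4 * u.x ^ 2 * v.x ^ 2
      -- The mixed terms in `u.c * u.d * v.c * v.d` cancel, leaving polynomials in the squares.
      d_sq := by
        rw [← sub_eq_zero]
        calc _ = A ^ 2 * (C ^ 4 * u.d ^ 2 * v.d ^ 2 * u.w ^ 2 * v.w ^ 2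
                  + B ^ 4 * u.x ^ 2 * v.x ^ 2 * u.c ^ 2 * v.c ^ 2)
                - A ^ 2 * (A ^ 2 * C ^ 2 * u.w ^ 2 * v.w ^ 2 + B ^ 4 * u.x ^ 2 * v.x ^ 2) ^ 2
                - A ^ 2 * B ^ 2 * C ^ 2 * (u.x ^ 2 * u.w ^ 2 * v.c ^ 2 * v.d ^ 2
                  + v.x ^ 2 * v.w ^ 2 * u.c ^ 2 * u.d ^ 2) := by ring
          _ = 0 := by rw [u.d_sq, v.d_sq, u.c_sq, v.c_sq]; ring
      c_sq := by
        rw [← sub_eq_zero]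
        calc _ = C ^ 2 * (A ^ 4 * u.c ^ 2 * v.c ^ 2 * u.w ^ 2 * v.w ^ 2
                  + B ^ 4 * u.x ^ 2 * v.x ^ 2 * u.d ^ 2 * v.d ^ 2)
                - C ^ 2 * (A ^ 2 * C ^ 2 * u.w ^ 2 * v.w ^ 2 + B ^ 4 * u.x ^ 2 * v.x ^ 2) ^ 2
                + A ^ 2 * B ^ 2 * C ^ 2 * (u.x ^ 2 * u.w ^ 2 * v.c ^ 2 * v.d ^ 2
                  + v.x ^ 2 * v.w ^ 2 * u.c ^ 2 * u.d ^ 2) := by ring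
          _ = 0 := by rw [u.d_sq, v.d_sq, u.c_sq, v.c_sq]; ring }

/-- Negation on the curve: `sn` is odd, while `cn` and `dn` are even. -/
instance : Neg (JacobiPoint A B C) where
  neg v := { v with
    x := -v.x
    d_sq := by rw [neg_sq, v.d_sq]
    c_sq := by rw [neg_sq, v.c_sq] }

theorem add_x (u v : JacobiPoint A B C) :
    (u + v).x = A * C * (u.x * u.w * v.c * v.d + v.x * v.w * u.c * u.d) := rfl

theorem add_c (u v : JacobiPoint A B C) :
    (u + v).c = C * (A ^ 2 * u.c * v.c * u.w * v.w - B ^ 2 * u.x * v.x * u.d * v.d) := rfl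

theorem add_d (u v : JacobiPoint A B C) :
    (u + v).d = A * (C ^ 2 * u.d * v.d * u.w * v.w + B ^ 2 * u.x * v.x * u.c * v.c) := rfl

theorem add_w (u v : JacobiPoint A B C) :
    (u + v).w = A ^ 2 * C ^ 2 * u.w ^ 2 * v.w ^ 2 + B ^ 4 * u.x ^ 2 * v.x ^ 2 := rfl

theorem add_neg_x (u v : JacobiPoint A B C) :
    (u + -v).x = A * C * (u.x * u.w * v.c * v.d - v.x * v.w * u.c * u.d) := by
  change A * C * (u.x * u.w * v.c * v.d + -v.x * v.w * u.c * u.d) = _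
  ring

theorem add_neg_w (u v : JacobiPoint A B C) : (u + -v).w = (u + v).w := by
  change A ^ 2 * C ^ 2 * u.w ^ 2 * v.w ^ 2 + B ^ 4 * u.x ^ 2 * (-v.x) ^ 2 = _
  rw [neg_sq, add_w]

theorem add_add_neg_x_mul_w (u v : JacobiPoint A B C) :
    (v + u + -v).x * u.w = u.x * (v + u + -v).w := by
  rw [← sub_eq_zero]
  -- The terms in `u.c * u.d * v.c * v.d` cancel, leaving a polynomial in the squares.
  calc _ = A ^ 2 * C ^ 2 * u.w ^ 2 * u.x * v.c ^ 2 * v.d ^ 2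
          * (A ^ 2 * C ^ 2 * v.w ^ 2 * u.w ^ 2 + B ^ 4 * v.x ^ 2 * u.x ^ 2)
        - A ^ 2 * C ^ 2 * B ^ 2 * v.x ^ 2 * v.w ^ 2 * u.x * u.w ^ 2
          * (A ^ 2 * v.c ^ 2 * u.c ^ 2 - C ^ 2 * v.d ^ 2 * u.d ^ 2)
        - u.x * (A ^ 2 * C ^ 2 * v.w ^ 2
            * (A ^ 2 * C ^ 2 * v.w ^ 2 * u.w ^ 2 + B ^ 4 * v.x ^ 2 * u.x ^ 2) ^ 2
          + A ^ 2 * C ^ 2 * B ^ 4 * v.x ^ 2 * (v.x ^ 2 * v.w ^ 2 * u.c ^ 2 * u.d ^ 2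
            + u.x ^ 2 * u.w ^ 2 * v.c ^ 2 * v.d ^ 2)) := by
        rw [add_neg_x, add_neg_w]
        simp only [add_x, add_c, add_d, add_w]
        ring
    _ = 0 := by rw [u.d_sq, v.d_sq, u.c_sq, v.c_sq]; ring

end CommRing

section Positivity

variable {R : Type*} [CommRing R] [LinearOrder R] [IsStrictOrderedRing R] {A B C : R}

/-- All coordinates are positive: the argument `u` lies strictly between `0` and the quarter
period `K`, up to real periods. -/
structure IsPos (v : JacobiPoint A B C) : Prop where
  x_pos : 0 < v.x
  c_pos : 0 < v.c
  d_pos : 0 < v.d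
  w_pos : 0 < v.w

variable {u v : JacobiPoint A B C}

theorem IsPos.add_x_pos (hA : 0 < A) (hC : 0 < C) (hu : u.IsPos) (hv : v.IsPos) :
    0 < (u + v).x := by
  obtain ⟨_, _, _, _⟩ := hu
  obtain ⟨_, _, _, _⟩ := hv
  rw [add_x]; positivity

theorem IsPos.add_d_pos (hA : 0 < A) (hC : 0 < C) (hu : u.IsPos) (hv : v.IsPos) :
    0 < (u + v).d := by
  obtain ⟨_, _, _, _⟩ := hu
  obtain ⟨_, _, _, _⟩ := hv
  rw [add_d]; positivity

theorem IsPos.add_w_pos (hA : 0 < A) (hC : 0 < C) (hu : u.IsPos) (hv : v.IsPos) :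
    0 < (u + v).w := by
  obtain ⟨_, _, _, _⟩ := hu
  obtain ⟨_, _, _, _⟩ := hv
  rw [add_w]; positivity

theorem IsPos.mul_w_le_d (hv : v.IsPos) : A * v.w ≤ v.d := by
  refine le_of_sq_le_sq ?_ hv.d_pos.le
  nlinarith [v.d_sq, sq_nonneg (B * v.x)]

theorem IsPos.w_le_x (h : A * A + B * B = C * C) (hB : 0 < B) (hv : v.IsPos)
    (hc : v.c ≤ A * v.w) : v.w ≤ v.x := by
  have hc_sq : v.c ^ 2 ≤ (A * v.w) ^ 2 := pow_le_pow_left₀ hv.c_pos.le hc 2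
  have hBw : B ^ 2 * v.w ^ 2 ≤ B ^ 2 * v.x ^ 2 := by
    linear_combination hc_sq - v.c_sq + v.w ^ 2 * h
  exact (sq_le_sq₀ hv.w_pos.le hv.x_pos.le).1 (le_of_mul_le_mul_left hBw (by positivity))

theorem IsPos.abs_add_x_lt (hA : 0 < A) (hC : 0 < C) (hv : v.IsPos)
    (hx : 0 < u.x) (hc : u.c < 0) (hd : 0 < u.d) (hw : 0 < u.w) :
    |(u + v).x| < (u + -v).x := by
  obtain ⟨_, _, _, _⟩ := hv
  have hpos : 0 < A * C * (u.x * u.w * v.c * v.d) := by positivity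
  have hneg : 0 < A * C * (v.x * v.w * -u.c * u.d) := by
    have : 0 < -u.c := neg_pos.2 hc
    positivity
  rw [add_neg_x, add_x, abs_lt]
  constructor <;> linarith

end Positivity

section Parity

variable {A B C : ℤ}

/-- The points to which parity arguments apply: `c`, `d` and `w` are odd, so that `x` modulo `2` is
meaningful although coordinates are only homogeneous. -/
structure IsOdd (v : JacobiPoint A B C) : Prop where
  c_odd : Odd v.c
  d_odd : Odd v.d
  w_odd : Odd v.w

variable {u v : JacobiPoint A B C}

theorem IsOdd.add (hA : Odd A) (hB : Even B) (hC : Odd C) (hu : u.IsOdd) (hv : v.IsOdd) :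
    (u + v).IsOdd := by
  obtain ⟨hcu, hdu, hwu⟩ := hu
  obtain ⟨hcv, hdv, hwv⟩ := hv
  constructor <;> rw [← Int.not_even_iff_odd] at *
  · simp [add_c, Int.even_sub, Int.even_mul, Int.even_pow, *]
  · simp [add_d, Int.even_add, Int.even_mul, Int.even_pow, *]
  · simp [add_w, Int.even_add, Int.even_mul, Int.even_pow, *]

theorem IsOdd.even_add_x (hA : Odd A) (hC : Odd C) (hu : u.IsOdd) (hv : v.IsOdd) :
    Even (u + v).x ↔ (Even u.x ↔ Even v.x) := by
  obtain ⟨hcu, hdu, hwu⟩ := hu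
  obtain ⟨hcv, hdv, hwv⟩ := hv
  rw [← Int.not_even_iff_odd] at *
  simp [add_x, Int.even_add, Int.even_mul, *]

end Parity

section Orbit

variable {A B C : ℤ}

/-- The known point `P = (1 : A : C : 1)`, at which `sn = B / C`. -/
@[simps]
def base (h : PythagoreanTriple A B C) : JacobiPoint A B C where
  x := 1
  c := A
  d := C
  w := 1
  d_sq := by linear_combination -h.eq
  c_sq := by linear_combination h.eq

/-- The multiples of `base h`, where `orbit h n` represents `(n + 1) P`. -/
def orbit (h : PythagoreanTriple A B C) : ℕ → JacobiPoint A B C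
  | 0 => base h
  | n + 1 => orbit h n + base h

theorem base_isPos (h : PythagoreanTriple A B C) (hA : 0 < A) (hC : 0 < C) : (base h).IsPos :=
  ⟨one_pos, hA, hC, one_pos⟩

theorem orbit_isOdd (h : PythagoreanTriple A B C) (hA : Odd A) (hB : Even B) (hC : Odd C) (n : ℕ) :
    (orbit h n).IsOdd := by
  have base_isOdd : (base h).IsOdd := ⟨hA, hC, odd_one⟩
  induction n with
  | zero => exact base_isOdd
  | succ n ih => exact ih.add hA hB hC base_isOdd

theorem odd_orbit_succ_add_orbit_x (h : PythagoreanTriple A B C) (hA : Odd A) (hB : Even B)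
    (hC : Odd C) (n : ℕ) : Odd (orbit h (n + 1) + orbit h n).x := by
  have hodd := orbit_isOdd h hA hB hC
  have hstep : Even (orbit h (n + 1)).x ↔ (Even (orbit h n).x ↔ Even (base h).x) :=
    (hodd n).even_add_x hA hC (hodd 0)
  rw [← Int.not_even_iff_odd, (hodd (n + 1)).even_add_x hA hC (hodd n), hstep, base_x]
  have : ¬Even (1 : ℤ) := Int.not_even_one
  tauto

theorem add_base_w_le (h : PythagoreanTriple A B C) (v : JacobiPoint A B C) :
    (v + base h).w ≤ C ^ 4 * v.w ^ 2 := by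
  have hBc : 0 ≤ B ^ 2 * v.c ^ 2 := by positivity
  rw [add_w, base_x, base_w]
  linear_combination hBc + B ^ 2 * v.c_sq + C ^ 2 * v.w ^ 2 * h.eq

-- With denominators cleared, this says that `c / w` drops by at least `1 / C²`.
theorem IsPos.sq_mul_add_base_c_mul_w_le (h : PythagoreanTriple A B C) (hA : 0 < A) (hB : 0 < B)
    (hC : 0 < C) {v : JacobiPoint A B C} (hv : v.IsPos) (hc : v.c ≤ A * v.w) :
    C ^ 2 * (v + base h).c * v.w ≤ (C ^ 2 * v.c - v.w) * (v + base h).w := by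
  have hx := hv.w_le_x h.eq hB hc
  have hd := hv.mul_w_le_d
  obtain ⟨hx0, hc0, _, hw0⟩ := hv
  have hAC : A ≤ C := by nlinarith [h.eq]
  have hmain : C ^ 3 * A ^ 2 * v.c * v.w ^ 2 * A ≤ C ^ 2 * v.c * (v + base h).w := by
    calc C ^ 3 * A ^ 2 * v.c * v.w ^ 2 * A ≤ C ^ 3 * A ^ 2 * v.c * v.w ^ 2 * C := by gcongr
      _ = C ^ 2 * v.c * (A ^ 2 * C ^ 2 * v.w ^ 2) := by ring
      _ ≤ C ^ 2 * v.c * (v + base h).w := by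
        rw [add_w, base_x, base_w]
        gcongr
        have : 0 ≤ B ^ 4 * v.x ^ 2 := by positivity
        linarith
  have hdrop : v.w * (v + base h).w ≤ C ^ 4 * B ^ 2 * v.x * v.d * v.w := by
    have hAB : 1 ≤ B ^ 2 * A := Order.one_le_iff_pos.2 (by positivity)
    calc v.w * (v + base h).w ≤ v.w * (C ^ 4 * v.w ^ 2) := by
          gcongr
          exact add_base_w_le h v
      _ = C ^ 4 * v.w ^ 3 * 1 := by ring
      _ ≤ C ^ 4 * v.w ^ 3 * (B ^ 2 * A) := by gcongr
      _ = C ^ 4 * B ^ 2 * v.w * (A * v.w) * v.w := by ring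
      _ ≤ C ^ 4 * B ^ 2 * v.x * v.d * v.w := by gcongr
  calc C ^ 2 * (v + base h).c * v.w
      = C ^ 3 * A ^ 2 * v.c * v.w ^ 2 * A - C ^ 4 * B ^ 2 * v.x * v.d * v.w := by
        rw [add_c, base_x, base_c, base_d, base_w]; ring
    _ ≤ C ^ 2 * v.c * (v + base h).w - v.w * (v + base h).w := sub_le_sub hmain hdrop
    _ = (C ^ 2 * v.c - v.w) * (v + base h).w := by ring

theorem sq_mul_orbit_c_le (h : PythagoreanTriple A B C) (hA : 0 < A) (hB : 0 < B) (hC : 0 < C)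
    (hpos : ∀ n, (orbit h n).IsPos) (n : ℕ) :
    C ^ 2 * (orbit h n).c ≤ (C ^ 2 * A - n) * (orbit h n).w := by
  induction n with
  | zero => simp [orbit]
  | succ n ih =>
    have hw := (hpos n).w_pos
    have hw' := (hpos (n + 1)).w_pos
    have hc : (orbit h n).c ≤ A * (orbit h n).w := by
      have : 0 ≤ n * (orbit h n).w := by positivity
      exact le_of_mul_le_mul_left (by linarith) (pow_pos hC 2)
    refine le_of_mul_le_mul_right ?_ hw
    calc C ^ 2 * (orbit h (n + 1)).c * (orbit h n).w
        ≤ (C ^ 2 * (orbit h n).c - (orbit h n).w) * (orbit h (n + 1)).w :=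
          (hpos n).sq_mul_add_base_c_mul_w_le h hA hB hC hc
      _ ≤ ((C ^ 2 * A - n) * (orbit h n).w - (orbit h n).w) * (orbit h (n + 1)).w := by gcongr
      _ = (C ^ 2 * A - (n + 1 : ℕ)) * (orbit h (n + 1)).w * (orbit h n).w := by push_cast; ring

theorem exists_orbit_isPos_and_succ_c_nonpos (h : PythagoreanTriple A B C) (hA : 0 < A)
    (hB : 0 < B) (hC : 0 < C) : ∃ n, (orbit h n).IsPos ∧ (orbit h (n + 1)).c ≤ 0 := by
  by_contra! hstay
  have hbase := base_isPos h hA hC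
  have hpos (n : ℕ) : (orbit h n).IsPos := by
    induction n with
    | zero => exact hbase
    | succ n ih =>
      exact ⟨ih.add_x_pos hA hC hbase, hstay n ih, ih.add_d_pos hA hC hbase,
        ih.add_w_pos hA hC hbase⟩
  have hle := sq_mul_orbit_c_le h hA hB hC hpos (C ^ 2 * A).toNat
  rw [Int.toNat_of_nonneg (by positivity), sub_self, zero_mul] at hle
  exact hle.not_gt (mul_pos (pow_pos hC 2) (hpos _).c_pos)

theorem exists_abs_x_lt_w (h : PythagoreanTriple A B C) (hA : 0 < A) (hB : 0 < B) (hC : 0 < C)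
    (hA_odd : Odd A) (hB_even : Even B) (hC_odd : Odd C) :
    ∃ v : JacobiPoint A B C, v.x ≠ 0 ∧ |v.x| < v.w := by
  obtain ⟨n, hpos, hc⟩ := exists_orbit_isPos_and_succ_c_nonpos h hA hB hC
  have hbase := base_isPos h hA hC
  have hc_odd : Odd (orbit h (n + 1)).c := (orbit_isOdd h hA_odd hB_even hC_odd (n + 1)).c_odd
  have hx_odd := odd_orbit_succ_add_orbit_x h hA_odd hB_even hC_odd n
  have hsub : (orbit h (n + 1) + -orbit h n).x = (orbit h (n + 1) + -orbit h n).w := by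
    simpa only [orbit, base_x, base_w, mul_one, one_mul] using
      add_add_neg_x_mul_w (base h) (orbit h n)
  refine ⟨orbit h (n + 1) + orbit h n, fun hx ↦ by simp [hx] at hx_odd, ?_⟩
  calc |(orbit h (n + 1) + orbit h n).x| < (orbit h (n + 1) + -orbit h n).x :=
        hpos.abs_add_x_lt hA hC (hpos.add_x_pos hA hC hbase)
          (hc.lt_of_ne fun hc0 ↦ by simp [hc0] at hc_odd)
          (hpos.add_d_pos hA hC hbase) (hpos.add_w_pos hA hC hbase)
    _ = (orbit h (n + 1) + orbit h n).w := by rw [hsub, add_neg_w]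

end Orbit

end JacobiPoint

theorem even_of_odd_of_pythagoreanTriple {A B C : ℤ} (h : PythagoreanTriple A B C) (hA : Odd A) :
    Even B := by
  by_contra hB
  have hA_mod := Int.sq_mod_four_eq_one_of_odd hA
  have hB_mod := Int.sq_mod_four_eq_one_of_odd (Int.not_even_iff_odd.1 hB)
  have hABC : A ^ 2 + B ^ 2 = C ^ 2 := by linear_combination h.eq
  rcases Int.even_or_odd C with ⟨k, rfl⟩ | hC
  · have : (k + k) ^ 2 = 4 * k ^ 2 := by ring
    omega
  · have := Int.sq_mod_four_eq_one_of_odd hC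
    omega

theorem exists_edge_cuboid_with_internal_ratio_general {A B C : ℤ} (h : PythagoreanTriple A B C)
    (hA : 0 < A) (hB : 0 < B) (hC : 0 < C) (hA_odd : Odd A) :
    ∃ a b E : ℤ, 0 < a ∧ 0 < b ∧ 0 < E ∧
      IsSquare (a ^ 2 + b ^ 2) ∧ IsSquare (a ^ 2 + E) ∧ IsSquare (b ^ 2 + E) ∧
      IsSquare (a ^ 2 + b ^ 2 + E) ∧ B ^ 2 * a ^ 2 = A ^ 2 * (b ^ 2 + E) := by
  have hB_even : Even B := even_of_odd_of_pythagoreanTriple h hA_odd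
  have hC_odd : Odd C := by
    have : Odd (C * C) := h.eq ▸ (hA_odd.mul hA_odd).add_even (hB_even.mul_right B)
    exact (Int.odd_mul.1 this).1
  obtain ⟨v, hx, hxw⟩ := JacobiPoint.exists_abs_x_lt_w h hA hB hC hA_odd hB_even hC_odd
  have hw : 0 < v.w := (abs_nonneg v.x).trans_lt hxw
  have hE : 0 < B ^ 2 * (v.w ^ 2 - v.x ^ 2) :=
    mul_pos (pow_pos hB 2) (sub_pos.2 (sq_lt_sq.2 (by rwa [abs_of_pos hw])))
  have hb : (B * |v.x|) ^ 2 = B ^ 2 * v.x ^ 2 := by rw [mul_pow, sq_abs]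
  refine ⟨A * v.w, B * |v.x|, B ^ 2 * (v.w ^ 2 - v.x ^ 2), by positivity, by positivity, hE,
    ⟨v.d, ?_⟩, ⟨v.c, ?_⟩, ⟨B * v.w, ?_⟩, ⟨C * v.w, ?_⟩, ?_⟩
  · linear_combination hb - v.d_sq
  · linear_combination v.w ^ 2 * h.eq - v.c_sq
  · linear_combination hb
  · linear_combination hb + v.w ^ 2 * h.eq
  · linear_combination -A ^ 2 * hb

/-- Theorem 5: for any admissible pair `(p,q)` with `p⁴−q⁴ < 4p²q²` or
`(p²+q²)(p−q)² > 4p²q²`, there exists an edge cuboid with an internal rectangle whose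
edges are in the ratio `(p²−q²) : 2pq`. -/
theorem exists_edge_cuboid_with_internal_ratio
    (p q : ℤ) (hq : 0 < q) (hqp : q < p) (hcop : IsCoprime p q) (hpar : p % 2 ≠ q % 2)
    (hrange : p ^ 4 - q ^ 4 < 4 * p ^ 2 * q ^ 2 ∨
      (p ^ 2 + q ^ 2) * (p - q) ^ 2 > 4 * p ^ 2 * q ^ 2) :
    ∃ a b E : ℤ, 0 < a ∧ 0 < b ∧ 0 < E ∧
      IsSquare (a ^ 2 + b ^ 2) ∧ IsSquare (a ^ 2 + E) ∧ IsSquare (b ^ 2 + E) ∧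
      IsSquare (a ^ 2 + b ^ 2 + E) ∧
      4 * p ^ 2 * q ^ 2 * a ^ 2 = (p ^ 2 - q ^ 2) ^ 2 * (b ^ 2 + E) := by
  have hp : 0 < p := hq.trans hqp
  have hpq : Odd p ↔ Even q := by rw [Int.odd_iff, Int.even_iff]; omega
  have hA_odd : Odd (p ^ 2 - q ^ 2) := by simp [Int.odd_sub, parity_simps, hpq]
  have htriple : PythagoreanTriple (p ^ 2 - q ^ 2) (2 * p * q) (p ^ 2 + q ^ 2) := by
    unfold PythagoreanTriple; ring
  simpa only [show (2 * p * q) ^ 2 = 4 * p ^ 2 * q ^ 2 by ring] using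
    exists_edge_cuboid_with_internal_ratio_general htriple (by nlinarith) (by positivity)
      (by positivity) hA_odd
end

section
/- Let A, B, C be positive integers with gcd(A,B,C) = 1, and let M and N be squarefree positive integers, not both equal to 1. Suppose the seven quantities A, B, C, A+B, A+C, B+C, A+B+C can be split into a set of four, each of which is N times a perfect square, and a set of three, each of which is M times a perfect square. Then N = 1, M > 1, and, up to a permutation of (A,B,C), the set of three is either {A, B, A+B} or {A, B+C, A+B+C}. (In cuboid terms, with A, B, C the squared edges: the three inter-vertex distances of a 3-BPC whose squares share a common squarefree part M > 1 are either the two sides and diagonal of one face, or the two sides and diagonal of one internal rectangle.) -/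
/-!
Modulo any `d ≠ 1`, the numbers `A, B, C` do not all vanish, and then the vanishing ones among the
seven forms all lie on a single line of the Fano plane. A line has three points, so `N` cannot
divide four of the forms unless `N = 1`, and `M ≠ 1` forces the three forms divisible by `M` to be
a line. The only line not in the conclusion consists of the three face diagonals. If `M` divides
`A + B`, `A + C` and `B + C`, then it divides `2A`, `2B` and `2C`, so `M = 2` and `A, B, C` are odd;
but then `A, B, C` and `A + B + C` are odd squares, which contradicts `1 + 1 + 1 ≢ 1 (mod 4)`.
-/

/-- The squared inter-vertex distances of a cuboid with squared edges `a, b, c`, in any additive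
structure so that they can be reduced modulo an integer. The order is that of
`three_BPC_classification`. -/
def squaredDistances {G : Type*} [Add G] (a b c : G) : Fin 7 → G :=
  ![a, b, c, a + b, a + c, b + c, a + b + c]

/-- The lines of the Fano plane whose points are the nonzero vectors of `𝔽₂³`, a point being
represented by the index in `squaredDistances` of the form with these coefficients. The first three
lines are the faces, the next three the internal rectangles, and the last one consists of the face
diagonals. -/
def fanoLines : Finset (Finset (Fin 7)) :=
  {{0, 1, 3}, {0, 2, 4}, {1, 2, 5}, {0, 5, 6}, {1, 4, 6}, {2, 3, 6}, {3, 4, 5}}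

lemma card_of_mem_fanoLines : ∀ T ∈ fanoLines, T.card = 3 := by simp [fanoLines]

lemma map_squaredDistances {F G H : Type*} [Add G] [Add H] [FunLike F G H] [AddHomClass F G H]
    (f : F) (a b c : G) (i : Fin 7) :
    f (squaredDistances a b c i) = squaredDistances (f a) (f b) (f c) i := by
  fin_cases i <;> simp [squaredDistances]

section AddCommGroup

variable {G : Type*} [AddCommGroup G] {a b c : G}

lemma exists_fanoLine_of_ne_zero (ha : a ≠ 0) (hb : b ≠ 0) (hc : c ≠ 0) :
    ∃ T ∈ fanoLines, ∀ i, squaredDistances a b c i = 0 → i ∈ T := by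
  by_cases habc : a + b + c = 0
  · have hac : a + c ≠ 0 := fun h => hb (by rwa [add_right_comm, h, zero_add] at habc)
    have hbc : b + c ≠ 0 := fun h => ha (by rwa [add_assoc, h, add_zero] at habc)
    refine ⟨{2, 3, 6}, by decide, ?_⟩
    simp [Fin.forall_fin_succ, squaredDistances, *]
  · refine ⟨{3, 4, 5}, by decide, ?_⟩
    simp [Fin.forall_fin_succ, squaredDistances, *]

lemma exists_fanoLine_of_not_all_zero (h : ¬(a = 0 ∧ b = 0 ∧ c = 0)) :
    ∃ T ∈ fanoLines, ∀ i, squaredDistances a b c i = 0 → i ∈ T := by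
  by_cases ha : a = 0 <;> by_cases hb : b = 0 <;> by_cases hc : c = 0
  · exact absurd ⟨ha, hb, hc⟩ h
  · exact ⟨{0, 1, 3}, by decide, by simp [Fin.forall_fin_succ, squaredDistances, *]⟩
  · exact ⟨{0, 2, 4}, by decide, by simp [Fin.forall_fin_succ, squaredDistances, *]⟩
  · exact ⟨{0, 5, 6}, by decide, by simp [Fin.forall_fin_succ, squaredDistances, *]⟩
  · exact ⟨{1, 2, 5}, by decide, by simp [Fin.forall_fin_succ, squaredDistances, *]⟩
  · exact ⟨{1, 4, 6}, by decide, by simp [Fin.forall_fin_succ, squaredDistances, *]⟩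
  · exact ⟨{2, 3, 6}, by decide, by simp [Fin.forall_fin_succ, squaredDistances, *]⟩
  · exact exists_fanoLine_of_ne_zero ha hb hc

end AddCommGroup

section Divisibility

variable {A B C d : ℕ}

lemma not_dvd_all_of_gcd_eq_one (hgcd : Nat.gcd A (Nat.gcd B C) = 1) (hd : d ≠ 1) :
    ¬(d ∣ A ∧ d ∣ B ∧ d ∣ C) := fun ⟨hA, hB, hC⟩ =>
  hd (Nat.dvd_one.1 (hgcd ▸ Nat.dvd_gcd hA (Nat.dvd_gcd hB hC)))

lemma exists_fanoLine_of_gcd_eq_one (hgcd : Nat.gcd A (Nat.gcd B C) = 1) (hd : d ≠ 1) :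
    ∃ T ∈ fanoLines, ∀ i, d ∣ squaredDistances A B C i → i ∈ T := by
  have not_all_zero : ¬((A : ZMod d) = 0 ∧ (B : ZMod d) = 0 ∧ (C : ZMod d) = 0) := by
    simpa only [ZMod.natCast_eq_zero_iff] using not_dvd_all_of_gcd_eq_one hgcd hd
  obtain ⟨T, hT, hzero⟩ := exists_fanoLine_of_not_all_zero not_all_zero
  refine ⟨T, hT, fun i hi => hzero i ?_⟩
  have hcast := map_squaredDistances (Nat.castAddMonoidHom (ZMod d)) A B C i
  exact hcast.symm.trans ((ZMod.natCast_eq_zero_iff _ d).2 hi)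

variable {S : Finset (Fin 7)}

lemma card_le_three_of_dvd_squaredDistances (hgcd : Nat.gcd A (Nat.gcd B C) = 1) (hd : d ≠ 1)
    (hS : ∀ i ∈ S, d ∣ squaredDistances A B C i) : S.card ≤ 3 := by
  obtain ⟨T, hT, hdvd⟩ := exists_fanoLine_of_gcd_eq_one hgcd hd
  exact card_of_mem_fanoLines T hT ▸ Finset.card_le_card fun i hi => hdvd i (hS i hi)

lemma mem_fanoLines_of_dvd_squaredDistances (hgcd : Nat.gcd A (Nat.gcd B C) = 1) (hd : d ≠ 1)
    (hcard : S.card = 3) (hS : ∀ i ∈ S, d ∣ squaredDistances A B C i) : S ∈ fanoLines := by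
  obtain ⟨T, hT, hdvd⟩ := exists_fanoLine_of_gcd_eq_one hgcd hd
  have hST : S ⊆ T := fun i hi => hdvd i (hS i hi)
  rwa [Finset.eq_of_subset_of_card_le hST (by rw [card_of_mem_fanoLines T hT, hcard])]

lemma dvd_two_mul_of_dvd_pairwise_add (hAB : d ∣ A + B) (hAC : d ∣ A + C) (hBC : d ∣ B + C) :
    d ∣ 2 * A := by
  have hsum : (A + B) + (A + C) = (B + C) + 2 * A := by ring
  exact (Nat.dvd_add_right hBC).1 (hsum ▸ dvd_add hAB hAC)

lemma eq_two_of_dvd_pairwise_add (hgcd : Nat.gcd A (Nat.gcd B C) = 1) (hd : d ≠ 1)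
    (hAB : d ∣ A + B) (hAC : d ∣ A + C) (hBC : d ∣ B + C) : d = 2 := by
  have hA : d ∣ 2 * A := dvd_two_mul_of_dvd_pairwise_add hAB hAC hBC
  have hB : d ∣ 2 * B := dvd_two_mul_of_dvd_pairwise_add (add_comm A B ▸ hAB) hBC hAC
  have hC : d ∣ 2 * C :=
    dvd_two_mul_of_dvd_pairwise_add (add_comm A C ▸ hAC) (add_comm B C ▸ hBC) hAB
  have hdvd : d ∣ 2 := by
    simpa only [Nat.gcd_mul_left, hgcd, mul_one] using Nat.dvd_gcd hA (Nat.dvd_gcd hB hC)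
  exact ((Nat.dvd_prime Nat.prime_two).1 hdvd).resolve_left hd

lemma odd_of_dvd_pairwise_add (hgcd : Nat.gcd A (Nat.gcd B C) = 1) (hd : d ≠ 1)
    (hAB : d ∣ A + B) (hAC : d ∣ A + C) (hBC : d ∣ B + C) : Odd A ∧ Odd B ∧ Odd C := by
  obtain rfl : d = 2 := eq_two_of_dvd_pairwise_add hgcd hd hAB hAC hBC
  have not_all_even : ¬(2 ∣ A ∧ 2 ∣ B ∧ 2 ∣ C) := not_dvd_all_of_gcd_eq_one hgcd hd
  simp only [Nat.odd_iff]
  omega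

lemma mod_four_eq_one_of_isSquare_of_odd {n : ℕ} (hsq : IsSquare n) (hodd : Odd n) :
    n % 4 = 1 := by
  obtain ⟨r, rfl⟩ := hsq
  have hr : Odd (r : ℤ) := mod_cast (Nat.odd_mul.1 hodd).1
  have hmod := Int.sq_mod_four_eq_one_of_odd hr
  rw [sq] at hmod
  exact_mod_cast hmod

lemma not_isSquare_add_add_of_odd (hA : IsSquare A) (hB : IsSquare B) (hC : IsSquare C)
    (oA : Odd A) (oB : Odd B) (oC : Odd C) : ¬IsSquare (A + B + C) := fun hABC => by
  have hA4 : A % 4 = 1 := mod_four_eq_one_of_isSquare_of_odd hA oA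
  have hB4 : B % 4 = 1 := mod_four_eq_one_of_isSquare_of_odd hB oB
  have hC4 : C % 4 = 1 := mod_four_eq_one_of_isSquare_of_odd hC oC
  have hABC4 : (A + B + C) % 4 = 1 :=
    mod_four_eq_one_of_isSquare_of_odd hABC ((oA.add_odd oB).add_odd oC)
  omega

lemma ne_faceDiagonals_of_isSquare (hgcd : Nat.gcd A (Nat.gcd B C) = 1) (hd : d ≠ 1)
    (hdvd : ∀ i ∈ S, d ∣ squaredDistances A B C i)
    (hsq : ∀ i ∉ S, IsSquare (squaredDistances A B C i)) : S ≠ {3, 4, 5} := by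
  rintro rfl
  obtain ⟨oA, oB, oC⟩ := odd_of_dvd_pairwise_add hgcd hd
    (hdvd 3 (by decide)) (hdvd 4 (by decide)) (hdvd 5 (by decide))
  exact not_isSquare_add_add_of_odd (hsq 0 (by decide)) (hsq 1 (by decide)) (hsq 2 (by decide))
    oA oB oC (hsq 6 (by decide))

end Divisibility

theorem three_BPC_classification_general {A B C M N : ℕ}
    (hgcd : Nat.gcd A (Nat.gcd B C) = 1) (hM : M ≠ 0) (hMN : ¬(M = 1 ∧ N = 1))
    {S : Finset (Fin 7)} (hcard : S.card = 3)
    (hMdvd : ∀ i ∈ S, M ∣ squaredDistances A B C i)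
    (hNset : ∀ i ∉ S, ∃ n : ℕ, squaredDistances A B C i = N * n ^ 2) :
    N = 1 ∧ 1 < M ∧
      (S = {0, 1, 3} ∨ S = {0, 2, 4} ∨ S = {1, 2, 5} ∨
       S = {0, 5, 6} ∨ S = {1, 4, 6} ∨ S = {2, 3, 6}) := by
  have hN1 : N = 1 := by
    by_contra hN
    have hle : Sᶜ.card ≤ 3 := card_le_three_of_dvd_squaredDistances hgcd hN fun i hi =>
      have ⟨n, hn⟩ := hNset i (Finset.mem_compl.1 hi)
      ⟨n ^ 2, hn⟩
    simp [Finset.card_compl, hcard] at hle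
  have hM1 : M ≠ 1 := fun h => hMN ⟨h, hN1⟩
  have hsq : ∀ i ∉ S, IsSquare (squaredDistances A B C i) := fun i hi => by
    obtain ⟨n, hn⟩ := hNset i hi
    exact ⟨n, by rw [hn, hN1, one_mul, sq]⟩
  have hline : S ∈ fanoLines := mem_fanoLines_of_dvd_squaredDistances hgcd hM1 hcard hMdvd
  have hdiag : S ≠ {3, 4, 5} := ne_faceDiagonals_of_isSquare hgcd hM1 hMdvd hsq
  refine ⟨hN1, by omega, ?_⟩
  simpa only [fanoLines, Finset.mem_insert, Finset.mem_singleton, hdiag, or_false] using hline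

/-- Classification of possible 3-BPCs: if the seven squared inter-vertex distances
`A, B, C, A+B, A+C, B+C, A+B+C` (indexed `0,…,6`) of a cuboid with coprime squared edges
`A, B, C` split into a set `S` of three, each `M` times a square, and its complement of
four, each `N` times a square, with `M, N` squarefree and not both `1`, then `N = 1`,
`M > 1`, and the three are the sides and diagonal of a face or of an internal rectangle. -/
theorem three_BPC_classification (A B C M N : ℕ)
    (hA : 0 < A) (hB : 0 < B) (hC : 0 < C)
    (hgcd : Nat.gcd A (Nat.gcd B C) = 1)
    (hM : Squarefree M) (hN : Squarefree N) (hMN : ¬ (M = 1 ∧ N = 1))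
    (S : Finset (Fin 7)) (hcard : S.card = 3)
    (hMset : ∀ i ∈ S, ∃ m : ℕ, ![A, B, C, A + B, A + C, B + C, A + B + C] i = M * m ^ 2)
    (hNset : ∀ i ∉ S, ∃ n : ℕ, ![A, B, C, A + B, A + C, B + C, A + B + C] i = N * n ^ 2) :
    N = 1 ∧ 1 < M ∧
      (S = ({0, 1, 3} : Finset (Fin 7)) ∨ S = ({0, 2, 4} : Finset (Fin 7)) ∨
       S = ({1, 2, 5} : Finset (Fin 7)) ∨ S = ({0, 5, 6} : Finset (Fin 7)) ∨
       S = ({1, 4, 6} : Finset (Fin 7)) ∨ S = ({2, 3, 6} : Finset (Fin 7))) := by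
  exact three_BPC_classification_general hgcd hM.ne_zero hMN hcard
    (fun i hi => have ⟨m, hm⟩ := hMset i hi; ⟨m ^ 2, hm⟩) hNset
end

section
/- Let k, l, n be positive integers with n < l such that ln, k²+l², k²+ln, k²+n², and l²−ln are all perfect squares. Then X = ln(k²+ln), Y = l²(ln−n²), and Z = k²(l²−ln) are positive integers such that X, Y, Z, X+Y, X+Z, Y+Z, and X+Y+Z are all perfect squares; that is, the cuboid with edges √X = √(ln(k²+ln)), √Y = l√(ln−n²), √Z = k√(l²−ln) is a perfect cuboid, with face diagonals √(ln(k²+l²)), l√(k²+n²), √((k²+ln)(l²−ln)) and main diagonal l√(k²+ln). -/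
/-!
Put `a = k²`, `p = ln` and `q = l² - ln`. Then `X = p(a + p)`, `Y = pq` and `Z = aq`, so that
`X + Y = p(a + p + q)`, `Y + Z = (a + p)q` and `X + Y + Z = (a + p)(p + q)` are products of
squares by distributivity alone. Only the third face sees more of `p` than this:
`p(a + p) + aq = a(p + q) + p² = k²l² + l²n² = l²(k² + n²)`.
-/

/-- A perfect cuboid, encoded by its squared edges `x`, `y`, `z`: the edges, the face diagonals and
the main diagonal then have their lengths in `R`. For `R = ℤ` this is the classical notion. -/
structure IsPerfectCuboid_s15 {R : Type*} [Semiring R] [PartialOrder R] (x y z : R) : Prop where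
  x_pos : 0 < x
  y_pos : 0 < y
  z_pos : 0 < z
  isSquare_x : IsSquare x
  isSquare_y : IsSquare y
  isSquare_z : IsSquare z
  isSquare_x_add_y : IsSquare (x + y)
  isSquare_x_add_z : IsSquare (x + z)
  isSquare_y_add_z : IsSquare (y + z)
  isSquare_x_add_y_add_z : IsSquare (x + y + z)

theorem IsPerfectCuboid_s15.of_isSquare {R : Type*} [CommSemiring R] [PartialOrder R]
    [IsStrictOrderedRing R] {a p q : R} (ha_pos : 0 < a) (hp_pos : 0 < p) (hq_pos : 0 < q)
    (ha : IsSquare a) (hp : IsSquare p) (hq : IsSquare q)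
    (hap : IsSquare (a + p)) (hpq : IsSquare (p + q)) (hapq : IsSquare (a + p + q))
    (hface : IsSquare (p * (a + p) + a * q)) :
    IsPerfectCuboid_s15 (p * (a + p)) (p * q) (a * q) where
  x_pos := mul_pos hp_pos (add_pos ha_pos hp_pos)
  y_pos := mul_pos hp_pos hq_pos
  z_pos := mul_pos ha_pos hq_pos
  isSquare_x := hp.mul hap
  isSquare_y := hp.mul hq
  isSquare_z := ha.mul hq
  isSquare_x_add_y := by
    rw [← mul_add]
    exact hp.mul hapq
  isSquare_x_add_z := hface
  isSquare_y_add_z := by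
    rw [← add_mul, add_comm p a]
    exact hap.mul hq
  isSquare_x_add_y_add_z := by
    have main_diagonal : p * (a + p) + p * q + a * q = (a + p) * (p + q) := by ring
    rw [main_diagonal]
    exact hap.mul hpq

theorem perfect_cuboid_of_kln_general {R : Type*} [CommRing R] [PartialOrder R]
    [IsStrictOrderedRing R] {k l n : R} (hk : 0 < k) (hn : 0 < n) (hnl : n < l)
    (hln : IsSquare (l * n)) (hkl : IsSquare (k ^ 2 + l ^ 2))
    (hkln : IsSquare (k ^ 2 + l * n)) (hkn : IsSquare (k ^ 2 + n ^ 2))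
    (hlln : IsSquare (l ^ 2 - l * n)) :
    IsPerfectCuboid_s15 (l * n * (k ^ 2 + l * n)) (l ^ 2 * (l * n - n ^ 2))
      (k ^ 2 * (l ^ 2 - l * n)) := by
  have hl : 0 < l := hn.trans hnl
  have hlln_pos : 0 < l ^ 2 - l * n := by
    rw [pow_two, ← mul_sub]
    exact mul_pos hl (sub_pos.mpr hnl)
  have hface : l * n * (k ^ 2 + l * n) + k ^ 2 * (l ^ 2 - l * n) = l ^ 2 * (k ^ 2 + n ^ 2) := by
    ring
  have hy : l ^ 2 * (l * n - n ^ 2) = l * n * (l ^ 2 - l * n) := by ring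
  rw [hy]
  apply IsPerfectCuboid_s15.of_isSquare (pow_pos hk 2) (mul_pos hl hn) hlln_pos (.sq k) hln hlln hkln
  · rw [add_sub_cancel]
    exact .sq l
  · rwa [add_assoc, add_sub_cancel]
  · rw [hface]
    exact (IsSquare.sq l).mul hkn

/-- Forward direction of the reduction of the perfect cuboid problem to triples
`(k,l,n)`: if `ln, k²+l², k²+ln, k²+n², l²−ln` are all squares then
`X = ln(k²+ln)`, `Y = l²(ln−n²)`, `Z = k²(l²−ln)` are the squared edges of a perfect
cuboid. -/
theorem perfect_cuboid_of_kln (k l n : ℤ)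
    (hk : 0 < k) (hn : 0 < n) (hnl : n < l)
    (h1 : IsSquare (l * n)) (h2 : IsSquare (k ^ 2 + l ^ 2))
    (h3 : IsSquare (k ^ 2 + l * n)) (h4 : IsSquare (k ^ 2 + n ^ 2))
    (h5 : IsSquare (l ^ 2 - l * n)) :
    0 < l * n * (k ^ 2 + l * n) ∧ 0 < l ^ 2 * (l * n - n ^ 2) ∧
    0 < k ^ 2 * (l ^ 2 - l * n) ∧
    IsSquare (l * n * (k ^ 2 + l * n)) ∧
    IsSquare (l ^ 2 * (l * n - n ^ 2)) ∧
    IsSquare (k ^ 2 * (l ^ 2 - l * n)) ∧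
    IsSquare (l * n * (k ^ 2 + l * n) + l ^ 2 * (l * n - n ^ 2)) ∧
    IsSquare (l * n * (k ^ 2 + l * n) + k ^ 2 * (l ^ 2 - l * n)) ∧
    IsSquare (l ^ 2 * (l * n - n ^ 2) + k ^ 2 * (l ^ 2 - l * n)) ∧
    IsSquare (l * n * (k ^ 2 + l * n) + l ^ 2 * (l * n - n ^ 2) +
      k ^ 2 * (l ^ 2 - l * n)) := by
  have h := perfect_cuboid_of_kln_general hk hn hnl h1 h2 h3 h4 h5
  exact ⟨h.x_pos, h.y_pos, h.z_pos, h.isSquare_x, h.isSquare_y, h.isSquare_z, h.isSquare_x_add_y,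
    h.isSquare_x_add_z, h.isSquare_y_add_z, h.isSquare_x_add_y_add_z⟩
end

section
/- Let (A,B,C) be a perfect cuboid and let D be the positive integer with A²+B²+C² = D². Then k = A·C·D, l = B·D², n = A²·B are positive integers with n < l such that ln, k²+l², k²+ln, k²+n², and l²−ln are all perfect squares. Consequently, if no triple of positive integers (k,l,n) with l > n makes all five of these quantities perfect squares, then no perfect cuboid exists. -/
/-!
With `D² = A² + B² + C²`, each of the five quantities is a perfect square times face diagonals
squared:
* `ln = (ABD)²`,
* `k² + l² = D² ((AC)² + (BD)²) = D² (A² + B²) (B² + C²)`,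
* `k² + ln = (AD)² (B² + C²)`,
* `k² + n² = A² ((AB)² + (CD)²) = A² (A² + C²) (C² + B²)`,
* `l² - ln = (BD)² (D² - A²) = (BD)² (B² + C²)`.

The second and fourth are two instances of `(xz)² + (yd)² = (x² + y²) (y² + z²)`, which holds
whenever `d² = x² + y² + z²`.
-/

section Squares

variable {R : Type*}

theorem isSquare_mul_sq_add_mul_sq [CommSemiring R] {x y z d : R}
    (hd : x ^ 2 + y ^ 2 + z ^ 2 = d ^ 2) (hxy : IsSquare (x ^ 2 + y ^ 2))
    (hyz : IsSquare (y ^ 2 + z ^ 2)) : IsSquare ((x * z) ^ 2 + (y * d) ^ 2) := by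
  have hfactor : (x * z) ^ 2 + (y * d) ^ 2 = (x ^ 2 + y ^ 2) * (y ^ 2 + z ^ 2) := by
    rw [mul_pow y d, ← hd]
    ring
  exact hfactor ▸ hxy.mul hyz

theorem exists_pos_sq_eq_of_isSquare [Ring R] [LinearOrder R] [IsOrderedRing R] {x : R}
    (hx : 0 < x) (hsq : IsSquare x) : ∃ d : R, 0 < d ∧ x = d ^ 2 := by
  obtain ⟨d, rfl⟩ := hsq
  have hd : d ≠ 0 := by
    rintro rfl
    simp at hx
  exact ⟨|d|, abs_pos.mpr hd, by rw [sq_abs, sq]⟩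

end Squares

section PerfectCuboid

variable {R : Type*} [CommRing R]

/-- Three positive edges of a cuboid whose face and space diagonals all lie in `R`; perfect cuboids
in the usual sense are the case `R = ℤ`. -/
def IsPerfectCuboid_s16 [PartialOrder R] (a b c : R) : Prop :=
  0 < a ∧ 0 < b ∧ 0 < c ∧
    IsSquare (a ^ 2 + b ^ 2) ∧ IsSquare (a ^ 2 + c ^ 2) ∧ IsSquare (b ^ 2 + c ^ 2) ∧
    IsSquare (a ^ 2 + b ^ 2 + c ^ 2)

/-- The triples `(k, l, n)` to which the perfect cuboid problem is reduced: positive elements with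
`n < l` for which `ln`, `k² + l²`, `k² + ln`, `k² + n²` and `l² - ln` are squares. -/
def IsKLNTriple [PartialOrder R] (k l n : R) : Prop :=
  0 < k ∧ 0 < l ∧ 0 < n ∧ n < l ∧
    IsSquare (l * n) ∧ IsSquare (k ^ 2 + l ^ 2) ∧ IsSquare (k ^ 2 + l * n) ∧
    IsSquare (k ^ 2 + n ^ 2) ∧ IsSquare (l ^ 2 - l * n)

theorem isKLNTriple_of_sq_add_sq_add_sq_eq_sq [PartialOrder R] [IsStrictOrderedRing R]
    {a b c d : R} (ha : 0 < a) (hb : 0 < b) (hc : 0 < c) (hd : 0 < d)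
    (h : a ^ 2 + b ^ 2 + c ^ 2 = d ^ 2) (hab : IsSquare (a ^ 2 + b ^ 2))
    (hac : IsSquare (a ^ 2 + c ^ 2)) (hbc : IsSquare (b ^ 2 + c ^ 2)) :
    IsKLNTriple (a * c * d) (b * d ^ 2) (a ^ 2 * b) := by
  have had : a ^ 2 < d ^ 2 := by
    rw [← h, add_assoc]
    exact lt_add_of_pos_right _ (by positivity)
  have hnl : a ^ 2 * b < b * d ^ 2 := by
    rw [mul_comm b]
    exact mul_lt_mul_of_pos_right had hb
  have hln : b * d ^ 2 * (a ^ 2 * b) = (a * b * d) ^ 2 := by ring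
  have hkl : (a * c * d) ^ 2 + (b * d ^ 2) ^ 2 = d ^ 2 * ((a * c) ^ 2 + (b * d) ^ 2) := by ring
  have hkln : (a * c * d) ^ 2 + b * d ^ 2 * (a ^ 2 * b) = (a * d) ^ 2 * (b ^ 2 + c ^ 2) := by ring
  have hkn : (a * c * d) ^ 2 + (a ^ 2 * b) ^ 2 = a ^ 2 * ((a * b) ^ 2 + (c * d) ^ 2) := by ring
  have hlln : (b * d ^ 2) ^ 2 - b * d ^ 2 * (a ^ 2 * b) = (b * d) ^ 2 * (b ^ 2 + c ^ 2) := by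
    linear_combination -(b * d) ^ 2 * h
  refine ⟨by positivity, by positivity, by positivity, hnl, ?_, ?_, ?_, ?_, ?_⟩
  · exact hln ▸ IsSquare.sq _
  · exact hkl ▸ (IsSquare.sq d).mul (isSquare_mul_sq_add_mul_sq h hab hbc)
  · exact hkln ▸ (IsSquare.sq _).mul hbc
  · have h' : a ^ 2 + c ^ 2 + b ^ 2 = d ^ 2 := by rw [add_right_comm, h]
    exact hkn ▸ (IsSquare.sq a).mul (isSquare_mul_sq_add_mul_sq h' hac (add_comm (b ^ 2) _ ▸ hbc))
  · exact hlln ▸ (IsSquare.sq _).mul hbc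

variable [LinearOrder R] [IsStrictOrderedRing R]

theorem IsPerfectCuboid_s16.exists_isKLNTriple {a b c : R} (h : IsPerfectCuboid_s16 a b c) :
    ∃ k l n : R, IsKLNTriple k l n := by
  obtain ⟨ha, hb, hc, hab, hac, hbc, habc⟩ := h
  obtain ⟨d, hd, habcd⟩ := exists_pos_sq_eq_of_isSquare (by positivity) habc
  exact ⟨_, _, _, isKLNTriple_of_sq_add_sq_add_sq_eq_sq ha hb hc hd habcd hab hac hbc⟩

theorem kln_of_perfect_cuboid_general :
    (∀ A B C D : R, 0 < A → 0 < B → 0 < C → 0 < D → A ^ 2 + B ^ 2 + C ^ 2 = D ^ 2 →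
      IsSquare (A ^ 2 + B ^ 2) → IsSquare (A ^ 2 + C ^ 2) → IsSquare (B ^ 2 + C ^ 2) →
      IsKLNTriple (A * C * D) (B * D ^ 2) (A ^ 2 * B)) ∧
    ((¬ ∃ k l n : R, IsKLNTriple k l n) → ¬ ∃ a b c : R, IsPerfectCuboid_s16 a b c) :=
  ⟨fun _ _ _ _ => isKLNTriple_of_sq_add_sq_add_sq_eq_sq,
    fun hno ⟨_, _, _, habc⟩ => hno habc.exists_isKLNTriple⟩

end PerfectCuboid

/-- Converse direction of the reduction of the perfect cuboid problem to triples
`(k,l,n)`: any perfect cuboid `(A,B,C)` with main diagonal `D` yields a triple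
`k = ACD`, `l = BD²`, `n = A²B` with `n < l` making `ln, k²+l², k²+ln, k²+n², l²−ln`
all squares; consequently, if no such triple exists, then no perfect cuboid exists. -/
theorem kln_of_perfect_cuboid :
    (∀ A B C D : ℤ, 0 < A → 0 < B → 0 < C → 0 < D →
      A ^ 2 + B ^ 2 + C ^ 2 = D ^ 2 →
      IsSquare (A ^ 2 + B ^ 2) → IsSquare (A ^ 2 + C ^ 2) → IsSquare (B ^ 2 + C ^ 2) →
      0 < A * C * D ∧ 0 < B * D ^ 2 ∧ 0 < A ^ 2 * B ∧ A ^ 2 * B < B * D ^ 2 ∧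
      IsSquare ((B * D ^ 2) * (A ^ 2 * B)) ∧
      IsSquare ((A * C * D) ^ 2 + (B * D ^ 2) ^ 2) ∧
      IsSquare ((A * C * D) ^ 2 + (B * D ^ 2) * (A ^ 2 * B)) ∧
      IsSquare ((A * C * D) ^ 2 + (A ^ 2 * B) ^ 2) ∧
      IsSquare ((B * D ^ 2) ^ 2 - (B * D ^ 2) * (A ^ 2 * B))) ∧
    ((¬ ∃ k l n : ℤ, 0 < k ∧ 0 < n ∧ n < l ∧
        IsSquare (l * n) ∧ IsSquare (k ^ 2 + l ^ 2) ∧ IsSquare (k ^ 2 + l * n) ∧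
        IsSquare (k ^ 2 + n ^ 2) ∧ IsSquare (l ^ 2 - l * n)) →
      ¬ ∃ a b c : ℤ, 0 < a ∧ 0 < b ∧ 0 < c ∧
        IsSquare (a ^ 2 + b ^ 2) ∧ IsSquare (a ^ 2 + c ^ 2) ∧ IsSquare (b ^ 2 + c ^ 2) ∧
        IsSquare (a ^ 2 + b ^ 2 + c ^ 2)) :=
  ⟨kln_of_perfect_cuboid_general.1, fun hno =>
    kln_of_perfect_cuboid_general.2 fun ⟨k, l, n, hk, _, hkln⟩ => hno ⟨k, l, n, hk, hkln⟩⟩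
end
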